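/- For every N ≥ 1 and every n ∈ ℕ, the following are equivalent: (1) there exists an ℝ-linear map f : ℝⁿ → M(2N,ℂ) such that every f(v) is Hermitian, satisfies f(v)ᵀ J_N + J_N f(v) = 0, and f(v)² = ‖v‖² I_{2N} for all v ∈ ℝⁿ; (2) there exists an ℝ-linear map f : ℝⁿ → M(2N,ℂ) with every f(v) Hermitian satisfying f(v)ᵀ J_N + J_N f(v) = 0 and f(v) invertible for every nonzero v; (3) n ≤ ρ(N/2) + 3. (Entry 𝔤 = 𝔰𝔭(N,ℂ) of the Hurwitz–Radon value theorem, the 𝔭-part being the Hermitian elements of 𝔰𝔭(N,ℂ).) -/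

import Mathlib

open Matrix

/-- Extended Hurwitz–Radon number: writing the 2-adic valuation of `t` as `4a + b`
with `a ∈ ℤ` and `b ∈ {0,1,2,3}`, `ρ(t) := 8a + 2^b`. -/
noncomputable def hrRho (t : ℚ) : ℤ :=
  8 * (padicValRat 2 t / 4) + 2 ^ (padicValRat 2 t % 4).toNat

/-- The `2N × 2N` complex block matrix `J_N = [[0, −I_N],[I_N, 0]]`. -/
def Jcplx (N : ℕ) : Matrix (Fin N ⊕ Fin N) (Fin N ⊕ Fin N) ℂ :=
  Matrix.fromBlocks 0 (-1) 1 0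

namespace HR
set_option linter.unusedSectionVars false
set_option linter.deprecated false
set_option linter.unusedVariables false
open Module
section A
variable {X : Type*} [NormedAddCommGroup X] [InnerProductSpace ℝ X]

/-- kernel of `S` in the `ε`-eigenspace of `P`. -/
def kp (S P : X →L[ℝ] X) (ε : ℝ) : Submodule ℝ X where
  carrier := {u | S u = 0 ∧ P u = ε • u}
  add_mem' := by
    rintro a b ⟨h1, h2⟩ ⟨h3, h4⟩
    exact ⟨by simp [h1, h3], by simp [h2, h4]⟩
  zero_mem' := by simp
  smul_mem' := by
    rintro c a ⟨h1, h2⟩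
    exact ⟨by simp [h1], by rw [map_smul, h2, smul_comm]⟩

lemma mem_kp {S P : X →L[ℝ] X} {ε : ℝ} {u : X} : u ∈ kp S P ε ↔ S u = 0 ∧ P u = ε • u := Iff.rfl

/-- Fredholm-type condition -/
def Fred (S : X →L[ℝ] X) : Prop :=
  ∃ F : Submodule ℝ X, FiniteDimensional ℝ F ∧ ∃ c : ℝ, 0 < c ∧ ∀ u ∈ Fᗮ, c * ‖u‖ ≤ ‖S u‖

/-- the graded index -/
noncomputable def ind (S P : X →L[ℝ] X) : ℤ :=
  (finrank ℝ (kp S P 1) : ℤ) - finrank ℝ (kp S P (-1))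

lemma Fred.finite_ker {S : X →L[ℝ] X} (h : Fred S) :
    FiniteDimensional ℝ (LinearMap.ker (S : X →ₗ[ℝ] X)) := by
  obtain ⟨F, hF, c, hc, h⟩ := h
  let f : LinearMap.ker (S : X →ₗ[ℝ] X) →ₗ[ℝ] F :=
    (F.orthogonalProjectionOnto : X →ₗ[ℝ] F) ∘ₗ (LinearMap.ker (S : X →ₗ[ℝ] X)).subtype
  refine FiniteDimensional.of_injective f ?_
  rw [← LinearMap.ker_eq_bot, LinearMap.ker_eq_bot']
  rintro ⟨u, hu⟩ h0
  have h1 : u ∈ Fᗮ := by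
    rw [← Submodule.orthogonalProjectionOnto_eq_zero_iff]; exact h0
  have h2 := h u h1
  have h3 : S u = 0 := hu
  rw [h3, norm_zero] at h2
  have : ‖u‖ = 0 := by
    have := norm_nonneg u
    nlinarith
  ext; simpa using this

lemma Fred.isUnit [CompleteSpace X] {S : X →L[ℝ] X} (h : Fred S)
    (hS : ∀ u v, inner ℝ (S u) v = inner ℝ u (S v))
    (K : Submodule ℝ X) (memK : ∀ u, u ∈ K ↔ S u = 0) [FiniteDimensional ℝ K] :
    IsUnit (S + K.starProjection) := by
  obtain ⟨F, hF, c, hc, h⟩ := h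
  have hcl : IsClosed ((LinearMap.range (S : X →ₗ[ℝ] X) : Submodule ℝ X) : Set X) := by
    have h1 : IsClosed ((Fᗮ.map (S : X →ₗ[ℝ] X) : Submodule ℝ X) : Set X) := by
      have : AntilipschitzWith (Real.toNNReal c⁻¹) (S ∘L Fᗮ.subtypeL) := by
        refine ContinuousLinearMap.antilipschitz_of_bound _ ?_
        rintro ⟨u, hu⟩
        have := h u hu
        rw [Real.coe_toNNReal _ (by positivity)]
        simp only [Submodule.coe_norm, ContinuousLinearMap.comp_apply, Submodule.subtypeL_apply]
        rw [inv_mul_eq_div, le_div_iff₀ hc]; linarith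
      have h2 := this.isClosed_range (ContinuousLinearMap.uniformContinuous _)
      convert h2 using 1
      ext y; simp
    have h3 := Submodule.isClosed_sup_finiteDimensional (Fᗮ.map (S : X →ₗ[ℝ] X))
      (F.map (S : X →ₗ[ℝ] X)) h1
    rwa [← Submodule.map_sup, sup_comm, Submodule.sup_orthogonal_of_hasOrthogonalProjection,
      Submodule.map_top] at h3
  have hrK : ∀ u, S u ∈ Kᗮ := by
    intro u
    rw [Submodule.mem_orthogonal]
    intro k hk
    rw [← hS, (memK k).1 hk, inner_zero_left]
  have hKr : ∀ y ∈ Kᗮ, ∃ v, S v = y := by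
    intro y hy
    have h1 : (LinearMap.range (S : X →ₗ[ℝ] X))ᗮ ≤ K := by
      intro z hz
      rw [Submodule.mem_orthogonal] at hz
      rw [memK]
      have := hz (S (S z)) ⟨S z, rfl⟩
      rw [hS] at this
      exact inner_self_eq_zero.1 this
    have h2 := Submodule.orthogonal_le h1 hy
    rw [Submodule.orthogonal_orthogonal_eq_closure, hcl.submodule_topologicalClosure_eq] at h2
    exact h2
  rw [ContinuousLinearMap.isUnit_iff_bijective]
  constructor
  · rw [injective_iff_map_eq_zero]
    intro u hu
    simp only [_root_.add_apply] at hu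
    have h1 : K.starProjection u = 0 := by
      have h2 : K.starProjection (S u) = 0 := by
        rw [Submodule.starProjection_apply_eq_zero_iff]; exact hrK u
      have := congrArg K.starProjection hu
      rw [map_add, h2, zero_add, map_zero,
        Submodule.starProjection_eq_self_iff.2 (Submodule.starProjection_apply_mem K u)] at this
      exact this
    rw [h1, add_zero] at hu
    rw [← h1, Submodule.starProjection_eq_self_iff.2 ((memK u).2 hu)]
  · intro y
    obtain ⟨v, hv⟩ := hKr _ (Submodule.sub_starProjection_mem_orthogonal (K := K) y)
    refine ⟨v - K.starProjection v + K.starProjection y, ?_⟩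
    have e1 : S (K.starProjection v) = 0 := (memK _).1 (Submodule.starProjection_apply_mem K v)
    have e2 : S (K.starProjection y) = 0 := (memK _).1 (Submodule.starProjection_apply_mem K y)
    have e3 := Submodule.starProjection_eq_self_iff.2 (Submodule.starProjection_apply_mem K v)
    have e4 := Submodule.starProjection_eq_self_iff.2 (Submodule.starProjection_apply_mem K y)
    simp only [_root_.add_apply, map_add, map_sub, e1, e2, e3, e4, hv]
    abel

/-- finite dimensional lemma -/
lemma fin_index (K : Submodule ℝ X) [FiniteDimensional ℝ K] (σ P : X →L[ℝ] X)
    (hσ : ∀ u v, inner ℝ (σ u) v = inner ℝ u (σ v)) (hK : ∀ u ∈ K, σ u ∈ K)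
    (hP : ∀ u, P (σ u) = - σ (P u)) (E : ℝ → Submodule ℝ X)
    (hE : ∀ ε u, u ∈ E ε ↔ P u = ε • u) :
    (finrank ℝ (K ⊓ E 1 ⊓ LinearMap.ker (σ : X →ₗ[ℝ] X) : Submodule ℝ X) : ℤ) -
      finrank ℝ (K ⊓ E (-1) ⊓ LinearMap.ker (σ : X →ₗ[ℝ] X) : Submodule ℝ X)
      = (finrank ℝ (K ⊓ E 1 : Submodule ℝ X) : ℤ) - finrank ℝ (K ⊓ E (-1) : Submodule ℝ X) := by
  have hm : ∀ ε, ∀ u ∈ K ⊓ E ε, (σ : X →ₗ[ℝ] X) u ∈ K ⊓ E (-ε) := by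
    rintro ε u ⟨h1, h2⟩
    refine ⟨hK u h1, ?_⟩
    have h3 := (hE _ _).1 h2
    refine (hE _ _).2 ?_
    simp [hP, h3]
  have hm' : ∀ u ∈ K ⊓ E (-1), (σ : X →ₗ[ℝ] X) u ∈ K ⊓ E 1 := by
    intro u hu; simpa using hm _ u hu
  let τ := (σ : X →ₗ[ℝ] X).restrict (hm 1)
  let τ' := (σ : X →ₗ[ℝ] X).restrict hm'
  have hadj : LinearMap.adjoint τ = τ' := by
    symm
    rw [LinearMap.eq_adjoint_iff]
    rintro ⟨x, hx⟩ ⟨y, hy⟩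
    exact hσ x y
  have r := LinearMap.finrank_range_adjoint τ
  rw [hadj] at r
  have n1 := LinearMap.finrank_range_add_finrank_ker τ
  have n2 := LinearMap.finrank_range_add_finrank_ker τ'
  have k1 : finrank ℝ (LinearMap.ker τ) =
      finrank ℝ (K ⊓ E 1 ⊓ LinearMap.ker (σ : X →ₗ[ℝ] X) : Submodule ℝ X) := by
    have : (K ⊓ E 1 ⊓ LinearMap.ker (σ : X →ₗ[ℝ] X) : Submodule ℝ X)
        = (LinearMap.ker τ).map (K ⊓ E 1).subtype := by
      rw [LinearMap.ker_restrict, Submodule.map_comap_subtype]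
    rw [this, Submodule.finrank_map_subtype_eq]
  have k2 : finrank ℝ (LinearMap.ker τ') =
      finrank ℝ (K ⊓ E (-1) ⊓ LinearMap.ker (σ : X →ₗ[ℝ] X) : Submodule ℝ X) := by
    have : (K ⊓ E (-1) ⊓ LinearMap.ker (σ : X →ₗ[ℝ] X) : Submodule ℝ X)
        = (LinearMap.ker τ').map (K ⊓ E (-1)).subtype := by
      rw [LinearMap.ker_restrict, Submodule.map_comap_subtype]
    rw [this, Submodule.finrank_map_subtype_eq]
  omega

lemma ind_local [CompleteSpace X] (S P : X →L[ℝ] X) (K : Submodule ℝ X) [FiniteDimensional ℝ K]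
    (hS : IsSelfAdjoint S) (hPp : P * K.starProjection = K.starProjection * P)
    (hSP : P * S = - (S * P))
    (hu : IsUnit ((1 - K.starProjection) * S * (1 - K.starProjection) + K.starProjection)) :
    ind S P = (finrank ℝ (K ⊓ kp 0 P 1 : Submodule ℝ X) : ℤ)
      - finrank ℝ (K ⊓ kp 0 P (-1) : Submodule ℝ X) := by
  have hp : ∀ u, K.starProjection u ∈ K := Submodule.starProjection_apply_mem K
  have hpK : ∀ u ∈ K, K.starProjection u = u := fun u h => Submodule.starProjection_eq_self_iff.2 h
  have hpp : K.starProjection * K.starProjection = K.starProjection := by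
    ext u; exact hpK _ (hp u)
  have hps : IsSelfAdjoint K.starProjection := isSelfAdjoint_starProjection K
  generalize K.starProjection = p at *
  obtain ⟨q, hq⟩ : ∃ q, q = 1 - p := ⟨_, rfl⟩
  rw [← hq] at hu
  have hqs : IsSelfAdjoint q := by rw [hq]; exact (IsSelfAdjoint.one _).sub hps
  have hqq : q * q = q := by rw [hq]; noncomm_ring; rw [hpp]; abel
  have hpq : p * q = 0 := by rw [hq, mul_sub, hpp, mul_one, sub_self]
  have hqp : q * p = 0 := by rw [hq, sub_mul, hpp, one_mul, sub_self]
  have hPq : P * q = q * P := by rw [hq, mul_sub, sub_mul, hPp, mul_one, one_mul]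
  obtain ⟨d, hd⟩ := hu
  obtain ⟨D, hD⟩ : ∃ D, D = (↑d⁻¹ : X →L[ℝ] X) := ⟨_, rfl⟩
  have hD1 : D * (q * S * q + p) = 1 := by rw [hD, ← hd]; simp
  have hD2 : (q * S * q + p) * D = 1 := by rw [hD, ← hd]; simp
  have hds : IsSelfAdjoint (q * S * q + p) := by
    refine IsSelfAdjoint.add ?_ hps
    rw [isSelfAdjoint_iff, star_mul, star_mul, hqs.star_eq, hS.star_eq, mul_assoc]
  have hDs : IsSelfAdjoint D := by
    rw [isSelfAdjoint_iff]
    have h1 : (q * S * q + p) * star D = 1 := by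
      have := congrArg star hD1
      rwa [star_mul, hds.star_eq, star_one] at this
    calc star D = (D * (q * S * q + p)) * star D := by rw [hD1, one_mul]
      _ = D := by rw [mul_assoc, h1, mul_one]
  have hdq : (q * S * q + p) * q = q * (q * S * q + p) := by
    rw [add_mul, mul_add, hpq, hqp, mul_assoc, hqq, ← mul_assoc, ← mul_assoc, hqq]
  have hDq : D * q = q * D := by
    calc D * q = D * (q * ((q * S * q + p) * D)) := by rw [hD2, mul_one]
      _ = D * ((q * S * q + p) * q) * D := by rw [hdq]; noncomm_ring
      _ = q * D := by rw [← mul_assoc, hD1, one_mul]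
  obtain ⟨g, hg⟩ : ∃ g, g = q * D := ⟨_, rfl⟩
  have hgq : g * q = g := by rw [hg, mul_assoc, hDq, ← mul_assoc, hqq]
  have hqg : q * g = g := by rw [hg, ← mul_assoc, hqq]
  have hpg : p * g = 0 := by rw [hg, ← mul_assoc, hpq, zero_mul]
  have hgs : IsSelfAdjoint g := by
    rw [isSelfAdjoint_iff, hg, star_mul, hDs.star_eq, hqs.star_eq, hDq]
  have hg1 : q * S * q * g = q := by
    have h1 : (q * S * q + p) * g = q := by
      rw [hg, ← hDq, ← mul_assoc, hD2, one_mul]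
    rw [add_mul, hpg, add_zero] at h1
    exact h1
  have hg2 : g * (q * S * q) = q := by
    have := congrArg star hg1
    rwa [star_mul, hgs.star_eq, hqs.star_eq, star_mul, star_mul, hqs.star_eq, hS.star_eq,
      ← mul_assoc q S q] at this
  have hPg : P * g = - (g * P) := by
    have h1 : q * S * q * (P * g) = - (P * q) := by
      have : q * S * q * P = - (P * (q * S * q)) := by
        have e1 : S * P = - (P * S) := by rw [hSP, neg_neg]
        calc q * S * q * P = q * (S * P) * q := by
              rw [mul_assoc, ← hPq]; noncomm_ring
          _ = - (q * P * (S * q)) := by rw [e1]; noncomm_ring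
          _ = - (P * (q * S * q)) := by rw [← hPq]; noncomm_ring
      rw [← mul_assoc, this, neg_mul, mul_assoc, hg1]
    calc P * g = P * (q * g) := by rw [hqg]
      _ = q * P * g := by rw [← mul_assoc, hPq]
      _ = g * (q * S * q * (P * g)) := by rw [← mul_assoc, hg2]; noncomm_ring
      _ = - (g * P) := by rw [h1, hPq, mul_neg, ← mul_assoc, hgq]
  obtain ⟨σ, hσ⟩ : ∃ σ, σ = p * S * p - p * S * g * S * p := ⟨_, rfl⟩
  have hσs : IsSelfAdjoint σ := by
    rw [hσ]
    refine IsSelfAdjoint.sub ?_ ?_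
    · rw [isSelfAdjoint_iff]; simp only [star_mul, hps.star_eq, hS.star_eq, mul_assoc]
    · rw [isSelfAdjoint_iff]
      simp only [star_mul, hps.star_eq, hS.star_eq, hgs.star_eq, mul_assoc]
  have hPσ : P * σ = - (σ * P) := by
    have e1 : ∀ Y, P * (S * Y) = - (S * (P * Y)) := fun Y => by
      rw [← mul_assoc, hSP, neg_mul, mul_assoc]
    have e2 : ∀ Y, P * (p * Y) = p * (P * Y) := fun Y => by
      rw [← mul_assoc, hPp, mul_assoc]
    have e3 : ∀ Y, P * (g * Y) = - (g * (P * Y)) := fun Y => by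
      rw [← mul_assoc, hPg, neg_mul, mul_assoc]
    rw [hσ]
    simp only [mul_sub, sub_mul, mul_assoc, e1, e2, e3, hPp, mul_neg, neg_neg]
    abel
  have hsym : ∀ u v, inner ℝ (σ u) v = inner ℝ u (σ v) := fun u v => by
    have := ContinuousLinearMap.adjoint_inner_left σ v u
    rwa [ContinuousLinearMap.isSelfAdjoint_iff'.1 hσs] at this
  have hσK : ∀ u ∈ K, σ u ∈ K := by
    intro u _
    rw [hσ]
    exact K.sub_mem (hp _) (hp _)
  have key := fin_index K σ P hsym hσK
    (fun u => by simpa using DFunLike.congr_fun hPσ u) (fun ε => kp 0 P ε)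
    (fun ε u => by simp [mem_kp])
  rw [← key, ind]
  have heq : ∀ ε, finrank ℝ (kp S P ε) =
      finrank ℝ (K ⊓ kp 0 P ε ⊓ LinearMap.ker (σ : X →ₗ[ℝ] X) : Submodule ℝ X) := by
    intro ε
    have f1 : ∀ u, S u = 0 → g (S (p u)) = - q u := by
      intro u hu
      have h1 : g (S (p u)) = (g * (q * S * (1 - q))) u := by
        rw [show (1 : X →L[ℝ] X) - q = p by rw [hq]; abel, ← mul_assoc, ← mul_assoc, hgq]; rfl
      have h2 : g * (q * S * (1 - q)) = g * S - q := by
        rw [mul_sub, mul_sub, hg2, mul_one, ← mul_assoc, hgq]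
      rw [h1, h2]; simp [hu]
    have f2 : ∀ u, S u = 0 → p u - g (S (p u)) = u := by
      intro u hu
      rw [f1 u hu, hq]; simp
    have f3 : ∀ u, S u = 0 → σ (p u) = 0 := by
      intro u hu
      have : σ (p u) = p (S (p u - g (S (p u)))) := by
        have : σ * p = p * S * (p - g * S * p) := by
          rw [hσ, sub_mul, mul_sub]
          simp only [mul_assoc, hpp]
        have := DFunLike.congr_fun this u
        simpa using this
      rw [this, f2 u hu, hu, map_zero]
    have b1 : ∀ k ∈ K, σ k = 0 → S (k - g (S k)) = 0 := by
      intro k hk hk0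
      have h1 : p (S (k - g (S k))) = 0 := by
        have : σ k = p (S (p k)) - p (S (g (S (p k)))) := by rw [hσ]; rfl
        rw [hpK k hk] at this
        rw [map_sub, map_sub, ← this, hk0]
      have h2 : q (S (k - g (S k))) = 0 := by
        have : q * S * g = q := by
          rw [← hqg, ← mul_assoc, hg1]
        have := DFunLike.congr_fun this (S k)
        simp only [ContinuousLinearMap.mul_apply] at this
        rw [map_sub, map_sub, this, sub_self]
      have : ∀ y, y = p y + q y := fun y => by rw [hq]; simp
      rw [this (S (k - g (S k))), h1, h2, add_zero]
    have hPpu : ∀ u, P (p u) = p (P u) := fun u => DFunLike.congr_fun hPp u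
    have hPSu : ∀ u, P (S u) = - S (P u) := fun u => DFunLike.congr_fun hSP u
    have hPgu : ∀ u, P (g u) = - g (P u) := fun u => DFunLike.congr_fun hPg u
    refine LinearEquiv.finrank_eq (LinearEquiv.ofLinear
      (LinearMap.restrict (p : X →ₗ[ℝ] X) (p := kp S P ε)
        (q := K ⊓ kp 0 P ε ⊓ LinearMap.ker (σ : X →ₗ[ℝ] X)) ?_)
      (LinearMap.restrict ((1 - g * S : X →L[ℝ] X) : X →ₗ[ℝ] X)
        (p := K ⊓ kp 0 P ε ⊓ LinearMap.ker (σ : X →ₗ[ℝ] X)) (q := kp S P ε) ?_) ?_ ?_)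
    · rintro u ⟨h1, h2⟩
      refine ⟨⟨hp u, ?_, ?_⟩, f3 u h1⟩
      · simp
      · change P (p u) = ε • p u
        rw [hPpu, h2, map_smul]
    · rintro k ⟨⟨h1, -, h2⟩, h3⟩
      refine ⟨b1 k h1 h3, ?_⟩
      change P (k - g (S k)) = ε • (k - g (S k))
      rw [map_sub, hPgu, hPSu, h2, map_smul, map_neg, map_smul, neg_neg, smul_sub]
    · ext ⟨k, ⟨h1, -⟩, -⟩
      change p (k - g (S k)) = k
      have : p (g (S k)) = 0 := DFunLike.congr_fun hpg (S k)
      rw [map_sub, this, hpK k h1, sub_zero]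
    · ext ⟨u, h1, -⟩
      exact f2 u h1
  rw [heq, heq]

/-- constancy of the index along a continuous path -/
lemma ind_const [CompleteSpace X] (S : ℝ → X →L[ℝ] X) (P : X →L[ℝ] X) (hc : Continuous S)
    (hS : ∀ t, IsSelfAdjoint (S t)) (hPs : IsSelfAdjoint P) (hP2 : P * P = 1)
    (hSP : ∀ t, P * S t = - (S t * P)) (hF : ∀ t, Fred (S t)) (a b : ℝ) :
    ind (S a) P = ind (S b) P := by
  have hloc : IsLocallyConstant (fun t => ind (S t) P) := by
    rw [IsLocallyConstant.iff_eventually_eq]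
    intro t₀
    have hfin := (hF t₀).finite_ker
    obtain ⟨K, hK⟩ : ∃ K, K = LinearMap.ker (S t₀ : X →ₗ[ℝ] X) := ⟨_, rfl⟩
    rw [← hK] at hfin
    have memK : ∀ u, u ∈ K ↔ S t₀ u = 0 := fun u => by rw [hK]; rfl
    have hsym : ∀ T : X →L[ℝ] X, IsSelfAdjoint T → ∀ u v, inner ℝ (T u) v = inner ℝ u (T v) := by
      intro T hT u v
      have := ContinuousLinearMap.adjoint_inner_left T v u
      rwa [ContinuousLinearMap.isSelfAdjoint_iff'.1 hT] at this
    have hPK : ∀ u ∈ K, P u ∈ K := by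
      intro u hu
      rw [memK] at hu ⊢
      have := DFunLike.congr_fun (hSP t₀) u
      simp only [ContinuousLinearMap.mul_apply, ContinuousLinearMap.neg_apply, hu, map_zero] at this
      exact neg_eq_zero.1 this.symm
    have hPp : P * K.starProjection = K.starProjection * P := by
      ext u
      change P (K.starProjection u) = K.starProjection (P u)
      symm
      refine Submodule.eq_starProjection_of_mem_of_inner_eq_zero
        (hPK _ (Submodule.starProjection_apply_mem K u)) ?_
      intro w hw
      rw [← map_sub, hsym P hPs]
      exact (Submodule.mem_orthogonal' K _).1
        (Submodule.sub_starProjection_mem_orthogonal (K := K) u) _ (hPK _ hw)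
    have hu0 : IsUnit ((1 - K.starProjection) * S t₀ * (1 - K.starProjection)
        + K.starProjection) := by
      have h1 : S t₀ * K.starProjection = 0 := by
        ext u; exact (memK _).1 (Submodule.starProjection_apply_mem K u)
      have h2 : K.starProjection * S t₀ = 0 := by
        have := congrArg star h1
        rwa [star_mul, (hS t₀).star_eq, (isSelfAdjoint_starProjection K).star_eq, star_zero] at this
      rw [sub_mul, one_mul, h2, sub_zero, mul_sub, h1, sub_zero, mul_one]
      exact (hF t₀).isUnit (hsym _ (hS t₀)) K memK
    have hcont : Continuous fun t => (1 - K.starProjection) * S t * (1 - K.starProjection)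
        + K.starProjection := by fun_prop
    have hev := hcont.continuousAt.eventually (Units.isOpen.mem_nhds hu0)
    filter_upwards [hev] with t ht
    rw [ind_local (S t) P K (hS t) hPp (hSP t) ht, ind_local (S t₀) P K (hS t₀) hPp (hSP t₀) hu0]
  exact hloc.apply_eq_of_isPreconnected isPreconnected_univ (Set.mem_univ a) (Set.mem_univ b)
end A
end HR

namespace HR
set_option linter.unusedSectionVars false
set_option linter.deprecated false
set_option linter.unusedVariables false
open Module
section B1
variable {X : Type*} [NormedAddCommGroup X] [InnerProductSpace ℝ X]

lemma norm_sq_sum_orth {σ : Type*} (s : Finset σ) (z : σ → X)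
    (h : ∀ i ∈ s, ∀ j ∈ s, i ≠ j → inner ℝ (z i) (z j) = 0) :
    ‖∑ i ∈ s, z i‖ ^ 2 = ∑ i ∈ s, ‖z i‖ ^ 2 := by
  classical
  rw [← real_inner_self_eq_norm_sq, sum_inner]
  refine Finset.sum_congr rfl fun i hi => ?_
  rw [inner_sum, Finset.sum_eq_single i, real_inner_self_eq_norm_sq]
  · intro j hj hji; exact h i hi j hj hji.symm
  · intro h'; exact absurd hi h'

lemma joint_bound {κ : Type*} [Fintype κ] (x B : κ → X →L[ℝ] X)
    (hx : ∀ i u v, inner ℝ (x i u) v = inner ℝ u (x i v))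
    (hxx : ∀ i j u, x i (x j u) = x j (x i u)) (hxB : ∀ i j u, x i (B j u) = B j (x i u)) (c : ℝ)
    (hB : ∀ (χ : κ → ℝ) v, c * (∑ i, χ i ^ 2) * ‖v‖ ^ 2 ≤ ‖∑ i, χ i • B i v‖ ^ 2)
    (E : Submodule ℝ X) [FiniteDimensional ℝ E] (hE : ∀ i, ∀ u ∈ E, x i u ∈ E) (u : X)
    (hu : u ∈ E) : c * ∑ i, ‖x i u‖ ^ 2 ≤ ‖∑ i, B i (x i u)‖ ^ 2 := by
  classical
  let T : κ → E →ₗ[ℝ] E := fun i => (x i : X →ₗ[ℝ] X).restrict (hE i)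
  have hT : ∀ i, (T i).IsSymmetric := by
    rintro i ⟨a, ha⟩ ⟨b, hb⟩; exact hx i a b
  have hC : Pairwise (Function.onFun Commute T) := by
    intro i j _
    ext ⟨a, ha⟩
    exact hxx i j a
  have htop := LinearMap.IsSymmetric.iSup_iInf_eq_top_of_commute hT hC
  have hmem : (⟨u, hu⟩ : E) ∈ (⨆ χ : κ → ℝ, ⨅ i, End.eigenspace (T i) (χ i)) := by
    rw [htop]; trivial
  rw [Submodule.mem_iSup_iff_exists_finsupp] at hmem
  obtain ⟨f, hf, hsum⟩ := hmem
  have hev : ∀ χ i, x i (f χ : X) = χ i • (f χ : X) := by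
    intro χ i
    have h1 := hf χ
    rw [Submodule.mem_iInf] at h1
    have h2 := End.mem_eigenspace_iff.1 (h1 i)
    exact congrArg Subtype.val h2
  have husum : u = ∑ χ ∈ f.support, (f χ : X) := by
    have := congrArg Subtype.val hsum
    rw [Finsupp.sum] at this
    change _ = u at this
    rw [← this]; simp
  have horth : ∀ (y z : X) (χ ψ : κ → ℝ), χ ≠ ψ → (∀ i, x i y = χ i • y) →
      (∀ i, x i z = ψ i • z) → inner ℝ y z = 0 := by
    intro y z χ ψ hne h1 h2
    obtain ⟨a, ha⟩ := Function.ne_iff.mp hne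
    have := hx a y z
    rw [h1, h2, inner_smul_left, inner_smul_right] at this
    have h3 : (χ a - ψ a) * inner ℝ y z = 0 := by
      simp only [conj_trivial] at this; linarith
    rcases mul_eq_zero.1 h3 with h | h
    · exact absurd (sub_eq_zero.1 h) ha
    · exact h
  have e1 : ∀ i, ‖x i u‖ ^ 2 = ∑ χ ∈ f.support, χ i ^ 2 * ‖(f χ : X)‖ ^ 2 := by
    intro i
    rw [husum, map_sum, norm_sq_sum_orth]
    · refine Finset.sum_congr rfl fun χ _ => ?_
      rw [hev, norm_smul, mul_pow]; simp
    · intro χ _ ψ _ hne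
      rw [hev, hev, inner_smul_left, inner_smul_right, horth _ _ χ ψ hne (hev χ) (hev ψ)]; simp
  have e2 : ‖∑ i, B i (x i u)‖ ^ 2 = ∑ χ ∈ f.support, ‖∑ i, χ i • B i (f χ : X)‖ ^ 2 := by
    have : ∑ i, B i (x i u) = ∑ χ ∈ f.support, ∑ i, χ i • B i (f χ : X) := by
      rw [Finset.sum_comm]
      refine Finset.sum_congr rfl fun i _ => ?_
      rw [husum, map_sum, map_sum]
      refine Finset.sum_congr rfl fun χ _ => ?_
      rw [hev, map_smul]
    rw [this, norm_sq_sum_orth]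
    have hh : ∀ (χ : κ → ℝ) i, x i (∑ j, χ j • B j (f χ : X)) = χ i • (∑ j, χ j • B j (f χ : X)) := by
      intro χ i
      rw [map_sum, Finset.smul_sum]
      refine Finset.sum_congr rfl fun j _ => ?_
      rw [map_smul, hxB, hev, map_smul, smul_comm]
    intro χ _ ψ _ hne
    exact horth _ _ χ ψ hne (hh χ) (hh ψ)
  rw [e2, Finset.sum_congr rfl fun i _ => e1 i, Finset.sum_comm, Finset.mul_sum]
  refine Finset.sum_le_sum fun χ _ => ?_
  have := hB χ (f χ : X)
  rw [← Finset.sum_mul, ← mul_assoc]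
  exact this
end B1
section B2
variable {ι : Type*} {W W₂ : Type*} [NormedAddCommGroup W] [InnerProductSpace ℝ W]
  [NormedAddCommGroup W₂] [InnerProductSpace ℝ W₂]

/-- Hilbert space of square summable families -/
abbrev L2 (ι W : Type*) [NormedAddCommGroup W] [InnerProductSpace ℝ W] := lp (fun _ : ι => W) 2

/-- evaluation at a coordinate -/
noncomputable def ev (i : ι) : L2 ι W →ₗ[ℝ] W where
  toFun := fun u => u i
  map_add' := fun u v => by rw [lp.coeFn_add]; rfl
  map_smul' := fun u v => by rw [lp.coeFn_smul]; rfl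

lemma L2.ext {u v : L2 ι W} (h : ∀ i, ev i u = ev i v) : u = v := lp.ext (funext h)

lemma L2.summable (u : L2 ι W) : Summable fun i => ‖ev i u‖ ^ 2 := by
  have h := lp.memℓp u
  rw [memℓp_gen_iff (by norm_num)] at h
  have h2 : Summable fun i => ‖u i‖ ^ 2 := by simpa using h
  exact h2

/-- constructor -/
def mkL2 (f : ι → W) (h : Summable fun i => ‖f i‖ ^ 2) : L2 ι W :=
  ⟨f, (memℓp_gen_iff (E := fun _ : ι => W) (p := 2) (by norm_num)).2 (by simpa using h)⟩

@[simp] lemma ev_mkL2 (f : ι → W) (h : Summable fun i => ‖f i‖ ^ 2) (i : ι) :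
    ev i (mkL2 f h) = f i := rfl

lemma L2.norm_sq (u : L2 ι W) : ‖u‖ ^ 2 = ∑' i, ‖ev i u‖ ^ 2 := by
  have := lp.norm_rpow_eq_tsum (p := 2) (by norm_num) u
  have h2 : ‖u‖ ^ 2 = ∑' i, ‖u i‖ ^ 2 := by simpa using this
  exact h2

lemma L2.inner_eq (u v : L2 ι W) : inner ℝ u v = ∑' i, inner ℝ (ev i u) (ev i v) :=
  lp.inner_eq_tsum u v

/-- single -/
noncomputable def sg [DecidableEq ι] (i : ι) : W →ₗ[ℝ] L2 ι W := lp.lsingle (E := fun _ : ι => W) 2 i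

lemma ev_sg [DecidableEq ι] (i j : ι) (w : W) :
    ev j (sg i w : L2 ι W) = if j = i then w else 0 := by
  by_cases h : j = i
  · subst h; rw [if_pos rfl]; exact lp.single_apply_self (E := fun _ : ι => W) 2 j w
  · rw [if_neg h]; exact lp.single_apply_ne (E := fun _ : ι => W) 2 i w h

lemma inner_sg [DecidableEq ι] (i : ι) (w : W) (u : L2 ι W) :
    inner ℝ (sg i w : L2 ι W) u = inner ℝ w (ev i u) := lp.inner_single_left (G := fun _ : ι => W) (𝕜 := ℝ) i w u

lemma L2.hasSum [DecidableEq ι] (u : L2 ι W) : HasSum (fun i => sg i (ev i u)) u :=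
  lp.hasSum_single (E := fun _ : ι => W) (p := 2) (by norm_num) u

/-- comparison of norms -/
lemma L2.comp_bound (τ : ι → ι) (hτ : Function.Injective τ) (C : ℝ) (f : ι → W₂) (u : L2 ι W)
    (h : ∀ i, ‖f i‖ ≤ C * ‖ev (τ i) u‖) :
    (Summable fun i => ‖f i‖ ^ 2) ∧ ∑' i, ‖f i‖ ^ 2 ≤ C ^ 2 * ‖u‖ ^ 2 := by
  have h1 : Summable fun i => ‖ev (τ i) u‖ ^ 2 := (L2.summable u).comp_injective hτ
  have h2 : ∀ i, ‖f i‖ ^ 2 ≤ C ^ 2 * ‖ev (τ i) u‖ ^ 2 := fun i => by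
    rw [← mul_pow]; exact pow_le_pow_left₀ (norm_nonneg _) (h i) 2
  have h3 : Summable fun i => ‖f i‖ ^ 2 :=
    Summable.of_nonneg_of_le (fun i => by positivity) h2 (h1.mul_left _)
  refine ⟨h3, (h3.tsum_le_tsum h2 (h1.mul_left _)).trans ?_⟩
  rw [tsum_mul_left, L2.norm_sq]
  refine mul_le_mul_of_nonneg_left ?_ (sq_nonneg C)
  exact tsum_comp_le_tsum_of_inj (L2.summable u) (fun i => sq_nonneg _) hτ

lemma L2.norm_le (τ : ι → ι) (hτ : Function.Injective τ) (C : ℝ) (hC : 0 ≤ C) (v : L2 ι W₂)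
    (u : L2 ι W) (h : ∀ i, ‖ev i v‖ ≤ C * ‖ev (τ i) u‖) : ‖v‖ ≤ C * ‖u‖ := by
  have := (L2.comp_bound τ hτ C (fun i => ev i v) u h).2
  rw [← L2.norm_sq, ← mul_pow] at this
  exact le_of_sq_le_sq this (by positivity)

/-- weighted composition operator -/
noncomputable def wc (τ : ι → ι) (hτ : Function.Injective τ) (a : ι → ℝ) (C : ℝ)
    (ha : ∀ i, |a i| ≤ C) : L2 ι W →L[ℝ] L2 ι W :=
  LinearMap.mkContinuous
    { toFun := fun u => mkL2 (fun i => a i • ev (τ i) u) (L2.comp_bound τ hτ C _ u (fun i => by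
        rw [norm_smul]; exact mul_le_mul_of_nonneg_right (ha i) (norm_nonneg _))).1
      map_add' := fun u v => L2.ext fun i => by simp
      map_smul' := fun c u => L2.ext fun i => by simp [smul_comm c] } |C| (fun u => by
        refine L2.norm_le τ hτ |C| (abs_nonneg _) _ u (fun i => ?_)
        change ‖a i • ev (τ i) u‖ ≤ _
        rw [norm_smul]
        exact mul_le_mul_of_nonneg_right ((ha i).trans (le_abs_self _)) (norm_nonneg _))

@[simp] lemma ev_wc (τ : ι → ι) (hτ : Function.Injective τ) (a : ι → ℝ) (C : ℝ)
    (ha : ∀ i, |a i| ≤ C) (u : L2 ι W) (i : ι) :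
    ev i (wc τ hτ a C ha u) = a i • ev (τ i) u := rfl

/-- coordinatewise operator -/
noncomputable def cw (m : W →L[ℝ] W₂) : L2 ι W →L[ℝ] L2 ι W₂ :=
  LinearMap.mkContinuous
    { toFun := fun u => mkL2 (fun i => m (ev i u)) (L2.comp_bound id Function.injective_id ‖m‖ _ u
        (fun i => m.le_opNorm _)).1
      map_add' := fun u v => L2.ext fun i => by simp
      map_smul' := fun c u => L2.ext fun i => by simp } ‖m‖ (fun u => by
        refine L2.norm_le id Function.injective_id ‖m‖ (norm_nonneg _) _ u (fun i => ?_)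
        exact m.le_opNorm _)

@[simp] lemma ev_cw (m : W →L[ℝ] W₂) (u : L2 ι W) (i : ι) : ev i (cw m u) = m (ev i u) := rfl

variable [CompleteSpace W]
open ContinuousLinearMap in
lemma cw_adjoint (m : W →L[ℝ] W) : adjoint (cw m : L2 ι W →L[ℝ] L2 ι W) = cw (adjoint m) := by
  symm
  rw [eq_adjoint_iff]
  intro u v
  rw [L2.inner_eq, L2.inner_eq]
  refine tsum_congr fun i => ?_
  simp [adjoint_inner_left]

open ContinuousLinearMap in
lemma ev_wc_adjoint (τ : ι → ι) (hτ : Function.Injective τ) (a : ι → ℝ) (C : ℝ)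
    (ha : ∀ i, |a i| ≤ C) (u : L2 ι W) (i : ι) :
    ev (τ i) (adjoint (wc τ hτ a C ha) u) = a i • ev i u := by
  classical
  refine ext_inner_left ℝ fun w => ?_
  rw [← inner_sg, adjoint_inner_right, L2.inner_eq, tsum_eq_single i]
  · simp [inner_smul_left, inner_smul_right, ev_sg]
  · intro j hj
    have : τ j ≠ τ i := fun h => hj (hτ h)
    simp [ev_sg, this]

open ContinuousLinearMap in
lemma ev_wc_adjoint_zero (τ : ι → ι) (hτ : Function.Injective τ) (a : ι → ℝ) (C : ℝ)
    (ha : ∀ i, |a i| ≤ C) (u : L2 ι W) (j : ι) (hj : ∀ i, τ i ≠ j) :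
    ev j (adjoint (wc τ hτ a C ha) u) = 0 := by
  classical
  refine ext_inner_left ℝ fun w => ?_
  rw [← inner_sg, adjoint_inner_right, L2.inner_eq, inner_zero_right]
  rw [← tsum_zero (L := .unconditional ι)]
  refine tsum_congr fun i => ?_
  simp [ev_sg, hj i]

end B2
end HR

namespace HR
set_option linter.unusedSectionVars false
set_option linter.deprecated false
set_option linter.unusedVariables false
open Module
section B3
/-- algebraic identity -/
lemma clifford_sq {R κ : Type*} [Ring R] [Fintype κ] [DecidableEq κ]
    (B e b b' : κ → R) (hh : ∀ r s : R, r + r = s + s → r = s)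
    (hee : ∀ i j, e i * e j + e j * e i = if i = j then -2 else 0)
    (hBe : ∀ i j, e j * B i = - (B i * e j))
    (hBb : ∀ i j, b j * B i = B i * b j) (hBb' : ∀ i j, b' j * B i = B i * b' j)
    (heb : ∀ i j, b j * e i = e i * b j) (heb' : ∀ i j, b' j * e i = e i * b' j)
    (hbb : ∀ i j, b i * b j = b j * b i) (hbb' : ∀ i j, b' i * b' j = b' j * b' i)
    (hb : ∀ i j, i ≠ j → b i * b' j = b' j * b i) :
    (∑ i, (B i * (b i + b' i) + e i * (b i - b' i))) * (∑ i, (B i * (b i + b' i) + e i * (b i - b' i)))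
      = (∑ i, B i * (b i + b' i)) * (∑ i, B i * (b i + b' i)) - ∑ i, (b i - b' i) * (b i - b' i)
        - 2 * ∑ i, B i * e i * (b i * b' i - b' i * b i) := by
  have hyy : ∀ i j, (b i - b' i) * (b j - b' j) = (b j - b' j) * (b i - b' i) := by
    intro i j
    by_cases hij : i = j
    · rw [hij]
    · simp only [sub_mul, mul_sub, hbb i j, hbb' i j, hb i j hij, hb j i (Ne.symm hij)]
      abel
  have hY : (∑ i, e i * (b i - b' i)) * (∑ i, e i * (b i - b' i))
      = - ∑ i, (b i - b' i) * (b i - b' i) := by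
    apply hh
    have e1 : ∀ i j, e i * (b i - b' i) * (e j * (b j - b' j))
        = e i * e j * ((b i - b' i) * (b j - b' j)) := by
      intro i j
      have : (b i - b' i) * e j = e j * (b i - b' i) := by rw [sub_mul, mul_sub, heb, heb']
      rw [mul_assoc, ← mul_assoc _ (e j), this]; noncomm_ring
    have e2 : (∑ i, e i * (b i - b' i)) * (∑ i, e i * (b i - b' i))
        = ∑ i, ∑ j, e i * e j * ((b i - b' i) * (b j - b' j)) := by
      rw [Finset.sum_mul_sum]; simp only [e1]
    have e3 : (∑ i, e i * (b i - b' i)) * (∑ i, e i * (b i - b' i))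
        = ∑ i, ∑ j, e j * e i * ((b i - b' i) * (b j - b' j)) := by
      rw [e2, Finset.sum_comm]; simp only [hyy]
    nth_rewrite 1 [e2]
    rw [e3, ← Finset.sum_add_distrib]
    simp only [← Finset.sum_add_distrib, ← add_mul, hee]
    simp only [ite_mul, zero_mul, Finset.sum_ite_eq, Finset.mem_univ, if_true]
    rw [← Finset.mul_sum]; noncomm_ring
  have hXY : (∑ i, B i * (b i + b' i)) * (∑ i, e i * (b i - b' i))
      + (∑ i, e i * (b i - b' i)) * (∑ i, B i * (b i + b' i))
      = - (2 * ∑ i, B i * e i * (b i * b' i - b' i * b i)) := by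
    rw [Finset.sum_mul_sum, Finset.sum_mul_sum, Finset.sum_comm (f := fun i j => e i * _ * _),
      ← Finset.sum_add_distrib]
    simp only [← Finset.sum_add_distrib]
    have e1 : ∀ i j, B i * (b i + b' i) * (e j * (b j - b' j)) + e j * (b j - b' j) * (B i * (b i + b' i))
        = B i * e j * ((b i + b' i) * (b j - b' j) - (b j - b' j) * (b i + b' i)) := by
      intro i j
      have h1 : (b i + b' i) * e j = e j * (b i + b' i) := by rw [add_mul, mul_add, heb, heb']
      have h2 : (b j - b' j) * B i = B i * (b j - b' j) := by rw [sub_mul, mul_sub, hBb, hBb']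
      calc _ = B i * ((b i + b' i) * e j) * (b j - b' j) + e j * ((b j - b' j) * B i) * (b i + b' i) := by
              noncomm_ring
        _ = B i * (e j * (b i + b' i)) * (b j - b' j) + (e j * B i) * (b j - b' j) * (b i + b' i) := by
              rw [h1, h2]; noncomm_ring
        _ = _ := by rw [hBe]; noncomm_ring
    have e2 : ∀ i j, (b i + b' i) * (b j - b' j) - (b j - b' j) * (b i + b' i)
        = if i = j then -(2 * (b i * b' i - b' i * b i)) else 0 := by
      intro i j
      by_cases hij : i = j
      · subst hij; rw [if_pos rfl]; noncomm_ring
      · rw [if_neg hij]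
        simp only [sub_mul, mul_sub, add_mul, mul_add, hbb i j, hbb' i j, hb i j hij,
          hb j i (Ne.symm hij)]
        abel
    simp only [e1, e2]
    simp only [mul_ite, mul_zero, Finset.sum_ite_eq, Finset.mem_univ, if_true]
    rw [Finset.mul_sum, ← Finset.sum_neg_distrib]
    refine Finset.sum_congr rfl fun i _ => ?_
    noncomm_ring
  rw [Finset.sum_add_distrib, add_mul, mul_add, mul_add, hY]
  rw [sub_eq_add_neg _ (2 * _), ← hXY]
  abel
end B3

section B4
variable {κ : Type*} [Fintype κ] [DecidableEq κ] {W : Type*} [NormedAddCommGroup W]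
  [InnerProductSpace ℝ W]

/-- raise a multi-index -/
def up (i : κ) (α : κ → ℕ) : κ → ℕ := α + Pi.single i 1
/-- lower a multi-index -/
def dn (i : κ) (α : κ → ℕ) : κ → ℕ := α - Pi.single i 1

lemma up_inj (i : κ) : Function.Injective (up i) := fun _ _ h => add_right_cancel h
lemma dn_up (i : κ) (α : κ → ℕ) : dn i (up i α) = α := by ext j; simp [up, dn]
lemma up_dn (i : κ) (α : κ → ℕ) (h : α i ≠ 0) : up i (dn i α) = α := by
  ext j
  by_cases hj : j = i
  · subst hj; simp [up, dn]; omega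
  · simp [up, dn, hj]
@[simp] lemma up_same (i : κ) (α : κ → ℕ) : up i α i = α i + 1 := by simp [up]
@[simp] lemma dn_same (i : κ) (α : κ → ℕ) : dn i α i = α i - 1 := by simp [dn]
lemma up_ne {i j : κ} (h : j ≠ i) (α : κ → ℕ) : up i α j = α j := by simp [up, h]
lemma dn_ne {i j : κ} (h : j ≠ i) (α : κ → ℕ) : dn i α j = α j := by simp [dn, h]
lemma up_up (i j : κ) (α : κ → ℕ) : up i (up j α) = up j (up i α) := add_right_comm _ _ _
lemma dn_dn (i j : κ) (α : κ → ℕ) : dn i (dn j α) = dn j (dn i α) := tsub_right_comm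
lemma up_dn_comm {i j : κ} (h : i ≠ j) (α : κ → ℕ) : up i (dn j α) = dn j (up i α) := by
  ext l
  by_cases hi : l = i
  · subst hi; simp [up, dn, h]
  · by_cases hj : l = j
    · subst hj; simp [up, dn, hi]
    · simp [up, dn, hi, hj]

/-- total degree -/
def deg (α : κ → ℕ) : ℕ := ∑ i, α i
lemma deg_up (i : κ) (α : κ → ℕ) : deg (up i α) = deg α + 1 := by
  simp [deg, up, Finset.sum_add_distrib]
lemma le_deg (i : κ) (α : κ → ℕ) : α i ≤ deg α :=
  Finset.single_le_sum (f := α) (fun _ _ => Nat.zero_le _) (Finset.mem_univ i)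
lemma deg_dn (i : κ) (α : κ → ℕ) (h : α i ≠ 0) : deg (dn i α) + 1 = deg α := by
  rw [← deg_up i, up_dn i α h]

/-- weight of the normalized shift -/
noncomputable def sw (i : κ) (α : κ → ℕ) : ℝ := √((α i + 1) / (deg α + 1))
lemma sw_le (i : κ) (α : κ → ℕ) : |sw i α| ≤ 1 := by
  rw [sw, abs_of_nonneg (Real.sqrt_nonneg _), Real.sqrt_le_one, div_le_one (by positivity)]
  have : (α i : ℝ) ≤ deg α := by exact_mod_cast le_deg i α
  linarith

/-- weighted shift -/
noncomputable abbrev Sh (i : κ) (a : (κ → ℕ) → ℝ) (C : ℝ) (ha : ∀ α, |a α| ≤ C) :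
    L2 (κ → ℕ) W →L[ℝ] L2 (κ → ℕ) W := wc (up i) (up_inj i) a C ha

/-- normalized shift -/
noncomputable def tt (i : κ) : L2 (κ → ℕ) W →L[ℝ] L2 (κ → ℕ) W := Sh i (sw i) 1 (sw_le i)

/-- grading operator -/
noncomputable def Pop : L2 (κ → ℕ) W →L[ℝ] L2 (κ → ℕ) W :=
  wc id Function.injective_id (fun α => (-1) ^ deg α) 1 (fun α => by simp)

@[simp] lemma ev_tt (i : κ) (u : L2 (κ → ℕ) W) (α : κ → ℕ) :
  ev α (tt i u) = sw i α • ev (up i α) u := rfl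
@[simp] lemma ev_Pop (u : L2 (κ → ℕ) W) (α : κ → ℕ) :
  ev α (Pop u) = ((-1 : ℝ) ^ deg α) • ev α u := rfl

variable [CompleteSpace W]
open ContinuousLinearMap

lemma ev_Sh_adj (i : κ) (a : (κ → ℕ) → ℝ) (C : ℝ) (ha : ∀ α, |a α| ≤ C) (u : L2 (κ → ℕ) W)
    (α : κ → ℕ) : ev α (star (Sh i a C ha) u) =
      (if α i = 0 then 0 else a (dn i α)) • ev (dn i α) u := by
  rw [star_eq_adjoint]
  split_ifs with h
  · rw [zero_smul]
    refine ev_wc_adjoint_zero _ _ _ _ _ _ _ fun β hβ => ?_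
    rw [← hβ] at h; simp at h
  · have := ev_wc_adjoint (up i) (up_inj i) a C ha u (dn i α)
    rwa [up_dn i α h] at this

/-- lowered weight -/
noncomputable def sd (i : κ) (α : κ → ℕ) : ℝ := √(α i / deg α)

lemma ev_tt_adj (i : κ) (u : L2 (κ → ℕ) W) (α : κ → ℕ) :
    ev α (star (tt i) u) = sd i α • ev (dn i α) u := by
  rw [tt, ev_Sh_adj]
  congr 1
  split_ifs with h
  · simp [sd, h]
  · rw [sw, sd, dn_same]
    congr 2
    · have : (((α i - 1 : ℕ) : ℝ)) + 1 = α i := by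
        have : α i - 1 + 1 = α i := by omega
        exact_mod_cast this
      exact this
    · exact_mod_cast deg_dn i α h

/-- the model operator -/
noncomputable def Sop (M : κ → W →L[ℝ] W) : L2 (κ → ℕ) W →L[ℝ] L2 (κ → ℕ) W :=
  ∑ i, (cw (M i) * tt i + star (tt i : L2 (κ → ℕ) W →L[ℝ] L2 (κ → ℕ) W) * cw (star (M i)))

lemma star_cw (m : W →L[ℝ] W) : star (cw m : L2 (κ → ℕ) W →L[ℝ] L2 (κ → ℕ) W) = cw (star m) :=
  cw_adjoint m

lemma ev_Sop (M : κ → W →L[ℝ] W) (u : L2 (κ → ℕ) W) (α : κ → ℕ) :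
    ev α (Sop M u) = ∑ i, (sw i α • M i (ev (up i α) u) + sd i α • star (M i) (ev (dn i α) u)) := by
  rw [Sop, ContinuousLinearMap.sum_apply, map_sum]
  refine Finset.sum_congr rfl fun i _ => ?_
  rw [_root_.add_apply, map_add]
  congr 1
  · rw [mul_apply_eq_comp, ev_cw, ev_tt, map_smul]
  · rw [mul_apply_eq_comp, ev_tt_adj, ev_cw]

lemma Sop_sa (M : κ → W →L[ℝ] W) : IsSelfAdjoint (Sop M) := by
  rw [isSelfAdjoint_iff, Sop, star_sum]
  refine Finset.sum_congr rfl fun i _ => ?_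
  rw [star_add, star_mul, star_mul, star_star, star_cw, star_cw, star_star, add_comm]

lemma Pop_sa : IsSelfAdjoint (Pop : L2 (κ → ℕ) W →L[ℝ] L2 (κ → ℕ) W) := by
  rw [isSelfAdjoint_iff]
  ext1 u
  refine L2.ext fun α => ?_
  rw [star_eq_adjoint]
  exact ev_wc_adjoint id Function.injective_id _ 1 _ u α

lemma Pop_sq : (Pop : L2 (κ → ℕ) W →L[ℝ] L2 (κ → ℕ) W) * Pop = 1 := by
  ext1 u
  refine L2.ext fun α => ?_
  rw [mul_apply_eq_comp, ev_Pop, ev_Pop, smul_smul, ← pow_add, Even.neg_one_pow ⟨_, rfl⟩, one_smul]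
  rfl

lemma Pop_Sop (M : κ → W →L[ℝ] W) : Pop * Sop M = - (Sop M * Pop) := by
  ext1 u
  refine L2.ext fun α => ?_
  rw [mul_apply_eq_comp, _root_.neg_apply, mul_apply_eq_comp, ev_Pop, ev_Sop, map_neg, ev_Sop,
    Finset.smul_sum, ← Finset.sum_neg_distrib]
  refine Finset.sum_congr rfl fun i _ => ?_
  rw [ev_Pop, ev_Pop, deg_up, smul_add, neg_add]
  congr 1
  · rw [map_smul, pow_succ, smul_comm]; simp
  · by_cases h : α i = 0
    · simp [sd, h]
    · rw [← deg_dn i α h, map_smul, pow_succ, smul_comm]; simp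

end B4
end HR

namespace HR
set_option linter.unusedSectionVars false
set_option linter.deprecated false
set_option linter.unusedVariables false
open Module
section B5
variable {κ : Type*} [Fintype κ] [DecidableEq κ] {W : Type*} [NormedAddCommGroup W]
  [InnerProductSpace ℝ W] [CompleteSpace W]
open ContinuousLinearMap

local notation "XX" => (L2 (κ → ℕ) W →L[ℝ] L2 (κ → ℕ) W)

/-- truncated oscillator weight -/
noncomputable def bt (d n : ℕ) : ℝ := if n < d then √(n + 1) else 0
lemma bt_le (d n : ℕ) : |bt d n| ≤ d := by
  rw [bt]
  split_ifs with h
  · rw [abs_of_nonneg (Real.sqrt_nonneg _)]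
    have h1 : (n : ℝ) + 1 ≤ d := by exact_mod_cast h
    have h2 : (1 : ℝ) ≤ d := by have : (0 : ℝ) ≤ n := by positivity
                                linarith
    rw [Real.sqrt_le_left (by positivity)]
    nlinarith
  · simp

/-- truncated annihilation operator -/
noncomputable def bb (d : ℕ) (i : κ) : XX := Sh i (fun α => bt d (α i)) d (fun α => bt_le d _)

/-- its adjoint weight -/
noncomputable def bt' (d n : ℕ) : ℝ := if n = 0 then 0 else bt d (n - 1)

lemma ev_bb (d : ℕ) (i : κ) (u : L2 (κ → ℕ) W) (α : κ → ℕ) :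
    ev α (bb d i u) = bt d (α i) • ev (up i α) u := rfl
lemma ev_bb' (d : ℕ) (i : κ) (u : L2 (κ → ℕ) W) (α : κ → ℕ) :
    ev α (star (bb d i : XX) u) = bt' d (α i) • ev (dn i α) u := by
  rw [bb, ev_Sh_adj, dn_same, bt']

lemma bb_comm (d : ℕ) (i j : κ) : (bb d i : XX) * bb d j = bb d j * bb d i := by
  by_cases hij : i = j
  · rw [hij]
  ext1 u
  refine L2.ext fun α => ?_
  simp only [mul_apply_eq_comp, ev_bb]
  rw [up_ne (Ne.symm hij), up_ne hij, up_up, smul_comm]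

lemma bb'_comm (d : ℕ) (i j : κ) :
    star (bb d i : XX) * star (bb d j : XX) = star (bb d j : XX) * star (bb d i : XX) := by
  rw [← star_mul, ← star_mul, bb_comm]

lemma bb_bb' (d : ℕ) (i j : κ) (hij : i ≠ j) :
    (bb d i : XX) * star (bb d j : XX) = star (bb d j : XX) * bb d i := by
  ext1 u
  refine L2.ext fun α => ?_
  simp only [mul_apply_eq_comp, ev_bb, ev_bb']
  rw [up_ne (Ne.symm hij), dn_ne hij, up_dn_comm hij, smul_comm]

lemma bb_cw (d : ℕ) (i : κ) (m : W →L[ℝ] W) : (bb d i : XX) * cw m = cw m * bb d i := by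
  ext1 u
  refine L2.ext fun α => ?_
  simp only [mul_apply_eq_comp, ev_bb, ev_cw, map_smul]

lemma bb'_cw (d : ℕ) (i : κ) (m : W →L[ℝ] W) :
    star (bb d i : XX) * cw m = cw m * star (bb d i : XX) := by
  ext1 u
  refine L2.ext fun α => ?_
  simp only [mul_apply_eq_comp, ev_bb', ev_cw, map_smul]

lemma bb_ccr (d : ℕ) (i : κ) (u : L2 (κ → ℕ) W) (hu : ∀ α, ev α u ≠ 0 → α i < d) :
    ((bb d i : XX) * star (bb d i : XX) - star (bb d i : XX) * bb d i : XX) u = u := by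
  refine L2.ext fun α => ?_
  simp only [_root_.sub_apply, map_sub, mul_apply_eq_comp, ev_bb, ev_bb', dn_up, up_same, dn_same]
  by_cases h0 : ev α u = 0
  · by_cases hα : α i = 0
    · simp [h0, bt', hα]
    · rw [up_dn i α hα, h0]; simp
  · have hd := hu α h0
    have e1 : bt d (α i) * bt' d (α i + 1) = α i + 1 := by
      simp only [bt', bt, Nat.add_sub_cancel, hd, if_true]
      rw [if_neg (by omega)]
      exact Real.mul_self_sqrt (by positivity)
    by_cases hα : α i = 0
    · rw [smul_smul, e1]; simp [bt', hα]
    · rw [up_dn i α hα, smul_smul, smul_smul, e1, ← sub_smul]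
      have e2 : bt' d (α i) * bt d (α i - 1) = α i := by
        simp only [bt', bt, hα, if_false]
        rw [if_pos (by omega)]
        rw [Real.mul_self_sqrt (by positivity)]
        have : α i - 1 + 1 = α i := by omega
        exact_mod_cast this
      rw [e2]; simp

/-- box subspace -/
def box (d : ℕ) : Submodule ℝ (L2 (κ → ℕ) W) where
  carrier := {u | ∀ α : κ → ℕ, (∃ i, d < α i) → ev α u = 0}
  add_mem' := fun ha hb α h => by rw [map_add, ha α h, hb α h, add_zero]
  zero_mem' := fun α h => map_zero _
  smul_mem' := fun c u hu α h => by rw [map_smul, hu α h, smul_zero]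

instance [FiniteDimensional ℝ W] (d : ℕ) :
    FiniteDimensional ℝ (box d : Submodule ℝ (L2 (κ → ℕ) W)) := by
  let s : Finset (κ → ℕ) := Fintype.piFinset fun _ => Finset.range (d + 1)
  let f : (box d : Submodule ℝ (L2 (κ → ℕ) W)) →ₗ[ℝ] (s → W) :=
    LinearMap.pi fun α => (ev α.1) ∘ₗ (box d).subtype
  refine FiniteDimensional.of_injective f ?_
  rw [← LinearMap.ker_eq_bot, LinearMap.ker_eq_bot']
  rintro ⟨u, hu⟩ h
  have : u = 0 := by
    refine L2.ext fun α => ?_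
    by_cases hα : α ∈ s
    · exact congrFun h ⟨α, hα⟩
    · rw [map_zero]; apply hu
      by_contra hc
      push Not at hc
      exact hα (by rw [Fintype.mem_piFinset]; intro i; rw [Finset.mem_range]; have := hc i; omega)
  subst this; rfl

lemma box_inv (d : ℕ) (i : κ) (u : L2 (κ → ℕ) W) (hu : u ∈ (box d : Submodule ℝ (L2 (κ → ℕ) W))) :
    (bb d i + star (bb d i : XX) : XX) u ∈ (box d : Submodule ℝ (L2 (κ → ℕ) W)) := by
  rintro α ⟨j, hj⟩
  rw [_root_.add_apply, map_add, ev_bb, ev_bb']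
  have h1 : bt d (α i) • ev (up i α) u = 0 := by
    rw [hu (up i α) ⟨j, ?_⟩, smul_zero]
    by_cases h : j = i
    · subst h; rw [up_same]; omega
    · rw [up_ne h]; exact hj
  rw [h1, zero_add]
  by_cases h : j = i
  · subst h
    rw [bt', if_neg (by omega), bt, if_neg (by omega), zero_smul]
  · rw [hu (dn i α) ⟨j, by rw [dn_ne h]; exact hj⟩, smul_zero]

lemma tt'_norm [Nonempty κ] (w : L2 (κ → ℕ) W) :
    ‖w‖ ^ 2 ≤ ∑ i, ‖star (tt i : XX) w‖ ^ 2 := by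
  have e : ∀ i, ‖star (tt i : XX) w‖ ^ 2 = ∑' α, ‖ev α (tt i (star (tt i : XX) w))‖ * ‖ev α w‖ := by
    intro i
    rw [← real_inner_self_eq_norm_sq, star_eq_adjoint, adjoint_inner_left, L2.inner_eq]
    refine tsum_congr fun α => ?_
    have : ev α (tt i (adjoint (tt i : XX) w)) = (sw i α) ^ 2 • ev α w := by
      rw [← star_eq_adjoint, ev_tt, ev_tt_adj, dn_up, smul_smul, sd, sw, up_same, deg_up]
      push_cast; rw [pow_two]
    rw [this, inner_smul_right, norm_smul, real_inner_self_eq_norm_sq, Real.norm_of_nonneg (by positivity)]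
    ring
  have e' : ∀ i, ‖star (tt i : XX) w‖ ^ 2 = ∑' α, (sw i α) ^ 2 * ‖ev α w‖ ^ 2 := by
    intro i
    rw [e]
    refine tsum_congr fun α => ?_
    rw [ev_tt, ev_tt_adj, dn_up, smul_smul, sd, up_same, deg_up, norm_smul]
    have : sw i α = √(((α i + 1 : ℕ) : ℝ) / ((deg α + 1 : ℕ) : ℝ)) := by rw [sw]; push_cast; rfl
    rw [← this, Real.norm_of_nonneg (mul_self_nonneg _)]; ring
  have hs : ∀ i, Summable fun α => (sw i α) ^ 2 * ‖ev α w‖ ^ 2 := by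
    intro i
    refine Summable.of_nonneg_of_le (fun α => by positivity) (fun α => ?_) (L2.summable w)
    have h1 : sw i α ^ 2 ≤ 1 := by
      rw [← sq_abs]; exact pow_le_one₀ (abs_nonneg _) (sw_le i α)
    exact mul_le_of_le_one_left (by positivity) h1
  simp only [e']
  rw [L2.norm_sq, ← Summable.tsum_finsetSum (fun i _ => hs i)]
  refine Summable.tsum_le_tsum (fun α => ?_) (L2.summable w) (summable_sum fun i _ => hs i)
  rw [← Finset.sum_mul]
  have h1 : 1 ≤ ∑ i, sw i α ^ 2 := by
    have : ∀ i, sw i α ^ 2 = (α i + 1) / (deg α + 1) := fun i => by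
      rw [sw, Real.sq_sqrt (by positivity)]
    simp only [this]
    rw [← Finset.sum_div, le_div_iff₀ (by positivity), Finset.sum_add_distrib]
    have h2 : (∑ i, (α i : ℝ)) = deg α := by rw [deg]; push_cast; rfl
    have h3 : (1 : ℝ) ≤ Fintype.card κ := by exact_mod_cast Fintype.card_pos
    rw [h2, Finset.sum_const, Finset.card_univ, nsmul_eq_mul]; linarith
  exact le_mul_of_one_le_left (by positivity) h1

/-- diagonal rescaling -/
noncomputable def dg : XX := wc id Function.injective_id (fun α => (√(deg α + 1))⁻¹) 1 (fun α => by
  rw [abs_of_nonneg (by positivity)]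
  refine inv_le_one_of_one_le₀ ?_
  rw [Real.one_le_sqrt]
  have : (0 : ℝ) ≤ deg α := by positivity
  linarith)

lemma ev_dg (u : L2 (κ → ℕ) W) (α : κ → ℕ) : ev α (dg u) = (√(deg α + 1))⁻¹ • ev α u := rfl

lemma dg_norm (m : ℕ) (hm : 1 ≤ m) (w : L2 (κ → ℕ) W) (hw : ∀ α, ev α w ≠ 0 → m ≤ deg α) :
    ‖dg w‖ ^ 2 ≤ ‖w‖ ^ 2 / m := by
  have : ‖dg w‖ ≤ (√m)⁻¹ * ‖w‖ := by
    refine L2.norm_le id Function.injective_id _ (by positivity) _ _ fun α => ?_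
    rw [ev_dg, norm_smul, Real.norm_of_nonneg (by positivity)]
    by_cases h : ev α w = 0
    · simp [h]
    · refine mul_le_mul_of_nonneg_right ?_ (norm_nonneg _)
      have : (m : ℝ) ≤ deg α := by exact_mod_cast hw α h
      have hm' : (0 : ℝ) < m := by exact_mod_cast hm
      refine inv_anti₀ (Real.sqrt_pos.2 hm') (Real.sqrt_le_sqrt (by linarith))
  calc ‖dg w‖ ^ 2 ≤ ((√m)⁻¹ * ‖w‖) ^ 2 := pow_le_pow_left₀ (norm_nonneg _) this 2
    _ = _ := by rw [mul_pow, inv_pow, Real.sq_sqrt (by positivity)]; field_simp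

lemma bb'_dg (d : ℕ) (i : κ) (w : L2 (κ → ℕ) W) (hw : ∀ α, ev α w ≠ 0 → α i < d) :
    star (bb d i : XX) (dg w) = star (tt i : XX) w := by
  refine L2.ext fun α => ?_
  rw [ev_bb', ev_dg, ev_tt_adj, smul_smul]
  by_cases h : ev (dn i α) w = 0
  · rw [h]; simp
  congr 1
  by_cases hα : α i = 0
  · simp [bt', sd, hα]
  have hd := hw _ h
  rw [dn_same] at hd
  have h1 : (((α i - 1 : ℕ) : ℝ)) + 1 = α i := by
    have : α i - 1 + 1 = α i := by omega
    exact_mod_cast this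
  have h2 : ((deg (dn i α) : ℕ) : ℝ) + 1 = deg α := by exact_mod_cast deg_dn i α hα
  rw [bt', if_neg hα, bt, if_pos hd, h1, h2, sd, Real.sqrt_div (by positivity), div_eq_mul_inv]

lemma bb_dg (d : ℕ) (i : κ) (m : ℕ) (hm : 1 ≤ m) (w : L2 (κ → ℕ) W)
    (hw : ∀ α, ev α w ≠ 0 → α i < d) (hw' : ∀ α, ev α w ≠ 0 → m ≤ deg α) :
    ‖bb d i (dg w) - tt i w‖ ≤ (m : ℝ)⁻¹ * ‖w‖ := by
  refine L2.norm_le (up i) (up_inj i) _ (by positivity) _ _ fun α => ?_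
  rw [map_sub, ev_bb, ev_dg, ev_tt, smul_smul, ← sub_smul, norm_smul]
  by_cases h : ev (up i α) w = 0
  · simp [h]
  refine mul_le_mul_of_nonneg_right ?_ (norm_nonneg _)
  have hd := hw _ h
  have hd' := hw' _ h
  rw [up_same] at hd
  rw [deg_up] at hd' ⊢
  rw [bt, if_pos (by omega), sw, Real.sqrt_div (by positivity), Real.norm_eq_abs]
  have hle : (α i : ℝ) ≤ deg α := by exact_mod_cast le_deg i α
  have hm2 : (m : ℝ) ≤ deg α + 1 := by exact_mod_cast hd'
  have hm0 : (0 : ℝ) < m := by exact_mod_cast hm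
  push_cast
  generalize (deg α : ℝ) = D at *
  generalize hA : (α i : ℝ) = A at *
  have hA0 : 0 ≤ A := by rw [← hA]; positivity
  have hD0 : 0 ≤ D := hA0.trans hle
  have p1 : √(A + 1) ≤ √(D + 1) := Real.sqrt_le_sqrt (by linarith)
  have q1 := Real.sq_sqrt (show 0 ≤ D + 1 by linarith)
  have q2 := Real.sq_sqrt (show 0 ≤ D + 1 + 1 by linarith)
  have r1 : 0 < √(D + 1) := Real.sqrt_pos.2 (by linarith)
  have r2 : √(D + 1) ≤ √(D + 1 + 1) := Real.sqrt_le_sqrt (by linarith)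
  have r3 : 0 ≤ √(A + 1) := Real.sqrt_nonneg _
  have e : √(A + 1) * (√(D + 1 + 1))⁻¹ - √(A + 1) / √(D + 1)
      = - (√(A + 1) * ((√(D + 1))⁻¹ - (√(D + 1 + 1))⁻¹)) := by ring
  rw [e, abs_neg]
  generalize √(D + 1) = P at *
  generalize √(D + 1 + 1) = Q at *
  generalize √(A + 1) = R at *
  have hQ : 0 < Q := r1.trans_le r2
  have k1 : 0 ≤ P⁻¹ - Q⁻¹ := sub_nonneg.2 (inv_anti₀ r1 r2)
  rw [abs_of_nonneg (mul_nonneg r3 k1)]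
  calc R * (P⁻¹ - Q⁻¹) ≤ P * (P⁻¹ - Q⁻¹) := mul_le_mul_of_nonneg_right p1 k1
    _ = (Q - P) / Q := by field_simp
    _ ≤ (m : ℝ)⁻¹ := by
      rw [div_le_iff₀ hQ, inv_mul_eq_div, le_div_iff₀ hm0]
      have h1 : (Q - P) * (Q + P) = 1 := by nlinarith
      have h2 : 0 ≤ Q - P := sub_nonneg.2 r2
      have h3 : (m : ℝ) ≤ Q * (Q + P) := by nlinarith
      calc (Q - P) * m ≤ (Q - P) * (Q * (Q + P)) := mul_le_mul_of_nonneg_left h3 h2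
        _ = Q := by rw [mul_left_comm, h1, mul_one]
end B5
end HR

namespace HR
set_option linter.unusedSectionVars false
set_option linter.deprecated false
set_option linter.unusedVariables false
open Module
section B6
variable {κ : Type*} [Fintype κ] [DecidableEq κ] {W : Type*} [NormedAddCommGroup W]
  [InnerProductSpace ℝ W] [CompleteSpace W]
open ContinuousLinearMap

local notation "XX" => (L2 (κ → ℕ) W →L[ℝ] L2 (κ → ℕ) W)

/-- Clifford type data -/
structure Cl (B e : κ → W →L[ℝ] W) (c : ℝ) : Prop where
  c0 : 0 < c
  c1 : c ≤ 1
  Bs : ∀ i, star (B i) = B i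
  es : ∀ i, star (e i) = - e i
  ee : ∀ i j, e i * e j + e j * e i = if i = j then -2 else 0
  Be : ∀ i j, e j * B i = - (B i * e j)
  pos : ∀ (χ : κ → ℝ) v, c * (∑ i, χ i ^ 2) * ‖v‖ ^ 2 ≤ ‖∑ i, χ i • B i v‖ ^ 2

lemma cw_mul (m n : W →L[ℝ] W) : (cw (m * n) : XX) = cw m * cw n := rfl
lemma cw_add (m n : W →L[ℝ] W) : (cw (m + n) : XX) = cw m + cw n := by
  ext1 u; refine L2.ext fun α => ?_
  simp only [ev_cw, _root_.add_apply, map_add]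
lemma cw_neg (m : W →L[ℝ] W) : (cw (-m) : XX) = - cw m := by
  ext1 u; refine L2.ext fun α => ?_
  simp only [ev_cw, _root_.neg_apply, map_neg]
lemma cw_one : (cw (1 : W →L[ℝ] W) : XX) = 1 := rfl
lemma cw_zero : (cw (0 : W →L[ℝ] W) : XX) = 0 := rfl

lemma Cl.pos' {B e : κ → W →L[ℝ] W} {c : ℝ} (h : Cl B e c) (χ : κ → ℝ) (v : L2 (κ → ℕ) W) :
    c * (∑ i, χ i ^ 2) * ‖v‖ ^ 2 ≤ ‖∑ i, χ i • (cw (B i) : XX) v‖ ^ 2 := by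
  rw [L2.norm_sq, L2.norm_sq, ← tsum_mul_left]
  refine Summable.tsum_le_tsum (fun α => ?_) ((L2.summable v).mul_left _) (L2.summable _)
  rw [map_sum]
  simp only [map_smul, ev_cw]
  exact h.pos χ _

lemma Cl_aux {m c q u w ip p1 p2 x D : ℝ} (hm : 0 < m) (hc : 0 < c) (hc1 : c ≤ 1) (hq : 0 ≤ q)
    (h1 : 2 * q ≤ c * m) (hu : u ^ 2 ≤ w ^ 2 / m) (hip : ip ≤ q * u ^ 2)
    (hs : 2 * w ^ 2 ≤ p1 + p2) (hx : c * p1 ≤ x ^ 2) (hp : 0 ≤ p2)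
    (hD : D ^ 2 = x ^ 2 + p2 - 2 * ip) : c * w ^ 2 ≤ D ^ 2 := by
  have k1 : (2 * q) * u ^ 2 ≤ (c * m) * (w ^ 2 / m) :=
    mul_le_mul h1 hu (sq_nonneg _) (by positivity)
  have k3 : (c * m) * (w ^ 2 / m) = c * w ^ 2 := by field_simp
  rw [k3] at k1
  have k2 : c * p2 ≤ p2 := by nlinarith
  have k4 := mul_le_mul_of_nonneg_left hs hc.le
  rw [hD]
  nlinarith

set_option maxHeartbeats 1000000 in
lemma Cl.main [FiniteDimensional ℝ W] [Nonempty κ] {B e : κ → W →L[ℝ] W} {c : ℝ} (h : Cl B e c)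
    (m : ℕ) (hm : 1 ≤ m) (hm1 : 2 * ‖∑ i, (cw (B i * e i) : XX)‖ ≤ c * m)
    (hm2 : 2 * ∑ i, ‖(cw (B i + e i) : XX)‖ ≤ √c * m)
    (d : ℕ) (w : L2 (κ → ℕ) W) (hw : ∀ α, ev α w ≠ 0 → ∀ i, α i < d)
    (hw' : ∀ α, ev α w ≠ 0 → m ≤ deg α) :
    √c / 2 * ‖w‖ ≤ ‖Sop (fun i => B i + e i) w‖ := by
  have hm0 : (0 : ℝ) < m := by exact_mod_cast hm
  obtain ⟨b, hb⟩ : ∃ b : κ → XX, b = bb d := ⟨_, rfl⟩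
  obtain ⟨D, hD⟩ : ∃ D : XX, D = ∑ i, (cw (B i) * (b i + star (b i)) + cw (e i) * (b i - star (b i))) :=
    ⟨_, rfl⟩
  obtain ⟨u, hu⟩ : ∃ u : L2 (κ → ℕ) W, u = dg w := ⟨_, rfl⟩
  have hus : ∀ α, ev α u ≠ 0 → ev α w ≠ 0 := by
    intro α h1 h2; rw [hu, ev_dg, h2, smul_zero] at h1; exact h1 rfl
  have hBs : ∀ i, star (cw (B i) : XX) = cw (B i) := fun i => by rw [star_cw, h.Bs]
  have hes : ∀ i, star (cw (e i) : XX) = - cw (e i) := fun i => by rw [star_cw, h.es, cw_neg]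
  have hDs : star D = D := by
    rw [hD, star_sum]
    refine Finset.sum_congr rfl fun i _ => ?_
    have h1 : (b i + star (b i)) * cw (B i) = cw (B i) * (b i + star (b i)) := by
      rw [hb, add_mul, bb_cw, bb'_cw, mul_add]
    have h2 : (star (b i) - b i) * cw (e i) = cw (e i) * (star (b i) - b i) := by
      rw [hb, sub_mul, bb_cw, bb'_cw, mul_sub]
    rw [star_add, star_mul, star_mul, star_add, star_sub, star_star, hBs, hes, mul_neg, h2,
      add_comm (star (b i)), h1]
    noncomm_ring
  have hsq : D * D = (∑ i, cw (B i) * (b i + star (b i))) * (∑ i, cw (B i) * (b i + star (b i)))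
      - ∑ i, (b i - star (b i)) * (b i - star (b i))
        - 2 * ∑ i, cw (B i) * cw (e i) * (b i * star (b i) - star (b i) * b i) := by
    rw [hD]
    refine clifford_sq (fun i => (cw (B i) : XX)) (fun i => cw (e i)) b (fun i => star (b i))
      ?_ ?_ ?_ ?_ ?_ ?_ ?_ ?_ ?_ ?_
    · intro r s hrs
      have : (2 : ℝ) • r = (2 : ℝ) • s := by rw [two_smul, two_smul, hrs]
      exact smul_right_injective _ (two_ne_zero) this
    · intro i j
      rw [← cw_mul, ← cw_mul, ← cw_add, h.ee]
      split_ifs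
      · rw [cw_neg]
        congr 1
      · exact cw_zero
    · intro i j
      rw [← cw_mul, ← cw_mul, h.Be, cw_neg]
    · intro i j; rw [hb]; exact bb_cw _ _ _
    · intro i j; rw [hb]; exact bb'_cw _ _ _
    · intro i j; rw [hb]; exact bb_cw _ _ _
    · intro i j; rw [hb]; exact bb'_cw _ _ _
    · intro i j; rw [hb]; exact bb_comm _ _ _
    · intro i j; rw [hb]; exact bb'_comm _ _ _
    · intro i j hij; rw [hb]; exact bb_bb' _ _ _ hij
  have hinner : ∀ (T : XX) (y : L2 (κ → ℕ) W), inner ℝ y ((star T * T) y) = ‖T y‖ ^ 2 := by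
    intro T y
    rw [mul_apply_eq_comp, star_eq_adjoint, adjoint_inner_right, real_inner_self_eq_norm_sq]
  obtain ⟨X, hX⟩ : ∃ X : XX, X = ∑ i, cw (B i) * (b i + star (b i)) := ⟨_, rfl⟩
  have hXs : star X = X := by
    rw [hX, star_sum]
    refine Finset.sum_congr rfl fun i _ => ?_
    have h1 : (b i + star (b i)) * cw (B i) = cw (B i) * (b i + star (b i)) := by
      rw [hb, add_mul, bb_cw, bb'_cw, mul_add]
    rw [star_mul, star_add, star_star, hBs, add_comm (star (b i)), h1]
  have hnorm : ‖D u‖ ^ 2 = ‖X u‖ ^ 2 + ∑ i, ‖(b i - star (b i)) u‖ ^ 2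
      - 2 * inner ℝ u ((∑ i, cw (B i * e i) : XX) u) := by
    rw [← hinner D, hDs, hsq, ← hX]
    simp only [_root_.sub_apply, inner_sub_right]
    have h1 := hinner X u
    rw [hXs] at h1
    rw [h1]
    have h2 : inner ℝ u ((∑ i, (b i - star (b i)) * (b i - star (b i))) u)
        = - ∑ i, ‖(b i - star (b i)) u‖ ^ 2 := by
      rw [_root_.sum_apply, inner_sum, ← Finset.sum_neg_distrib]
      refine Finset.sum_congr rfl fun i _ => ?_
      rw [← hinner, star_sub, star_star, ← inner_neg_right, ← _root_.neg_apply]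
      congr 2
      noncomm_ring
    have h3 : ((2 : XX) * ∑ i, cw (B i) * cw (e i) * (b i * star (b i) - star (b i) * b i)) u
        = (2 : ℝ) • (∑ i, cw (B i * e i) : XX) u := by
      rw [show (2 : XX) = (2 : ℝ) • 1 by rw [two_smul]; norm_num, smul_mul_assoc, one_mul, _root_.smul_apply]
      congr 1
      rw [_root_.sum_apply, _root_.sum_apply]
      refine Finset.sum_congr rfl fun i _ => ?_
      rw [mul_apply_eq_comp, hb, bb_ccr d i u (fun α hα => hw α (hus α hα) i), cw_mul]
    rw [h2, h3, inner_smul_right]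
    simp only [_root_.sub_apply]
    ring
  have hXbound : c * ∑ i, ‖(b i + star (b i)) u‖ ^ 2 ≤ ‖X u‖ ^ 2 := by
    have hu_box : u ∈ (box d : Submodule ℝ (L2 (κ → ℕ) W)) := by
      rintro α ⟨i, hi⟩
      by_contra hne
      have := hw α (hus α hne) i
      omega
    have := joint_bound (fun i => b i + star (b i)) (fun i => (cw (B i) : XX)) ?_ ?_ ?_ c h.pos'
      (box d) ?_ u hu_box
    · rw [hX, _root_.sum_apply]; exact this
    · intro i y z
      have : star (b i + star (b i)) = b i + star (b i) := by rw [star_add, star_star, add_comm]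
      rw [← this, star_eq_adjoint, adjoint_inner_left, ← star_eq_adjoint, this]
    · intro i j y
      have : (b i + star (b i)) * (b j + star (b j)) = (b j + star (b j)) * (b i + star (b i)) := by
        by_cases hij : i = j
        · rw [hij]
        · rw [hb]
          simp only [mul_add, add_mul, bb_comm d i j, bb'_comm d i j, bb_bb' d i j hij,
            bb_bb' d j i (Ne.symm hij)]
          abel
      exact DFunLike.congr_fun this y
    · intro i j y
      have : (b i + star (b i)) * cw (B j) = cw (B j) * (b i + star (b i)) := by
        rw [hb, add_mul, bb_cw, bb'_cw, mul_add]
      exact DFunLike.congr_fun this y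
    · intro i y hy
      rw [hb]; exact box_inv d i y hy
  have hpar : ∀ i, ‖(b i + star (b i)) u‖ ^ 2 + ‖(b i - star (b i)) u‖ ^ 2
      = 2 * (‖b i u‖ ^ 2 + ‖star (b i) u‖ ^ 2) := by
    intro i
    rw [_root_.add_apply, _root_.sub_apply]
    have := parallelogram_law_with_norm ℝ (b i u) (star (b i) u)
    nlinarith
  have hbw : ∀ i, star (b i) u = star (tt i : XX) w := by
    intro i; rw [hb, hu]; exact bb'_dg d i w (fun α hα => hw α hα i)
  have hww := tt'_norm w
  have hsum : 2 * ‖w‖ ^ 2 ≤ ∑ i, ‖(b i + star (b i)) u‖ ^ 2 + ∑ i, ‖(b i - star (b i)) u‖ ^ 2 := by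
    rw [← Finset.sum_add_distrib]
    simp only [hpar, hbw]
    rw [← Finset.mul_sum]
    refine mul_le_mul_of_nonneg_left (hww.trans (Finset.sum_le_sum fun i _ => ?_)) (by norm_num)
    nlinarith [sq_nonneg ‖b i u‖]
  have hun : ‖u‖ ^ 2 ≤ ‖w‖ ^ 2 / m := by rw [hu]; exact dg_norm m hm w hw'
  have hcross : inner ℝ u ((∑ i, cw (B i * e i) : XX) u) ≤ ‖∑ i, (cw (B i * e i) : XX)‖ * ‖u‖ ^ 2 := by
    refine (real_inner_le_norm _ _).trans ?_
    have := (∑ i, (cw (B i * e i) : XX)).le_opNorm u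
    nlinarith [norm_nonneg u]
  have hc0 := h.c0
  have hDu : c * ‖w‖ ^ 2 ≤ ‖D u‖ ^ 2 := by
    have k2 : 0 ≤ ∑ i, ‖(b i - star (b i)) u‖ ^ 2 := Finset.sum_nonneg fun i _ => sq_nonneg _
    exact Cl_aux hm0 hc0 h.c1 (norm_nonneg (∑ i, (cw (B i * e i) : XX))) hm1 hun hcross hsum hXbound k2 hnorm
  have hDu' : √c * ‖w‖ ≤ ‖D u‖ := by
    refine le_of_sq_le_sq ?_ (norm_nonneg _)
    rw [mul_pow, Real.sq_sqrt hc0.le]; exact hDu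
  have hdiff : ‖D u - Sop (fun i => B i + e i) w‖ ≤ √c / 2 * ‖w‖ := by
    have : D u - Sop (fun i => B i + e i) w
        = ∑ i, (cw (B i + e i) : XX) (b i u - tt i w) := by
      rw [hD, Sop, _root_.sum_apply, _root_.sum_apply, ← Finset.sum_sub_distrib]
      refine Finset.sum_congr rfl fun i _ => ?_
      have h1 : cw (B i) * (b i + star (b i)) + cw (e i) * (b i - star (b i))
          = cw (B i + e i) * b i + star (b i) * cw (B i - e i) := by
        rw [hb, bb'_cw, sub_eq_add_neg (B i), cw_add, cw_add, cw_neg]; noncomm_ring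
      have h2 : star (tt i : XX) * cw (B i - e i) = cw (B i - e i) * star (tt i : XX) := by
        ext1 y
        refine L2.ext fun α => ?_
        simp only [mul_apply_eq_comp, ev_tt_adj, ev_cw, map_smul]
      have h3 : star (B i + e i) = B i - e i := by rw [star_add, h.Bs, h.es]; abel
      rw [h1, h3, h2]
      have h4 : star (b i) * cw (B i - e i) = cw (B i - e i) * star (b i) := by rw [hb, bb'_cw]
      rw [h4, _root_.add_apply, _root_.add_apply, mul_apply_eq_comp, mul_apply_eq_comp, mul_apply_eq_comp,
        mul_apply_eq_comp, hbw, map_sub]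
      abel
    rw [this]
    refine (norm_sum_le _ _).trans ?_
    calc ∑ i, ‖(cw (B i + e i) : XX) (b i u - tt i w)‖
        ≤ ∑ i, ‖(cw (B i + e i) : XX)‖ * ((m : ℝ)⁻¹ * ‖w‖) := by
          refine Finset.sum_le_sum fun i _ => (le_opNorm _ _).trans ?_
          refine mul_le_mul_of_nonneg_left ?_ (norm_nonneg _)
          rw [hb, hu]; exact bb_dg d i m hm w (fun α hα => hw α hα i) hw'
      _ = (∑ i, ‖(cw (B i + e i) : XX)‖) * ((m : ℝ)⁻¹ * ‖w‖) := by rw [Finset.sum_mul]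
      _ ≤ (√c * m / 2) * ((m : ℝ)⁻¹ * ‖w‖) := by
          refine mul_le_mul_of_nonneg_right (by linarith) (by positivity)
      _ = _ := by field_simp
  have := norm_sub_norm_le (D u) (Sop (fun i => B i + e i) w)
  linarith

theorem Cl.fred [FiniteDimensional ℝ W] [Nonempty κ] {B e : κ → W →L[ℝ] W} {c : ℝ} (h : Cl B e c) :
    Fred (Sop (fun i => B i + e i)) := by
  have hc := h.c0
  obtain ⟨m, hm⟩ := exists_nat_ge (max 1 (max (2 * ‖∑ i, (cw (B i * e i) : XX)‖ / c)
    ((2 * ∑ i, ‖(cw (B i + e i) : XX)‖) / √c)))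
  have hm0 : (1 : ℝ) ≤ m := (le_max_left _ _).trans hm
  have hm1 := ((le_max_left _ _).trans (le_max_right _ _)).trans hm
  have hm2 := ((le_max_right _ _).trans (le_max_right _ _)).trans hm
  rw [div_le_iff₀ hc] at hm1
  rw [div_le_iff₀ (Real.sqrt_pos.2 hc)] at hm2
  have key := h.main m (by exact_mod_cast hm0) (by linarith) (by linarith)
  refine ⟨box m, inferInstance, √c / 2, by positivity, fun u hu => ?_⟩
  have hu0 : ∀ α, ev α u ≠ 0 → m ≤ deg α := by
    intro α hα
    by_contra hlt
    apply hα
    have h1 : sg α (ev α u) ∈ (box m : Submodule ℝ (L2 (κ → ℕ) W)) := by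
      rintro β ⟨i, hi⟩
      rw [ev_sg, if_neg]
      rintro rfl
      have := le_deg i β
      omega
    have := (Submodule.mem_orthogonal _ _).1 hu _ h1
    rw [inner_sg] at this
    exact inner_self_eq_zero.1 this
  have hsum := L2.hasSum u
  have ht : Filter.Tendsto (fun s : Finset (κ → ℕ) => ∑ α ∈ s, sg α (ev α u)) Filter.atTop (nhds u) :=
    hsum
  refine le_of_tendsto_of_tendsto' (ht.norm.const_mul (√c / 2))
    (((Sop fun i => B i + e i).continuous.tendsto u).comp ht).norm fun s => ?_
  have hev : ∀ β, ev β (∑ α ∈ s, sg α (ev α u) : L2 (κ → ℕ) W) = if β ∈ s then ev β u else 0 := by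
    intro β
    rw [map_sum]
    simp only [ev_sg]
    rw [Finset.sum_ite_eq]
  refine key (s.sup deg + 1) _ ?_ ?_
  · intro α hα i
    rw [hev] at hα
    have hs : α ∈ s := by by_contra hh; rw [if_neg hh] at hα; exact hα rfl
    have h1 := Finset.le_sup (f := deg) hs
    have h2 := le_deg i α
    omega
  · intro α hα
    rw [hev] at hα
    apply hu0
    intro h0; rw [h0] at hα; simp at hα
end B6
end HR

namespace HR
set_option linter.unusedSectionVars false
set_option linter.deprecated false
set_option linter.unusedVariables false
open Module
section C1
/-- oscillator identity -/
lemma osc_sq {R κ : Type*} [Ring R] [Fintype κ] [DecidableEq κ]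
    (M N b b' : κ → R) (hh : ∀ r : R, r + r = 0 → r = 0)
    (hMM : ∀ i j, M i * M j + M j * M i = 0)
    (hNN : ∀ i j, N i * N j + N j * N i = 0)
    (hMN : ∀ i j, M i * N j + N j * M i = if i = j then 4 else 0)
    (hMb : ∀ i j, b j * M i = M i * b j) (hMb' : ∀ i j, b' j * M i = M i * b' j)
    (hNb : ∀ i j, b j * N i = N i * b j) (hNb' : ∀ i j, b' j * N i = N i * b' j)
    (hbb : ∀ i j, b i * b j = b j * b i) (hbb' : ∀ i j, b' i * b' j = b' j * b' i)
    (hb : ∀ i j, b i * b' j = b' j * b i + if i = j then 1 else 0) :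
    (∑ i, (M i * b i + N i * b' i)) * (∑ i, (M i * b i + N i * b' i))
      = ∑ i, (4 * (b' i * b i) + M i * N i) := by
  have gen : ∀ (M b : κ → R), (∀ i j, M i * M j + M j * M i = 0) → (∀ i j, b j * M i = M i * b j) →
      (∀ i j, b i * b j = b j * b i) → (∑ i, M i * b i) * (∑ i, M i * b i) = 0 := by
    intro M b h1 h2 h3
    apply hh
    have e1 : ∀ i j, M i * b i * (M j * b j) = M i * M j * (b i * b j) := by
      intro i j
      rw [mul_assoc, ← mul_assoc (b i), h2]; noncomm_ring
    have e2 : (∑ i, M i * b i) * (∑ i, M i * b i) = ∑ i, ∑ j, M i * M j * (b i * b j) := by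
      rw [Finset.sum_mul_sum]; simp only [e1]
    have e3 : (∑ i, M i * b i) * (∑ i, M i * b i) = ∑ i, ∑ j, M j * M i * (b i * b j) := by
      rw [e2, Finset.sum_comm]
      refine Finset.sum_congr rfl fun i _ => Finset.sum_congr rfl fun j _ => ?_
      rw [h3 j i]
    nth_rewrite 1 [e2]
    rw [e3, ← Finset.sum_add_distrib]
    simp only [← Finset.sum_add_distrib, ← add_mul, h1]
    simp
  rw [Finset.sum_add_distrib, add_mul, mul_add, mul_add, gen M b hMM hMb hbb, gen N b' hNN hNb' hbb',
    zero_add, add_zero, Finset.sum_mul_sum, Finset.sum_mul_sum,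
    Finset.sum_comm (f := fun i j => N i * _ * _), ← Finset.sum_add_distrib]
  simp only [← Finset.sum_add_distrib]
  refine Finset.sum_congr rfl fun i _ => ?_
  have e1 : ∀ j, M i * b i * (N j * b' j) + N j * b' j * (M i * b i)
      = if i = j then (4 * (b' i * b i) + M i * N i) else 0 := by
    intro j
    calc _ = M i * (b i * N j) * b' j + N j * (b' j * M i) * b i := by noncomm_ring
      _ = M i * N j * (b i * b' j) + N j * M i * (b' j * b i) := by rw [hNb, hMb']; noncomm_ring
      _ = (M i * N j + N j * M i) * (b' j * b i) + M i * N j * (if i = j then 1 else 0) := by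
          rw [hb]; noncomm_ring
      _ = _ := by
          rw [hMN]; split_ifs with h
          · subst h; simp
          · simp
  simp only [e1]
  simp

variable {κ : Type*} [Fintype κ] [DecidableEq κ] {W : Type*} [NormedAddCommGroup W]
  [InnerProductSpace ℝ W]

/-- formal annihilation -/
noncomputable def fb (W : Type*) [NormedAddCommGroup W] [InnerProductSpace ℝ W] (i : κ) :
    Module.End ℝ ((κ → ℕ) → W) where
  toFun v := fun α => √(α i + 1) • v (up i α)
  map_add' u v := by ext1 α; simp
  map_smul' c v := by ext1 α; simp [smul_comm c]
/-- formal creation -/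
noncomputable def fb' (W : Type*) [NormedAddCommGroup W] [InnerProductSpace ℝ W] (i : κ) :
    Module.End ℝ ((κ → ℕ) → W) where
  toFun v := fun α => √(α i) • v (dn i α)
  map_add' u v := by ext1 α; simp
  map_smul' c v := by ext1 α; simp [smul_comm c]
/-- formal coefficient -/
noncomputable def fc (κ : Type*) (m : W →L[ℝ] W) : Module.End ℝ ((κ → ℕ) → W) where
  toFun v := fun α => m (v α)
  map_add' u v := by ext1 α; simp
  map_smul' c v := by ext1 α; simp

lemma fb_apply (i : κ) (v : (κ → ℕ) → W) (α) : fb W i v α = √(α i + 1) • v (up i α) := rfl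
lemma fb'_apply (i : κ) (v : (κ → ℕ) → W) (α) : fb' W i v α = √(α i) • v (dn i α) := rfl
lemma fc_apply (m : W →L[ℝ] W) (v : (κ → ℕ) → W) (α) : fc κ m v α = m (v α) := rfl

lemma fb_num (i : κ) (v : (κ → ℕ) → W) (α) : (fb' W i * fb W i) v α = (α i : ℝ) • v α := by
  rw [Module.End.mul_apply, fb'_apply, fb_apply, smul_smul]
  by_cases h : α i = 0
  · simp [h]
  · rw [up_dn i α h, dn_same]
    have : (((α i - 1 : ℕ) : ℝ) + 1) = α i := by
      have : α i - 1 + 1 = α i := by omega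
      exact_mod_cast this
    rw [this, Real.mul_self_sqrt (by positivity)]

lemma osc_formal [CompleteSpace W] {M : κ → W →L[ℝ] W}
    (hMM : ∀ i j, M i * M j + M j * M i = 0)
    (hNN : ∀ i j, star (M i) * star (M j) + star (M j) * star (M i) = 0)
    (hMN : ∀ i j, M i * star (M j) + star (M j) * M i = if i = j then 4 else 0)
    (v : (κ → ℕ) → W)
    (hv : ∀ α, ∑ i, (√(α i + 1) • M i (v (up i α)) + √(α i) • star (M i) (v (dn i α))) = 0)
    (α : κ → ℕ) : (4 * (deg α : ℝ)) • v α + ∑ i, M i (star (M i) (v α)) = 0 := by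
  have hmul : ∀ m n : W →L[ℝ] W, fc κ m * fc κ n = fc κ (m * n) := fun m n => rfl
  have hadd : ∀ m n : W →L[ℝ] W, fc κ m + fc κ n = fc κ (m + n) := fun m n => rfl
  have key := osc_sq (fun i => fc κ (M i)) (fun i => fc κ (star (M i))) (fb W) (fb' W) ?_ ?_ ?_ ?_ ?_ ?_ ?_ ?_
    ?_ ?_ ?_
  · have h1 : (∑ i, (fc κ (M i) * fb W i + fc κ (star (M i)) * fb' W i)) v = 0 := by
      ext1 β
      rw [LinearMap.sum_apply, Finset.sum_apply]
      simp only [LinearMap.add_apply, Module.End.mul_apply, Pi.add_apply, fc_apply, fb_apply, fb'_apply,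
        map_smul]
      exact hv β
    have h2 := congrFun (DFunLike.congr_fun key v) α
    rw [Module.End.mul_apply, h1, map_zero, LinearMap.sum_apply, Finset.sum_apply] at h2
    simp only [LinearMap.add_apply, Pi.add_apply, hmul, fc_apply] at h2
    rw [Finset.sum_add_distrib] at h2
    rw [Pi.zero_apply] at h2
    rw [h2]
    congr 1
    have h4 : ∀ i : κ, ((4 : Module.End ℝ ((κ → ℕ) → W)) * (fb' W i * fb W i)) v α = (4 * (α i : ℝ)) • v α := by
      intro i
      have : (4 : Module.End ℝ ((κ → ℕ) → W)) = (4 : ℝ) • 1 := by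
        have := (Algebra.algebraMap_eq_smul_one (A := Module.End ℝ ((κ → ℕ) → W)) (4 : ℝ))
        rw [← this]; exact (map_ofNat (algebraMap ℝ _) 4).symm
      rw [this, smul_mul_assoc, one_mul, LinearMap.smul_apply, Pi.smul_apply, fb_num, smul_smul]
    simp only [h4]
    rw [← Finset.sum_smul, ← Finset.mul_sum, deg]
    push_cast; rfl
  · intro r hr
    have : (2 : ℝ) • r = 0 := by rw [two_smul, hr]
    exact (smul_eq_zero.1 this).resolve_left two_ne_zero
  · intro i j; rw [hmul, hmul, hadd, hMM]; rfl
  · intro i j; rw [hmul, hmul, hadd, hNN]; rfl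
  · intro i j; rw [hmul, hmul, hadd, hMN]
    split_ifs
    · rfl
    · rfl
  · intro i j; ext1 v; ext1 α; simp [fc_apply, fb_apply]
  · intro i j; ext1 v; ext1 α; simp [fc_apply, fb'_apply]
  · intro i j; ext1 v; ext1 α; simp [fc_apply, fb_apply]
  · intro i j; ext1 v; ext1 α; simp [fc_apply, fb'_apply]
  · intro i j
    by_cases h : i = j
    · rw [h]
    ext1 v; ext1 α
    simp only [Module.End.mul_apply, fb_apply, smul_smul, up_ne h, up_ne (Ne.symm h), up_up i j]
    rw [mul_comm]
  · intro i j
    by_cases h : i = j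
    · rw [h]
    ext1 v; ext1 α
    simp only [Module.End.mul_apply, fb'_apply, smul_smul, dn_ne h, dn_ne (Ne.symm h), dn_dn i j]
    rw [mul_comm]
  · intro i j
    by_cases h : i = j
    · subst h
      ext1 v; ext1 α
      rw [if_pos rfl, LinearMap.add_apply, Pi.add_apply, fb_num]
      simp only [Module.End.mul_apply, fb_apply, fb'_apply, smul_smul, dn_up, up_same,
        Module.End.one_apply]
      push_cast
      rw [Real.mul_self_sqrt (by positivity), add_smul, one_smul]
    · rw [if_neg h, add_zero]
      ext1 v; ext1 α
      simp only [Module.End.mul_apply, fb_apply, fb'_apply, smul_smul, dn_ne h, up_ne (Ne.symm h),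
        up_dn_comm h]
      rw [mul_comm]

/-- scaling weights -/
noncomputable def gw : ℕ → ℝ
  | 0 => 1
  | n + 1 => 1 / (gw n * √(n + 1))
lemma gw_pos : ∀ n, 0 < gw n
  | 0 => one_pos
  | n + 1 => by have := gw_pos n; rw [gw]; positivity
lemma gw_mul (n : ℕ) : gw n * gw (n + 1) = 1 / √(n + 1) := by
  have := gw_pos n
  rw [gw]; field_simp

lemma osc_ker [CompleteSpace W] {M : κ → W →L[ℝ] W}
    (hMM : ∀ i j, M i * M j + M j * M i = 0)
    (hNN : ∀ i j, star (M i) * star (M j) + star (M j) * star (M i) = 0)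
    (hMN : ∀ i j, M i * star (M j) + star (M j) * M i = if i = j then 4 else 0)
    (u : L2 (κ → ℕ) W) :
    Sop M u = 0 ↔ (∀ α, α ≠ 0 → ev α u = 0) ∧ ∀ i, star (M i) (ev 0 u) = 0 := by
  constructor
  · intro h
    have h1 := osc_formal hMM hNN hMN (fun α => gw (deg α) • ev α u) ?_
    · have h2 : ∀ α, 4 * (deg α : ℝ) * ‖ev α u‖ ^ 2 + ∑ i, ‖star (M i) (ev α u)‖ ^ 2 = 0 := by
        intro α
        have h3 := h1 α
        have hg := (gw_pos (deg α)).ne'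
        simp only [map_smul] at h3
        rw [← Finset.smul_sum, smul_comm, ← smul_add, smul_eq_zero] at h3
        replace h3 := h3.resolve_left hg
        have h4 : inner ℝ (ev α u) ((4 * (deg α : ℝ)) • ev α u + ∑ i, M i (star (M i) (ev α u))) = 0 := by
          rw [h3, inner_zero_right]
        rw [inner_add_right, inner_smul_right, inner_sum, real_inner_self_eq_norm_sq] at h4
        rw [← h4]
        congr 1
        refine Finset.sum_congr rfl fun i _ => ?_
        rw [ContinuousLinearMap.star_eq_adjoint, ← ContinuousLinearMap.adjoint_inner_left,
          real_inner_self_eq_norm_sq]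
      have hs : ∀ α, 0 ≤ ∑ i, ‖star (M i) (ev α u)‖ ^ 2 := fun α => Finset.sum_nonneg fun i _ => sq_nonneg _
      refine ⟨fun α hα => ?_, fun i => ?_⟩
      · have hd : 0 < deg α := by
          rw [Nat.pos_iff_ne_zero]; intro h0; apply hα; ext i
          have := le_deg i α; simp; omega
        have hd' : (0 : ℝ) < deg α := by exact_mod_cast hd
        have h5 : ‖ev α u‖ ^ 2 = 0 := by
          have := h2 α; have := hs α
          have h6 := sq_nonneg ‖ev α u‖
          by_contra hne
          have h7 : 0 < ‖ev α u‖ ^ 2 := lt_of_le_of_ne h6 (Ne.symm hne)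
          have : 0 < 4 * (deg α : ℝ) * ‖ev α u‖ ^ 2 := by positivity
          linarith
        exact norm_eq_zero.1 (pow_eq_zero_iff (two_ne_zero) |>.1 h5)
      · have := h2 0
        have hd : deg (0 : κ → ℕ) = 0 := by simp [deg]
        rw [hd] at this
        simp only [Nat.cast_zero, mul_zero, zero_mul, zero_add] at this
        rw [Finset.sum_eq_zero_iff_of_nonneg (fun i _ => sq_nonneg _)] at this
        exact norm_eq_zero.1 (pow_eq_zero_iff (two_ne_zero) |>.1 (this i (Finset.mem_univ _)))
    · intro α
      have h3 : ev α (Sop M u) = 0 := by rw [h, map_zero]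
      rw [ev_Sop] at h3
      have h4 : (gw (deg α))⁻¹ • ∑ i, (sw i α • M i (ev (up i α) u) + sd i α • star (M i) (ev (dn i α) u)) = 0 := by
        rw [h3, smul_zero]
      rw [← h4, Finset.smul_sum]
      refine Finset.sum_congr rfl fun i _ => ?_
      simp only [map_smul, smul_add, smul_smul]
      congr 2
      · rw [deg_up, sw, Real.sqrt_div (by positivity)]
        have := gw_mul (deg α)
        have h1 := gw_pos (deg α + 1)
        have h2 := gw_pos (deg α)
        have h5 : gw (deg α + 1) = 1 / (gw (deg α) * √(deg α + 1)) := rfl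
        rw [h5]; field_simp
      · rw [sd, Real.sqrt_div (by positivity)]
        by_cases hi : α i = 0
        · simp [hi]
        · have h6 := deg_dn i α hi
          rw [← h6]
          have h5 : gw (deg (dn i α) + 1) = 1 / (gw (deg (dn i α)) * √(deg (dn i α) + 1)) := rfl
          have h2 := gw_pos (deg (dn i α))
          rw [h5]; push_cast; field_simp
  · rintro ⟨h1, h2⟩
    refine L2.ext fun α => ?_
    rw [ev_Sop, map_zero]
    refine Finset.sum_eq_zero fun i _ => ?_
    have h3 : ev (up i α) u = 0 := h1 _ (fun h => by
      have := congrFun h i; rw [up_same] at this; simp at this)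
    rw [h3, map_zero, smul_zero, zero_add]
    by_cases hz : dn i α = 0
    · rw [hz, h2, smul_zero]
    · rw [h1 _ hz, map_zero, smul_zero]

/-- dimension of a joint kernel of fermionic operators -/
lemma ferm_dim {V : Type*} [AddCommGroup V] [Module ℝ V] [FiniteDimensional ℝ V]
    (a b : κ → V →ₗ[ℝ] V) (hbb : ∀ i j x, b i (b j x) + b j (b i x) = 0)
    (hab : ∀ i j x, a i (b j x) + b j (a i x) = if i = j then x else 0) (s : Finset κ) :
    finrank ℝ (⨅ i ∈ s, LinearMap.ker (b i) : Submodule ℝ V) * 2 ^ s.card = finrank ℝ V := by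
  induction s using Finset.induction_on with
  | empty =>
    have : (⨅ i ∈ (∅ : Finset κ), LinearMap.ker (b i) : Submodule ℝ V) = ⊤ := by simp
    rw [this, finrank_top]; simp
  | insert j s hj ih =>
    rw [Finset.card_insert_of_notMem hj]
    obtain ⟨K, hK⟩ : ∃ K : Submodule ℝ V, K = ⨅ i ∈ s, LinearMap.ker (b i) := ⟨_, rfl⟩
    rw [← hK] at ih
    have mK : ∀ x, x ∈ K ↔ ∀ i ∈ s, b i x = 0 := by
      intro x; rw [hK]; simp [Submodule.mem_iInf]
    have hbK : ∀ x ∈ K, b j x ∈ K := by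
      intro x hx; rw [mK] at hx ⊢
      intro i hi
      have := hbb i j x
      rwa [hx i hi, map_zero, add_zero] at this
    have haK : ∀ x ∈ K, a j x ∈ K := by
      intro x hx; rw [mK] at hx ⊢
      intro i hi
      have := hab j i x
      rw [if_neg (by rintro rfl; exact hj hi)] at this
      rwa [hx i hi, map_zero, zero_add] at this
    let bj : K →ₗ[ℝ] K := (b j).restrict hbK
    have hrk : LinearMap.range bj = LinearMap.ker bj := by
      ext ⟨x, hx⟩
      rw [LinearMap.mem_range, LinearMap.mem_ker]
      constructor
      · rintro ⟨⟨y, hy⟩, h⟩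
        have h1 : b j y = x := congrArg Subtype.val h
        apply Subtype.ext
        change b j x = 0
        rw [← h1]
        have := hbb j j y
        have h2 : (2 : ℝ) • b j (b j y) = 0 := by rw [two_smul, this]
        exact (smul_eq_zero.1 h2).resolve_left two_ne_zero
      · intro h
        have h1 : b j x = 0 := congrArg Subtype.val h
        refine ⟨⟨a j x, haK x hx⟩, Subtype.ext ?_⟩
        change b j (a j x) = x
        have := hab j j x
        rwa [h1, map_zero, zero_add, if_pos rfl] at this
    have h1 := LinearMap.finrank_range_add_finrank_ker bj
    rw [hrk] at h1
    have h2 : finrank ℝ (LinearMap.ker bj) = finrank ℝ (⨅ i ∈ insert j s, LinearMap.ker (b i) : Submodule ℝ V) := by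
      have : (⨅ i ∈ insert j s, LinearMap.ker (b i) : Submodule ℝ V) = (LinearMap.ker bj).map K.subtype := by
        ext x
        rw [Submodule.mem_map]
        constructor
        · intro hx
          simp only [Submodule.mem_iInf, Finset.mem_insert, LinearMap.mem_ker] at hx
          exact ⟨⟨x, (mK x).2 fun i hi => hx i (Or.inr hi)⟩, Subtype.ext (hx j (Or.inl rfl)), rfl⟩
        · rintro ⟨⟨y, hy⟩, h1, rfl⟩
          simp only [Submodule.mem_iInf, Finset.mem_insert, LinearMap.mem_ker]
          rintro i (rfl | hi)
          · exact congrArg Subtype.val h1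
          · exact (mK y).1 hy i hi
      rw [this]
      exact (LinearEquiv.finrank_eq (Submodule.equivMapOfInjective K.subtype K.injective_subtype _))
    rw [← h2, ← ih, ← h1, pow_succ]; ring

theorem osc_ind [CompleteSpace W] [FiniteDimensional ℝ W] {M : κ → W →L[ℝ] W}
    (hMM : ∀ i j, M i * M j + M j * M i = 0)
    (hNN : ∀ i j, star (M i) * star (M j) + star (M j) * star (M i) = 0)
    (hMN : ∀ i j, M i * star (M j) + star (M j) * M i = if i = j then 4 else 0) :
    ind (Sop M) Pop * 2 ^ (Fintype.card κ) = finrank ℝ W := by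
  have hk := osc_ker hMM hNN hMN
  have hd : deg (0 : κ → ℕ) = 0 := by simp [deg]
  have hm : kp (Sop M) Pop (-1) = ⊥ := by
    rw [eq_bot_iff]
    rintro u ⟨h1, h2⟩
    rw [hk] at h1
    rw [Submodule.mem_bot]
    refine L2.ext fun α => ?_
    by_cases hα : α = 0
    · subst hα
      have := congrArg (ev 0) h2
      rw [ev_Pop, hd, pow_zero, one_smul, map_smul] at this
      have h3 : (2 : ℝ) • ev (0 : κ → ℕ) u = 0 := by
        rw [two_smul]; nth_rewrite 1 [this]; simp
      rw [map_zero]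
      exact (smul_eq_zero.1 h3).resolve_left two_ne_zero
    · rw [h1.1 α hα, map_zero]
  have hp : finrank ℝ (kp (Sop M) Pop 1)
      = finrank ℝ (⨅ i ∈ (Finset.univ : Finset κ), LinearMap.ker (star (M i) : W →L[ℝ] W).toLinearMap : Submodule ℝ W) := by
    have mK : ∀ x, x ∈ (⨅ i ∈ (Finset.univ : Finset κ), LinearMap.ker (star (M i) : W →L[ℝ] W).toLinearMap : Submodule ℝ W)
      ↔ ∀ i, star (M i) x = 0 := by
      intro x; simp [Submodule.mem_iInf]
    have e : kp (Sop M) Pop 1 = Submodule.map (sg (0 : κ → ℕ)) (⨅ i ∈ (Finset.univ : Finset κ), LinearMap.ker (star (M i) : W →L[ℝ] W).toLinearMap : Submodule ℝ W) := by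
      ext u
      rw [Submodule.mem_map, mem_kp, hk]
      constructor
      · rintro ⟨⟨h1, h2⟩, -⟩
        refine ⟨ev 0 u, (mK _).2 h2, L2.ext fun α => ?_⟩
        rw [ev_sg]
        split_ifs with h
        · rw [h]
        · rw [h1 α h]
      · rintro ⟨x, hx, rfl⟩
        rw [mK] at hx
        refine ⟨⟨fun α hα => by rw [ev_sg, if_neg hα], fun i => by rw [ev_sg, if_pos rfl, hx]⟩, ?_⟩
        refine L2.ext fun α => ?_
        rw [one_smul, ev_Pop, ev_sg]
        split_ifs with h
        · rw [h, hd, pow_zero, one_smul]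
        · simp
    rw [e]
    refine (LinearEquiv.finrank_eq (Submodule.equivMapOfInjective _ ?_ _)).symm
    intro x y hxy
    have := congrArg (ev 0) hxy
    simpa [ev_sg] using this
  have hdim := ferm_dim (fun i => ((4 : ℝ)⁻¹ • M i).toLinearMap) (fun i => (star (M i) : W →L[ℝ] W).toLinearMap)
    ?_ ?_ (Finset.univ : Finset κ)
  · rw [ind, hm, finrank_bot, hp, ← hdim, Finset.card_univ]
    push_cast; ring
  · intro i j x; exact DFunLike.congr_fun (hNN i j) x
  · intro i j x
    have h1 := DFunLike.congr_fun (hMN i j) x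
    change (4 : ℝ)⁻¹ • M i (star (M j) x) + star (M j) ((4 : ℝ)⁻¹ • M i x) = _
    rw [map_smul, ← smul_add]
    have h2 : M i (star (M j) x) + star (M j) (M i x) = (if i = j then (4 : W →L[ℝ] W) else 0) x := h1
    rw [h2]
    split_ifs
    · have : (4 : W →L[ℝ] W) = (4 : ℝ) • 1 := by
        rw [← Algebra.algebraMap_eq_smul_one]; exact (map_ofNat (algebraMap ℝ _) 4).symm
      rw [this]; simp
    · simp
end C1
end HR

namespace HR
set_option linter.unusedSectionVars false
set_option linter.deprecated false
set_option linter.unusedVariables false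
open Module
section C2
variable {κ : Type*} [Fintype κ] [DecidableEq κ] {W W' : Type*} [NormedAddCommGroup W]
  [InnerProductSpace ℝ W] [CompleteSpace W] [NormedAddCommGroup W']
  [InnerProductSpace ℝ W'] [CompleteSpace W']

lemma Sop_comm (p : W' →L[ℝ] W) (M : κ → W →L[ℝ] W) (M' : κ → W' →L[ℝ] W') (r : ℝ)
    (h1 : ∀ i y, p (M' i y) = r • M i (p y)) (h2 : ∀ i y, p (star (M' i) y) = r • star (M i) (p y))
    (u : L2 (κ → ℕ) W') : cw p (Sop M' u) = r • Sop M (cw p u) := by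
  refine L2.ext fun α => ?_
  rw [ev_cw, ev_Sop, map_smul, ev_Sop, map_sum, Finset.smul_sum]
  refine Finset.sum_congr rfl fun i _ => ?_
  rw [map_add, map_smul, map_smul, h1, h2, ev_cw, ev_cw, smul_add, smul_comm r, smul_comm r]

lemma Pop_comm (p : W' →L[ℝ] W) (u : L2 (κ → ℕ) W') : cw p (Pop u) = Pop (cw p u) := by
  refine L2.ext fun α => ?_
  rw [ev_cw, ev_Pop, ev_Pop, map_smul, ev_cw]

lemma kp_finite {X : Type*} [NormedAddCommGroup X] [InnerProductSpace ℝ X] {S P : X →L[ℝ] X} (h : Fred S)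
    (ε : ℝ) : FiniteDimensional ℝ (kp S P ε) := by
  have := h.finite_ker
  exact Submodule.finiteDimensional_of_le (show kp S P ε ≤ LinearMap.ker (S : X →ₗ[ℝ] X) from fun u hu => hu.1)

lemma ind_mult {F : Type*} [Fintype F] [DecidableEq F] (p : F → W' →L[ℝ] W) (q : F → W →L[ℝ] W')
    (hpq : ∀ f g x, p f (q g x) = if f = g then x else 0) (hqp : ∀ y, ∑ f, q f (p f y) = y)
    (η : F → ℝ) (hη : ∀ f, η f ≠ 0) (M : κ → W →L[ℝ] W) (M' : κ → W' →L[ℝ] W')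
    (h1 : ∀ f i y, p f (M' i y) = η f • M i (p f y))
    (h2 : ∀ f i y, p f (star (M' i) y) = η f • star (M i) (p f y)) (hF : Fred (Sop M)) :
    ind (Sop M') Pop = Fintype.card F * ind (Sop M) Pop := by
  have inj : ∀ u v : L2 (κ → ℕ) W', (∀ f, cw (p f) u = cw (p f) v) → u = v := by
    intro u v h
    refine L2.ext fun α => ?_
    rw [← hqp (ev α u), ← hqp (ev α v)]
    refine Finset.sum_congr rfl fun f _ => ?_
    have := congrArg (ev α) (h f)
    rw [ev_cw, ev_cw] at this
    rw [this]
  have key : ∀ (ε : ℝ) u, u ∈ kp (Sop M') Pop ε ↔ ∀ f, cw (p f) u ∈ kp (Sop M) Pop ε := by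
    intro ε u
    simp only [mem_kp]
    constructor
    · rintro ⟨h3, h4⟩ f
      constructor
      · have := Sop_comm (p f) M M' (η f) (h1 f) (h2 f) u
        rw [h3, map_zero] at this
        exact (smul_eq_zero.1 this.symm).resolve_left (hη f)
      · rw [← Pop_comm, h4, map_smul]
    · intro h
      constructor
      · refine inj _ _ fun f => ?_
        rw [Sop_comm (p f) M M' (η f) (h1 f) (h2 f) u, (h f).1, smul_zero, map_zero]
      · refine inj _ _ fun f => ?_
        rw [Pop_comm, (h f).2, map_smul]
  have hfin : ∀ ε : ℝ, finrank ℝ (kp (Sop M') Pop ε) = Fintype.card F * finrank ℝ (kp (Sop M) Pop ε) := by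
    intro ε
    have := kp_finite (P := Pop) hF ε
    let φ : kp (Sop M') Pop ε →ₗ[ℝ] (F → kp (Sop M) Pop ε) :=
      LinearMap.pi fun f => ((cw (p f)).toLinearMap.comp (kp (Sop M') Pop ε).subtype).codRestrict _
        (fun u => (key ε u.1).1 u.2 f)
    have hφ : ∀ u f, ((φ u f : kp (Sop M) Pop ε) : L2 (κ → ℕ) W) = cw (p f) u.1 := fun u f => rfl
    have hb : Function.Bijective φ := by
      constructor
      · intro u v h
        apply Subtype.ext
        refine inj _ _ fun f => ?_
        rw [← hφ, ← hφ, h]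
      · intro z
        have hz : ∀ f, cw (p f) (∑ g, (cw (q g) : L2 (κ → ℕ) W →L[ℝ] L2 (κ → ℕ) W') (z g).1) = (z f).1 := by
          intro f
          refine L2.ext fun α => ?_
          rw [ev_cw, map_sum, map_sum]
          simp only [ev_cw, hpq]
          simp
        refine ⟨⟨∑ g, (cw (q g) : L2 (κ → ℕ) W →L[ℝ] L2 (κ → ℕ) W') (z g).1, (key ε _).2 fun f => ?_⟩, ?_⟩
        · rw [hz]; exact (z f).2
        · ext1 f; apply Subtype.ext; rw [hφ, hz]
    rw [(LinearEquiv.ofBijective φ hb).finrank_eq, finrank_pi_fintype]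
    simp
  rw [ind, ind, hfin, hfin]
  push_cast; ring

lemma cw_smul (r : ℝ) (m : W →L[ℝ] W) :
    (cw (r • m) : L2 (κ → ℕ) W →L[ℝ] L2 (κ → ℕ) W) = r • cw m := by
  ext1 u; refine L2.ext fun α => ?_
  simp only [ev_cw, _root_.smul_apply, map_smul]

lemma Sop_affine (M N : κ → W →L[ℝ] W) (t : ℝ) :
    Sop (fun i => M i + t • N i) = Sop M + t • Sop N := by
  ext1 u; refine L2.ext fun α => ?_
  rw [_root_.add_apply, _root_.smul_apply, map_add, map_smul, ev_Sop, ev_Sop, ev_Sop, Finset.smul_sum,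
    ← Finset.sum_add_distrib]
  refine Finset.sum_congr rfl fun i _ => ?_
  rw [star_add, star_smul]
  simp only [_root_.add_apply, _root_.smul_apply, star_trivial, smul_add]
  rw [smul_comm t, smul_comm t]
  abel

variable {w : Type*} [Fintype w] [DecidableEq w]
open Matrix Kronecker

/-- Clifford type data, matrix form -/
structure MCl (B e : κ → Matrix w w ℝ) : Prop where
  Bs : ∀ i, (B i)ᵀ = B i
  es : ∀ i, (e i)ᵀ = - e i
  ee : ∀ i j, e i * e j + e j * e i = if i = j then -2 else 0
  Be : ∀ i j, e j * B i = - (B i * e j)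
  pos : ∀ χ : κ → ℝ, χ ≠ 0 → ∀ v, (∑ i, χ i • B i) *ᵥ v = 0 → v = 0

/-- matrices as operators -/
noncomputable abbrev TT (M : Matrix w w ℝ) : EuclideanSpace ℝ w →L[ℝ] EuclideanSpace ℝ w :=
  Matrix.toEuclideanCLM (𝕜 := ℝ) M

lemma TT_star (M : Matrix w w ℝ) : star (TT M) = TT Mᵀ := by
  rw [TT, ← map_star, Matrix.star_eq_conjTranspose, Matrix.conjTranspose_eq_transpose_of_trivial]

lemma TT_apply (M : Matrix w w ℝ) (v : EuclideanSpace ℝ w) (a : w) :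
    TT M v a = (M *ᵥ v.ofLp) a := rfl

lemma MCl.toCl {B e : κ → Matrix w w ℝ} (h : MCl B e) :
    ∃ c, Cl (fun i => TT (B i)) (fun i => TT (e i)) c := by
  let φ : EuclideanSpace ℝ κ × EuclideanSpace ℝ w → ℝ := fun z => ‖∑ i, z.1 i • TT (B i) z.2‖ ^ 2
  have hφ : Continuous φ := by
    show Continuous (fun z : EuclideanSpace ℝ κ × EuclideanSpace ℝ w => ‖∑ i, z.1 i • TT (B i) z.2‖ ^ 2)
    fun_prop
  have hpos : ∀ z : EuclideanSpace ℝ κ × EuclideanSpace ℝ w, z.1 ≠ 0 → z.2 ≠ 0 → 0 < φ z := by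
    rintro ⟨x, v⟩ hx hv
    have : (∑ i, x i • TT (B i) v) ≠ 0 := by
      intro h0
      apply hv
      have h1 := h.pos x.ofLp (fun h => hx (by ext i; exact congrFun h i)) v.ofLp ?_
      · ext i; exact congrFun h1 i
      · ext a
        have h2 : (∑ i, x i • TT (B i) v) a = 0 := by rw [h0]; rfl
        rw [← show TT (∑ i, x.ofLp i • B i) v a = ((∑ i, x.ofLp i • B i) *ᵥ v.ofLp) a from rfl]
        rw [Pi.zero_apply, ← h2, TT, map_sum]
        simp
    have := norm_pos_iff.2 this
    positivity
  have hc : ∃ c, 0 < c ∧ ∀ z : EuclideanSpace ℝ κ × EuclideanSpace ℝ w, ‖z.1‖ = 1 → ‖z.2‖ = 1 → c ≤ φ z := by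
    have hK : IsCompact ((Metric.sphere (0 : EuclideanSpace ℝ κ) 1) ×ˢ (Metric.sphere (0 : EuclideanSpace ℝ w) 1)) :=
      (isCompact_sphere _ _).prod (isCompact_sphere _ _)
    rcases Set.eq_empty_or_nonempty ((Metric.sphere (0 : EuclideanSpace ℝ κ) 1) ×ˢ (Metric.sphere (0 : EuclideanSpace ℝ w) 1)) with he | hne
    · refine ⟨1, one_pos, fun z h1 h2 => ?_⟩
      have : z ∈ (Metric.sphere (0 : EuclideanSpace ℝ κ) 1) ×ˢ (Metric.sphere (0 : EuclideanSpace ℝ w) 1) :=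
        ⟨by simpa using h1, by simpa using h2⟩
      rw [he] at this; exact this.elim
    · obtain ⟨z0, hz0, hmin⟩ := hK.exists_isMinOn hne hφ.continuousOn
      have n1 : ‖z0.1‖ = 1 := by simpa using hz0.1
      have n2 : ‖z0.2‖ = 1 := by simpa using hz0.2
      refine ⟨φ z0, hpos _ ?_ ?_, fun z h1 h2 => hmin ⟨by simpa using h1, by simpa using h2⟩⟩
      · intro h; rw [h] at n1; simp at n1
      · intro h; rw [h] at n2; simp at n2
  obtain ⟨c, hc0, hc⟩ := hc
  have hm : ∀ M N : Matrix w w ℝ, TT M * TT N = TT (M * N) := fun M N => (map_mul _ _ _).symm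
  refine ⟨min c 1, ⟨lt_min hc0 one_pos, min_le_right _ _, fun i => ?_, fun i => ?_, fun i j => ?_, fun i j => ?_, ?_⟩⟩
  · rw [TT_star, h.Bs]
  · rw [TT_star, h.es, TT, map_neg]
  · rw [hm, hm, TT, TT, ← map_add, h.ee]
    split_ifs
    · rw [map_neg]; congr 1; exact map_ofNat _ 2
    · exact map_zero _
  · rw [hm, hm, TT, TT, ← map_neg, h.Be]
  · intro χ v
    set x : EuclideanSpace ℝ κ := WithLp.toLp 2 χ with hx
    have hxn : ‖x‖ ^ 2 = ∑ i, χ i ^ 2 := by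
      rw [EuclideanSpace.norm_sq_eq]; simp [hx]
    rw [← hxn]
    by_cases hx0 : ‖x‖ = 0
    · rw [hx0]; simp
    by_cases hv0 : ‖v‖ = 0
    · rw [hv0]; simp
    have h1 := hc (‖x‖⁻¹ • x, ‖v‖⁻¹ • v) (by simp [norm_smul, hx0]) (by simp [norm_smul, hv0])
    have h2 : φ (‖x‖⁻¹ • x, ‖v‖⁻¹ • v) = (‖x‖⁻¹ * ‖v‖⁻¹) ^ 2 * ‖∑ i, χ i • TT (B i) v‖ ^ 2 := by
      have : ∑ i, (‖x‖⁻¹ • x) i • TT (B i) (‖v‖⁻¹ • v) = (‖x‖⁻¹ * ‖v‖⁻¹) • ∑ i, χ i • TT (B i) v := by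
        rw [Finset.smul_sum]
        refine Finset.sum_congr rfl fun i _ => ?_
        rw [map_smul]
        simp only [PiLp.smul_apply, smul_smul, hx, smul_eq_mul]
        congr 1; ring
      change ‖∑ i, (‖x‖⁻¹ • x) i • TT (B i) (‖v‖⁻¹ • v)‖ ^ 2 = _
      rw [this, norm_smul, mul_pow, Real.norm_eq_abs, sq_abs]
    rw [h2] at h1
    have h3 : min c 1 ≤ c := min_le_left _ _
    have px : 0 < ‖x‖ := lt_of_le_of_ne (norm_nonneg _) (Ne.symm hx0)
    have pv : 0 < ‖v‖ := lt_of_le_of_ne (norm_nonneg _) (Ne.symm hv0)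
    calc min c 1 * ‖x‖ ^ 2 * ‖v‖ ^ 2 = min c 1 * (‖x‖ ^ 2 * ‖v‖ ^ 2) := by ring
      _ ≤ ((‖x‖⁻¹ * ‖v‖⁻¹) ^ 2 * ‖∑ i, χ i • TT (B i) v‖ ^ 2) * (‖x‖ ^ 2 * ‖v‖ ^ 2) :=
          mul_le_mul_of_nonneg_right (h3.trans h1) (by positivity)
      _ = _ := by field_simp

lemma MCl.fred [Nonempty κ] {B e : κ → Matrix w w ℝ} (h : MCl B e) :
    Fred (Sop (fun i => TT (B i + e i))) := by
  obtain ⟨c, hc⟩ := h.toCl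
  have := hc.fred
  simpa only [TT, map_add] using this
end C2
end HR

namespace HR
set_option linter.unusedSectionVars false
set_option linter.deprecated false
set_option linter.unusedVariables false
open Module
section C3
open Matrix Kronecker
variable {κ : Type*} [Fintype κ] [DecidableEq κ]

/-- Fock type data -/
structure FD {F : Type*} [Fintype F] [DecidableEq F] (h : F → ℝ) (c : κ → Matrix F F ℝ) : Prop where
  hh : ∀ f, h f * h f = 1
  cs : ∀ i, (c i)ᵀ = c i
  cc : ∀ i j, c i * c j + c j * c i = if i = j then 2 else 0
  hc : ∀ i, diagonal h * c i = - (c i * diagonal h)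

lemma kneg_left {l m : Type*} [Fintype l] [Fintype m] (A : Matrix l l ℝ) (B : Matrix m m ℝ) :
    (-A) ⊗ₖ B = -(A ⊗ₖ B) := by ext ⟨a, b⟩ ⟨c, d⟩; simp [kroneckerMap_apply]
lemma kneg_right {l m : Type*} [Fintype l] [Fintype m] (A : Matrix l l ℝ) (B : Matrix m m ℝ) :
    A ⊗ₖ (-B) = -(A ⊗ₖ B) := by ext ⟨a, b⟩ ⟨c, d⟩; simp [kroneckerMap_apply]
lemma kmul {l m : Type*} [Fintype l] [Fintype m] (A A' : Matrix l l ℝ) (B B' : Matrix m m ℝ) :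
    (A ⊗ₖ B) * (A' ⊗ₖ B') = (A * A') ⊗ₖ (B * B') := (mul_kronecker_mul _ _ _ _).symm
lemma kT {l m : Type*} [Fintype l] [Fintype m] (A : Matrix l l ℝ) (B : Matrix m m ℝ) :
    (A ⊗ₖ B)ᵀ = Aᵀ ⊗ₖ Bᵀ := by ext ⟨a, b⟩ ⟨c, d⟩; simp [kroneckerMap_apply]
lemma kone {l m : Type*} [Fintype l] [Fintype m] [DecidableEq l] [DecidableEq m] :
    (1 : Matrix l l ℝ) ⊗ₖ (1 : Matrix m m ℝ) = 1 := one_kronecker_one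
lemma two_k {l m : Type*} [Fintype l] [Fintype m] [DecidableEq l] [DecidableEq m] :
    (2 : Matrix l l ℝ) ⊗ₖ (1 : Matrix m m ℝ) = 2 := by
  rw [← one_add_one_eq_two, add_kronecker, kone, one_add_one_eq_two]
lemma k_two {l m : Type*} [Fintype l] [Fintype m] [DecidableEq l] [DecidableEq m] :
    (1 : Matrix l l ℝ) ⊗ₖ (2 : Matrix m m ℝ) = 2 := by
  rw [← one_add_one_eq_two, kronecker_add, kone, one_add_one_eq_two]

lemma FD.exists_fin : ∀ k : ℕ, ∃ (F : Type) (_ : Fintype F) (_ : DecidableEq F) (_ : Nonempty F)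
    (h : F → ℝ) (c : Fin k → Matrix F F ℝ), FD h c
  | 0 => ⟨Unit, inferInstance, inferInstance, inferInstance, fun _ => 1, fun i => i.elim0,
      ⟨fun _ => by norm_num, fun i => i.elim0, fun i => i.elim0, fun i => i.elim0⟩⟩
  | k + 1 => by
    obtain ⟨F, _, _, _, h, c, H⟩ := FD.exists_fin k
    let X : Matrix (Fin 2) (Fin 2) ℝ := !![0, 1; 1, 0]
    let z : Fin 2 → ℝ := ![1, -1]
    have XX : X * X = 1 := by ext i j; fin_cases i <;> fin_cases j <;> simp [X, Matrix.mul_apply]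
    have Xt : Xᵀ = X := by ext i j; fin_cases i <;> fin_cases j <;> simp [X]
    have Xz : diagonal z * X = -(X * diagonal z) := by
      ext i j
      rw [neg_apply, diagonal_mul, mul_diagonal]
      fin_cases i <;> fin_cases j <;> simp [X, z]
    have hd : diagonal (fun f : F × Fin 2 => h f.1 * z f.2) = diagonal h ⊗ₖ diagonal z := by
      rw [diagonal_kronecker_diagonal]
    have hd2 : diagonal h * diagonal h = 1 := by
      rw [diagonal_mul_diagonal, ← diagonal_one]; congr 1; ext f; exact H.hh f
    refine ⟨F × Fin 2, inferInstance, inferInstance, inferInstance, fun f => h f.1 * z f.2,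
      Fin.cons (diagonal h ⊗ₖ X) (fun i => c i ⊗ₖ 1), ⟨?_, ?_, ?_, ?_⟩⟩
    · rintro ⟨f, b⟩
      have : z b * z b = 1 := by fin_cases b <;> simp [z]
      linear_combination (z b * z b) * H.hh f + this
    · intro i
      refine Fin.cases ?_ (fun i => ?_) i
      · simp only [Fin.cons_zero]; rw [kT, Xt, diagonal_transpose]
      · simp only [Fin.cons_succ]; rw [kT, H.cs, transpose_one]
    · intro i j
      refine Fin.cases ?_ (fun i => ?_) i <;> refine Fin.cases ?_ (fun j => ?_) j
      · simp only [Fin.cons_zero, if_true]; rw [kmul, XX, hd2, kone, one_add_one_eq_two]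
      · simp only [Fin.cons_zero, Fin.cons_succ]
        rw [if_neg (Fin.succ_ne_zero j).symm, kmul, kmul, H.hc, kneg_left, mul_one, one_mul]; simp
      · simp only [Fin.cons_zero, Fin.cons_succ]
        rw [if_neg (Fin.succ_ne_zero i), kmul, kmul, H.hc, kneg_left, mul_one, one_mul]; simp
      · simp only [Fin.cons_succ, Fin.succ_inj]
        rw [kmul, kmul, mul_one, ← add_kronecker, H.cc]
        split_ifs
        · exact two_k
        · exact zero_kronecker _
    · intro i
      rw [hd]
      refine Fin.cases ?_ (fun i => ?_) i
      · simp only [Fin.cons_zero]; rw [kmul, kmul, Xz, kneg_right]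
      · simp only [Fin.cons_succ]; rw [kmul, kmul, H.hc, kneg_left, mul_one, one_mul]

lemma FD.exists (κ : Type*) [Fintype κ] [DecidableEq κ] : ∃ (F : Type) (_ : Fintype F) (_ : DecidableEq F) (_ : Nonempty F)
    (h : F → ℝ) (c : κ → Matrix F F ℝ), FD h c := by
  obtain ⟨F, i1, i2, i3, h, c, H⟩ := FD.exists_fin (Fintype.card κ)
  refine ⟨F, i1, i2, i3, h, fun i => c (Fintype.equivFin κ i), ⟨H.hh, fun i => H.cs _, fun i j => ?_, fun i => H.hc _⟩⟩
  rw [H.cc]; simp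

variable {w : Type*} [Fintype w] [DecidableEq w]

lemma FD.hd2 {F : Type*} [Fintype F] [DecidableEq F] {h : F → ℝ} {c : κ → Matrix F F ℝ} (H : FD h c) :
    diagonal h * diagonal h = 1 := by
  rw [diagonal_mul_diagonal, ← diagonal_one]; congr 1; ext f; exact H.hh f

lemma FD.sum_sq {F : Type*} [Fintype F] [DecidableEq F] {h : F → ℝ} {c : κ → Matrix F F ℝ} (H : FD h c)
    (χ : κ → ℝ) : (∑ i, χ i • c i) * (∑ i, χ i • c i) = (∑ i, χ i ^ 2) • (1 : Matrix F F ℝ) := by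
  have h1 : (2 : ℝ) • ((∑ i, χ i • c i) * (∑ i, χ i • c i)) = (2 : ℝ) • ((∑ i, χ i ^ 2) • (1 : Matrix F F ℝ)) := by
    have e1 : (∑ i, χ i • c i) * (∑ i, χ i • c i) = ∑ i, ∑ j, (χ i * χ j) • (c i * c j) := by
      rw [Finset.sum_mul_sum]
      simp only [smul_mul_smul_comm]
    have e2 : (∑ i, χ i • c i) * (∑ i, χ i • c i) = ∑ i, ∑ j, (χ i * χ j) • (c j * c i) := by
      rw [e1, Finset.sum_comm]
      simp only [mul_comm (χ _) (χ _)]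
    rw [two_smul]
    nth_rewrite 1 [e1]
    rw [e2, ← Finset.sum_add_distrib]
    simp only [← Finset.sum_add_distrib, ← smul_add, H.cc]
    simp only [smul_ite, smul_zero, Finset.sum_ite_eq, Finset.mem_univ, if_true]
    rw [Finset.sum_smul, Finset.smul_sum]
    refine Finset.sum_congr rfl fun i _ => ?_
    rw [smul_smul, ← one_add_one_eq_two, smul_add, ← add_smul]
    congr 1; ring
  exact smul_right_injective _ two_ne_zero h1

lemma MCl.homotopy {B e : κ → Matrix w w ℝ} (H : MCl B e) {F : Type*} [Fintype F] [DecidableEq F]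
    {h : F → ℝ} {c : κ → Matrix F F ℝ} (D : FD h c) (t : ℝ) :
    MCl (fun i => (1 - t) • (B i ⊗ₖ diagonal h) + t • ((1 : Matrix w w ℝ) ⊗ₖ c i))
      (fun i => e i ⊗ₖ diagonal h) where
  Bs i := by
    rw [transpose_add, transpose_smul, transpose_smul, kT, kT, H.Bs, D.cs, diagonal_transpose, transpose_one]
  es i := by rw [kT, H.es, diagonal_transpose, kneg_left]
  ee i j := by
    rw [kmul, kmul, ← add_kronecker, H.ee, D.hd2]
    split_ifs
    · rw [kneg_left, two_k]
    · exact zero_kronecker _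
  Be i j := by
    rw [mul_add, add_mul, mul_smul_comm, mul_smul_comm, smul_mul_assoc, smul_mul_assoc, kmul, kmul, kmul,
      kmul, H.Be, D.hc, kneg_left, kneg_right, mul_one, one_mul, smul_neg, smul_neg, neg_add]
  pos χ hχ v hv := by
    set Bx := ∑ i, χ i • B i with hBx
    set cx := ∑ i, χ i • c i with hcx
    have hX : ∑ i, χ i • ((1 - t) • (B i ⊗ₖ diagonal h) + t • ((1 : Matrix w w ℝ) ⊗ₖ c i))
        = (1 - t) • (Bx ⊗ₖ diagonal h) + t • ((1 : Matrix w w ℝ) ⊗ₖ cx) := by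
      have k1 : Bx ⊗ₖ diagonal h = ∑ i, χ i • (B i ⊗ₖ diagonal h) := by
        ext ⟨a, b⟩ ⟨a', b'⟩
        simp [hBx, kroneckerMap_apply, Matrix.sum_apply, Finset.sum_mul, mul_assoc]
      have k2 : (1 : Matrix w w ℝ) ⊗ₖ cx = ∑ i, χ i • ((1 : Matrix w w ℝ) ⊗ₖ c i) := by
        ext ⟨a, b⟩ ⟨a', b'⟩
        simp only [hcx, kroneckerMap_apply, Matrix.sum_apply, Finset.mul_sum, Matrix.smul_apply, smul_eq_mul]
        refine Finset.sum_congr rfl fun i _ => by ring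
      rw [k1, k2, Finset.smul_sum, Finset.smul_sum, ← Finset.sum_add_distrib]
      refine Finset.sum_congr rfl fun i _ => ?_
      rw [smul_add, smul_comm (χ i), smul_comm (χ i)]
    rw [hX] at hv
    have hBs : Bxᵀ = Bx := by rw [hBx, transpose_sum]; simp only [transpose_smul, H.Bs]
    have hcomm : diagonal h * cx = -(cx * diagonal h) := by
      rw [hcx, Finset.mul_sum, Finset.sum_mul, ← Finset.sum_neg_distrib]
      refine Finset.sum_congr rfl fun i _ => ?_
      rw [mul_smul_comm, D.hc, smul_mul_assoc, smul_neg]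
    have hsq : ((1 - t) • (Bx ⊗ₖ diagonal h) + t • ((1 : Matrix w w ℝ) ⊗ₖ cx)) *
        ((1 - t) • (Bx ⊗ₖ diagonal h) + t • ((1 : Matrix w w ℝ) ⊗ₖ cx))
        = ((1 - t) ^ 2) • ((Bx ⊗ₖ (1 : Matrix F F ℝ))ᵀ * (Bx ⊗ₖ (1 : Matrix F F ℝ))) + (t ^ 2 * ∑ i, χ i ^ 2) • 1 := by
      rw [kT, hBs, transpose_one]
      simp only [mul_add, add_mul, smul_mul_smul_comm, kmul, D.hd2, hcomm, one_mul, mul_one, kneg_right]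
      rw [hcx, D.sum_sq χ, kronecker_smul, kone, smul_smul, smul_neg, mul_comm t (1 - t), pow_two, pow_two]
      abel
    have h0 : v ⬝ᵥ (((1 - t) • (Bx ⊗ₖ diagonal h) + t • ((1 : Matrix w w ℝ) ⊗ₖ cx)) *
        ((1 - t) • (Bx ⊗ₖ diagonal h) + t • ((1 : Matrix w w ℝ) ⊗ₖ cx))) *ᵥ v = 0 := by
      rw [← mulVec_mulVec, hv, mulVec_zero, dotProduct_zero]
    rw [hsq, add_mulVec, dotProduct_add, smul_mulVec, smul_mulVec, dotProduct_smul, dotProduct_smul,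
      one_mulVec, ← mulVec_mulVec, dotProduct_mulVec, vecMul_transpose] at h0
    have p1 : ∀ (x : w × F → ℝ), 0 ≤ x ⬝ᵥ x := fun x => by
      rw [dotProduct]; exact Finset.sum_nonneg fun i _ => mul_self_nonneg _
    have p2 : 0 < ∑ i, χ i ^ 2 := by
      obtain ⟨i, hi⟩ := Function.ne_iff.1 hχ
      refine Finset.sum_pos' (fun i _ => sq_nonneg _) ⟨i, Finset.mem_univ _, ?_⟩
      rw [Pi.zero_apply] at hi
      positivity
    by_cases ht : t = 0
    · subst ht
      simp only [sub_zero, one_smul, zero_smul, add_zero] at hv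
      have h2 : ((1 : Matrix w w ℝ) ⊗ₖ diagonal h) *ᵥ ((Bx ⊗ₖ diagonal h) *ᵥ v) = 0 := by
        rw [hv, mulVec_zero]
      rw [mulVec_mulVec, kmul, one_mul, D.hd2] at h2
      ext ⟨a, f⟩
      have h3 := H.pos χ hχ (fun a => v (a, f)) ?_
      · exact congrFun h3 a
      · ext b
        have h4 := congrFun h2 (b, f)
        rw [← hBx]
        simp only [mulVec, dotProduct, Fintype.sum_prod_type, kroneckerMap_apply, Matrix.one_apply, Pi.zero_apply] at h4 ⊢
        simpa using h4
    · have p3 : 0 < t ^ 2 := by positivity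
      have p4 := p1 v
      have p5 := mul_nonneg (sq_nonneg (1 - t)) (p1 ((Bx ⊗ₖ (1 : Matrix F F ℝ)) *ᵥ v))
      simp only [smul_eq_mul] at h0
      have p6 : v ⬝ᵥ v = 0 := by
        by_contra hne
        have : 0 < v ⬝ᵥ v := lt_of_le_of_ne p4 (Ne.symm hne)
        have : 0 < t ^ 2 * (∑ i, χ i ^ 2) * (v ⬝ᵥ v) := by positivity
        linarith
      exact dotProduct_self_eq_zero.1 p6

lemma TT_mul (M N : Matrix w w ℝ) : TT M * TT N = TT (M * N) := (map_mul _ _ _).symm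

theorem MCl.index [Nonempty κ] {B e : κ → Matrix w w ℝ} (H : MCl B e) :
    ind (Sop (fun i => TT (B i + e i))) Pop * 2 ^ (Fintype.card κ) = Fintype.card w := by
  obtain ⟨F, i1, i2, i3, h, c, D⟩ := FD.exists κ
  let S : ℝ → _ := fun t => Sop (fun i : κ => TT (((1 - t) • (B i ⊗ₖ diagonal h) + t • ((1 : Matrix w w ℝ) ⊗ₖ c i))
    + e i ⊗ₖ diagonal h))
  have hS : ∀ t, S t = Sop (fun i => TT (B i ⊗ₖ diagonal h + e i ⊗ₖ diagonal h))
      + t • Sop (fun i => TT ((1 : Matrix w w ℝ) ⊗ₖ c i - B i ⊗ₖ diagonal h)) := by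
    intro t
    rw [← Sop_affine]
    simp only [S]
    congr 1; ext1 i
    rw [TT, TT, TT, ← map_smul, ← map_add]
    congr 1
    rw [sub_smul, one_smul, smul_sub]; abel
  have hc : Continuous S := by
    rw [show S = _ from funext hS]
    exact continuous_const.add (continuous_id.smul continuous_const)
  have h01 := ind_const S Pop hc (fun t => Sop_sa _) Pop_sa Pop_sq (fun t => Pop_Sop _)
    (fun t => (H.homotopy D t).fred) 0 1
  have hone : ind (S 1) Pop * 2 ^ (Fintype.card κ) = finrank ℝ (EuclideanSpace ℝ (w × F)) := by
    have xx : ∀ i j, ((1 : Matrix w w ℝ) ⊗ₖ c i) * ((1 : Matrix w w ℝ) ⊗ₖ c j) + ((1 : Matrix w w ℝ) ⊗ₖ c j) * ((1 : Matrix w w ℝ) ⊗ₖ c i)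
        = if i = j then 2 else 0 := by
      intro i j
      rw [kmul, kmul, ← kronecker_add, D.cc, one_mul]
      split_ifs
      · exact k_two
      · exact kronecker_zero _
    have yy := (H.homotopy D 1).ee
    have xy : ∀ i j, ((1 : Matrix w w ℝ) ⊗ₖ c i) * (e j ⊗ₖ diagonal h) = - ((e j ⊗ₖ diagonal h) * ((1 : Matrix w w ℝ) ⊗ₖ c i)) := by
      intro i j
      rw [kmul, kmul, D.hc, kneg_right, neg_neg, one_mul, mul_one]
    have hSe : S 1 = Sop (fun i : κ => TT ((1 : Matrix w w ℝ) ⊗ₖ c i + e i ⊗ₖ diagonal h)) := by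
      simp only [S, sub_self, one_smul, zero_smul, zero_add]
    have hst : ∀ i, star (TT ((1 : Matrix w w ℝ) ⊗ₖ c i + e i ⊗ₖ diagonal h))
        = TT ((1 : Matrix w w ℝ) ⊗ₖ c i - e i ⊗ₖ diagonal h) := by
      intro i
      rw [TT_star, transpose_add, kT, kT, D.cs, H.es, transpose_one, diagonal_transpose, kneg_left, sub_eq_add_neg]
    rw [hSe]
    apply osc_ind
    · intro i j
      rw [TT_mul, TT_mul, TT, TT, ← map_add]
      have : ((1 : Matrix w w ℝ) ⊗ₖ c i + e i ⊗ₖ diagonal h) * ((1 : Matrix w w ℝ) ⊗ₖ c j + e j ⊗ₖ diagonal h)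
        + ((1 : Matrix w w ℝ) ⊗ₖ c j + e j ⊗ₖ diagonal h) * ((1 : Matrix w w ℝ) ⊗ₖ c i + e i ⊗ₖ diagonal h) = 0 := by
        have a1 := xx i j; have a2 := yy i j; have a3 := xy i j; have a4 := xy j i
        simp only [add_mul, mul_add]
        rw [a3, a4]
        calc _ = (((1 : Matrix w w ℝ) ⊗ₖ c i) * ((1 : Matrix w w ℝ) ⊗ₖ c j) + ((1 : Matrix w w ℝ) ⊗ₖ c j) * ((1 : Matrix w w ℝ) ⊗ₖ c i))
            + (e i ⊗ₖ diagonal h * e j ⊗ₖ diagonal h + e j ⊗ₖ diagonal h * e i ⊗ₖ diagonal h) := by abel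
          _ = _ := by rw [a1, a2]; split_ifs <;> simp
      rw [this, map_zero]
    · intro i j
      rw [hst, hst, TT_mul, TT_mul, TT, TT, ← map_add]
      have : ((1 : Matrix w w ℝ) ⊗ₖ c i - e i ⊗ₖ diagonal h) * ((1 : Matrix w w ℝ) ⊗ₖ c j - e j ⊗ₖ diagonal h)
        + ((1 : Matrix w w ℝ) ⊗ₖ c j - e j ⊗ₖ diagonal h) * ((1 : Matrix w w ℝ) ⊗ₖ c i - e i ⊗ₖ diagonal h) = 0 := by
        have a1 := xx i j; have a2 := yy i j; have a3 := xy i j; have a4 := xy j i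
        simp only [sub_mul, mul_sub]
        rw [a3, a4]
        calc _ = (((1 : Matrix w w ℝ) ⊗ₖ c i) * ((1 : Matrix w w ℝ) ⊗ₖ c j) + ((1 : Matrix w w ℝ) ⊗ₖ c j) * ((1 : Matrix w w ℝ) ⊗ₖ c i))
            + (e i ⊗ₖ diagonal h * e j ⊗ₖ diagonal h + e j ⊗ₖ diagonal h * e i ⊗ₖ diagonal h) := by abel
          _ = _ := by rw [a1, a2]; split_ifs <;> simp
      rw [this, map_zero]
    · intro i j
      rw [hst, TT_mul, TT_mul, TT, TT, ← map_add]
      have : ((1 : Matrix w w ℝ) ⊗ₖ c i + e i ⊗ₖ diagonal h) * ((1 : Matrix w w ℝ) ⊗ₖ c j - e j ⊗ₖ diagonal h)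
        + ((1 : Matrix w w ℝ) ⊗ₖ c j - e j ⊗ₖ diagonal h) * ((1 : Matrix w w ℝ) ⊗ₖ c i + e i ⊗ₖ diagonal h) = if i = j then 4 else 0 := by
        have a1 := xx i j; have a2 := yy i j; have a3 := xy i j; have a4 := xy j i
        simp only [add_mul, mul_add, sub_mul, mul_sub]
        rw [a3, a4]
        calc _ = (((1 : Matrix w w ℝ) ⊗ₖ c i) * ((1 : Matrix w w ℝ) ⊗ₖ c j) + ((1 : Matrix w w ℝ) ⊗ₖ c j) * ((1 : Matrix w w ℝ) ⊗ₖ c i))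
            - (e i ⊗ₖ diagonal h * e j ⊗ₖ diagonal h + e j ⊗ₖ diagonal h * e i ⊗ₖ diagonal h) := by abel
          _ = _ := by
            rw [a1, a2]; split_ifs
            · norm_num
            · simp
      rw [this]
      split_ifs
      · exact map_ofNat _ 4
      · exact map_zero _
  have hzero : ind (S 0) Pop = Fintype.card F * ind (Sop (fun i => TT (B i + e i))) Pop := by
    have hSe : S 0 = Sop (fun i : κ => TT ((B i + e i) ⊗ₖ diagonal h)) := by
      simp only [S, sub_zero, one_smul, zero_smul, add_zero, add_kronecker]
    rw [hSe]
    let p : F → EuclideanSpace ℝ (w × F) →L[ℝ] EuclideanSpace ℝ w := fun f => LinearMap.toContinuousLinearMap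
      { toFun := fun y => WithLp.toLp 2 (fun a => y (a, f))
        map_add' := fun y z => rfl
        map_smul' := fun r y => rfl }
    let q : F → EuclideanSpace ℝ w →L[ℝ] EuclideanSpace ℝ (w × F) := fun f => LinearMap.toContinuousLinearMap
      { toFun := fun y => WithLp.toLp 2 (fun a => if a.2 = f then y a.1 else 0)
        map_add' := fun y z => by ext a; simp; split_ifs <;> simp
        map_smul' := fun r y => by ext a; simp }
    have hp : ∀ f y a, p f y a = y (a, f) := fun f y a => rfl
    have hq : ∀ f y a, q f y a = if a.2 = f then y a.1 else 0 := fun f y a => rfl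
    have hTp : ∀ (M : Matrix w w ℝ) f y, p f (TT (M ⊗ₖ diagonal h) y) = h f • TT M (p f y) := by
      intro M f y
      ext a
      rw [hp, PiLp.smul_apply, TT_apply, TT_apply]
      simp only [mulVec, dotProduct, Fintype.sum_prod_type, kroneckerMap_apply, hp, diagonal_apply, smul_eq_mul,
        Finset.mul_sum]
      refine Finset.sum_congr rfl fun b _ => ?_
      simp only [mul_ite, mul_zero, ite_mul, zero_mul, Finset.sum_ite_eq, Finset.mem_univ, if_true]
      ring
    refine ind_mult p q ?_ ?_ h ?_ _ _ ?_ ?_ H.fred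
    · intro f g x
      ext a
      rw [hp, hq]
      split_ifs with h1 <;> simp
    · intro y
      ext ⟨a, f⟩
      rw [WithLp.ofLp_sum, Finset.sum_apply]
      simp only [hq, hp]
      simp
    · intro f h0; have := D.hh f; rw [h0] at this; norm_num at this
    · intro f i y; exact hTp _ f y
    · intro f i y
      rw [TT_star, TT_star, kT, diagonal_transpose]; exact hTp _ f y
  rw [← h01, hzero, finrank_euclideanSpace, Fintype.card_prod] at hone
  have hF : (0 : ℤ) < Fintype.card F := by exact_mod_cast Fintype.card_pos
  push_cast at hone
  have : (Fintype.card F : ℤ) * (ind (Sop (fun i => TT (B i + e i))) Pop * 2 ^ (Fintype.card κ)) = Fintype.card F * Fintype.card w := by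
    linarith
  exact mul_left_cancel₀ hF.ne' this
end C3
end HR

namespace HR
set_option linter.unusedSectionVars false
set_option linter.deprecated false
set_option linter.unusedVariables false
open Module
section D
open Matrix Kronecker Quaternion
lemma four_dvd {V : Type*} [AddCommGroup V] [Module ℝ V] (I J : Module.End ℝ V)
    (hI : I * I = -1) (hJ : J * J = -1) (hIJ : I * J = -(J * I)) : 4 ∣ finrank ℝ V := by
  let q : QuaternionAlgebra.Basis (Module.End ℝ V) (-1 : ℝ) 0 (-1) :=
    { i := I, j := J, k := I * J
      i_mul_i := by rw [hI]; simp
      j_mul_j := by rw [hJ]; simp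
      i_mul_j := rfl
      j_mul_i := by rw [hIJ]; simp }
  let φ : ℍ[ℝ] →ₐ[ℝ] Module.End ℝ V := QuaternionAlgebra.lift q
  let _ : Module ℍ[ℝ] V := Module.compHom V φ.toRingHom
  have : IsScalarTower ℝ ℍ[ℝ] V := ⟨fun r x v => by
    change φ (r • x) v = r • φ x v
    rw [map_smul]; rfl⟩
  have := Module.finrank_mul_finrank ℝ ℍ[ℝ] V
  rw [Quaternion.finrank_eq_four] at this
  exact ⟨_, this.symm⟩

variable {κ : Type*} [Fintype κ] [DecidableEq κ] {w : Type*} [Fintype w] [DecidableEq w]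

theorem MCl.dvd [Nonempty κ] {B e : κ → Matrix w w ℝ} (H : MCl B e) (I J : Matrix w w ℝ)
    (hI : I * I = -1) (hJ : J * J = -1) (hIJ : I * J = -(J * I)) (r s : ℝ) (hr : r ≠ 0) (hs : s ≠ 0)
    (IB : ∀ i, I * B i = r • (B i * I)) (Ie : ∀ i, I * e i = r • (e i * I))
    (JB : ∀ i, J * B i = s • (B i * J)) (Je : ∀ i, J * e i = s • (e i * J)) :
    4 * 2 ^ (Fintype.card κ) ∣ Fintype.card w := by
  have pres : ∀ (ε : ℝ) (K : Matrix w w ℝ) (r : ℝ), r ≠ 0 → (∀ i, K * B i = r • (B i * K)) →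
      (∀ i, K * e i = r • (e i * K)) → ∀ u ∈ kp (Sop (fun i => TT (B i + e i))) Pop ε,
      cw (TT K) u ∈ kp (Sop (fun i => TT (B i + e i))) Pop ε := by
    intro ε K r hr h1 h2 u hu
    have c1 : ∀ (M : Matrix w w ℝ), K * M = r • (M * K) → ∀ y, TT K (TT M y) = r • TT M (TT K y) := by
      intro M hM y
      have : TT K * TT M = r • (TT M * TT K) := by rw [TT_mul, TT_mul, hM, TT, TT, map_smul]
      exact DFunLike.congr_fun this y
    have := Sop_comm (κ := κ) (TT K) (fun i => TT (B i + e i)) (fun i => TT (B i + e i)) r ?_ ?_ u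
    · constructor
      · rw [hu.1, map_zero] at this
        exact (smul_eq_zero.1 this.symm).resolve_left hr
      · rw [← Pop_comm, hu.2, map_smul]
    · intro i y
      apply c1
      rw [mul_add, add_mul, h1, h2, smul_add]
    · intro i y
      rw [TT_star]
      apply c1
      rw [transpose_add, H.Bs, H.es, mul_add, add_mul, h1, mul_neg, neg_mul, h2, smul_add, smul_neg]
  have h4 : ∀ ε : ℝ, 4 ∣ finrank ℝ (kp (Sop (fun i => TT (B i + e i))) Pop ε) := by
    intro ε
    let op : (K : Matrix w w ℝ) → (∀ u ∈ kp (Sop (fun i => TT (B i + e i))) Pop ε,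
      cw (TT K) u ∈ kp (Sop (fun i => TT (B i + e i))) Pop ε) → Module.End ℝ (kp (Sop (fun i => TT (B i + e i))) Pop ε) :=
      fun K h => (cw (TT K)).toLinearMap.restrict h
    have hop : ∀ K h u α, ev α ((op K h u : kp (Sop (fun i => TT (B i + e i))) Pop ε) : L2 (κ → ℕ) (EuclideanSpace ℝ w))
      = TT K (ev α (u : L2 (κ → ℕ) (EuclideanSpace ℝ w))) := fun K h u α => rfl
    have hm : ∀ (K L : Matrix w w ℝ) y, TT K (TT L y) = TT (K * L) y := by
      intro K L y; rw [← TT_mul]; rfl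
    refine four_dvd (op I (pres ε I r hr IB Ie)) (op J (pres ε J s hs JB Je)) ?_ ?_ ?_
    · ext1 u; apply Subtype.ext; refine L2.ext fun α => ?_
      rw [Module.End.mul_apply, hop, hop, hm, hI, TT, map_neg, map_one]; rfl
    · ext1 u; apply Subtype.ext; refine L2.ext fun α => ?_
      rw [Module.End.mul_apply, hop, hop, hm, hJ, TT, map_neg, map_one]; rfl
    · ext1 u; apply Subtype.ext; refine L2.ext fun α => ?_
      rw [Module.End.mul_apply, hop, hop, hm, hIJ, TT, map_neg, map_mul]; rfl
  obtain ⟨a, ha⟩ := h4 1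
  obtain ⟨b, hb⟩ := h4 (-1)
  have h5 := H.index
  rw [ind, ha, hb] at h5
  have : (4 * 2 ^ (Fintype.card κ) : ℤ) ∣ Fintype.card w := ⟨(a : ℤ) - b, by rw [← h5]; push_cast; ring⟩
  exact_mod_cast this
end D
end HR

namespace HR
set_option linter.unusedSectionVars false
set_option linter.deprecated false
set_option linter.unusedVariables false
open Module
section E
open Matrix Kronecker

/-- skew anticommuting generators -/
structure SG {K S : Type} [DecidableEq K] [Fintype S] [DecidableEq S] (e : K → Matrix S S ℝ) : Prop where
  es : ∀ i, (e i)ᵀ = - e i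
  ee : ∀ i j, e i * e j + e j * e i = if i = j then -2 else 0

/-- Clifford data with a grading element -/
structure CG {K S : Type} [DecidableEq K] [Fintype S] [DecidableEq S] (σ : ℝ) (e : K → Matrix S S ℝ)
    (ω : Matrix S S ℝ) : Prop extends SG e where
  wt : ωᵀ = σ • ω
  ww : ω * ω = σ • 1
  we : ∀ i, ω * e i = - (e i * ω)

/-- existence of Clifford data -/
def CD (σ : ℝ) (k s : ℕ) : Prop := ∃ (K S : Type) (_ : Fintype K) (_ : DecidableEq K) (_ : Fintype S)
  (_ : DecidableEq S) (e : K → Matrix S S ℝ) (ω : Matrix S S ℝ),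
  Fintype.card K = k ∧ Fintype.card S = s ∧ CG σ e ω

/-- Pauli matrices -/
def pX : Matrix (Fin 2) (Fin 2) ℝ := !![0, 1; 1, 0]
/-- Pauli matrices -/
def pZ : Matrix (Fin 2) (Fin 2) ℝ := !![1, 0; 0, -1]
/-- Pauli matrices -/
def pE : Matrix (Fin 2) (Fin 2) ℝ := !![0, -1; 1, 0]
lemma pXX : pX * pX = 1 := by ext i j; fin_cases i <;> fin_cases j <;> simp [pX, Matrix.mul_apply]
lemma pZZ : pZ * pZ = 1 := by ext i j; fin_cases i <;> fin_cases j <;> simp [pZ, Matrix.mul_apply]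
lemma pEE : pE * pE = -1 := by ext i j; fin_cases i <;> fin_cases j <;> simp [pE, Matrix.mul_apply]
lemma pXt : pXᵀ = pX := by ext i j; fin_cases i <;> fin_cases j <;> simp [pX]
lemma pZt : pZᵀ = pZ := by ext i j; fin_cases i <;> fin_cases j <;> simp [pZ]
lemma pEt : pEᵀ = -pE := by ext i j; fin_cases i <;> fin_cases j <;> simp [pE]
lemma pZX : pZ * pX = -(pX * pZ) := by
  ext i j; fin_cases i <;> fin_cases j <;> simp [pZ, pX, Matrix.mul_apply]
lemma pZE : pZ * pE = -(pE * pZ) := by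
  ext i j; fin_cases i <;> fin_cases j <;> simp [pZ, pE, Matrix.mul_apply]
lemma pEX : pE * pX = -(pX * pE) := by
  ext i j; fin_cases i <;> fin_cases j <;> simp [pE, pX, Matrix.mul_apply]

lemma SG.one_two {l m : Type} [Fintype l] [Fintype m] [DecidableEq l] [DecidableEq m]
    (p : Prop) [Decidable p] : (if p then (-2 : Matrix l l ℝ) else 0) ⊗ₖ (1 : Matrix m m ℝ) = if p then -2 else 0 := by
  split_ifs
  · rw [kneg_left, two_k]
  · exact zero_kronecker _

lemma SG.double {K S : Type} [Fintype K] [DecidableEq K] [Fintype S] [DecidableEq S] {g : K → Matrix S S ℝ}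
    (h : SG g) : CG (K := K ⊕ Unit) 1 (Sum.elim (fun i => g i ⊗ₖ pX) (fun _ => (1 : Matrix S S ℝ) ⊗ₖ pE))
      ((1 : Matrix S S ℝ) ⊗ₖ pZ) where
  es := by
    rintro (i | i)
    · simp only [Sum.elim_inl]; rw [kT, h.es, pXt, kneg_left]
    · simp only [Sum.elim_inr]; rw [kT, pEt, transpose_one, kneg_right]
  ee := by
    rintro (i | i) (j | j)
    · simp only [Sum.elim_inl]; rw [kmul, kmul, pXX, ← add_kronecker, h.ee, SG.one_two]; simp
    · simp only [Sum.elim_inl, Sum.elim_inr]; rw [kmul, kmul, pEX, kneg_right]; simp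
    · simp only [Sum.elim_inl, Sum.elim_inr]; rw [kmul, kmul, pEX, kneg_right]; simp
    · simp only [Sum.elim_inr]; rw [kmul, pEE, kneg_right, one_mul, kone]; norm_num
  wt := by rw [kT, transpose_one, pZt, one_smul]
  ww := by rw [kmul, pZZ, one_mul, kone, one_smul]
  we := by
    rintro (i | i)
    · simp only [Sum.elim_inl]; rw [kmul, kmul, pZX, kneg_right]; simp
    · simp only [Sum.elim_inr]; rw [kmul, kmul, pZE, kneg_right]

/-- integer quaternion units -/
def qlZ : Fin 3 → Matrix (Fin 4) (Fin 4) ℤ :=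
  ![!![0, -1, 0, 0; 1, 0, 0, 0; 0, 0, 0, -1; 0, 0, 1, 0],
    !![0, 0, -1, 0; 0, 0, 0, 1; 1, 0, 0, 0; 0, -1, 0, 0],
    !![0, 0, 0, -1; 0, 0, -1, 0; 0, 1, 0, 0; 1, 0, 0, 0]]
/-- integer quaternion units -/
def qrZ : Fin 3 → Matrix (Fin 4) (Fin 4) ℤ :=
  ![!![0, -1, 0, 0; 1, 0, 0, 0; 0, 0, 0, 1; 0, 0, -1, 0],
    !![0, 0, -1, 0; 0, 0, 0, -1; 1, 0, 0, 0; 0, 1, 0, 0],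
    !![0, 0, 0, -1; 0, 0, 1, 0; 0, -1, 0, 0; 1, 0, 0, 0]]
/-- real form -/
noncomputable def toR (M : Matrix (Fin 4) (Fin 4) ℤ) : Matrix (Fin 4) (Fin 4) ℝ := (Int.castRingHom ℝ).mapMatrix M

lemma toR_SG (q : Fin 3 → Matrix (Fin 4) (Fin 4) ℤ) (h1 : ∀ i, (q i)ᵀ = - q i)
    (h2 : ∀ i j, q i * q j + q j * q i = if i = j then -2 else 0) : SG (fun i => toR (q i)) where
  es i := by
    have : (toR (q i))ᵀ = toR (q i)ᵀ := rfl
    rw [this, h1, toR, toR, map_neg]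
  ee i j := by
    rw [toR, toR, ← map_mul, ← map_mul, ← map_add, h2]
    split_ifs
    · rw [map_neg]; congr 1; exact map_ofNat _ 2
    · exact map_zero _

lemma ql_SG : SG (fun i => toR (qlZ i)) := toR_SG _ (by decide) (by decide)
lemma qr_SG : SG (fun i => toR (qrZ i)) := toR_SG _ (by decide) (by decide)
lemma qlr (i j : Fin 3) : toR (qlZ i) * toR (qrZ j) = toR (qrZ j) * toR (qlZ i) := by
  have : ∀ i j, qlZ i * qrZ j = qrZ j * qlZ i := by decide
  rw [toR, toR, ← map_mul, ← map_mul, this]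

/-- six generators in dimension eight with a skew grading -/
lemma CG68 : CG (K := Fin 3 ⊕ Fin 3) (-1) (Sum.elim (fun i => toR (qlZ i) ⊗ₖ pX) (fun i => toR (qrZ i) ⊗ₖ pZ))
    ((1 : Matrix (Fin 4) (Fin 4) ℝ) ⊗ₖ pE) where
  es := by
    rintro (i | i)
    · simp only [Sum.elim_inl]; rw [kT, ql_SG.es, pXt, kneg_left]
    · simp only [Sum.elim_inr]; rw [kT, qr_SG.es, pZt, kneg_left]
  ee := by
    rintro (i | i) (j | j)
    · simp only [Sum.elim_inl]; rw [kmul, kmul, pXX, ← add_kronecker, ql_SG.ee, SG.one_two]; simp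
    · simp only [Sum.elim_inl, Sum.elim_inr]; rw [kmul, kmul, pZX, kneg_right, qlr]; simp
    · simp only [Sum.elim_inl, Sum.elim_inr]; rw [kmul, kmul, pZX, kneg_right, qlr]; simp
    · simp only [Sum.elim_inr]; rw [kmul, kmul, pZZ, ← add_kronecker, qr_SG.ee, SG.one_two]; simp
  wt := by rw [kT, transpose_one, pEt, kneg_right]; simp
  ww := by rw [kmul, pEE, kneg_right, one_mul, kone]; simp
  we := by
    rintro (i | i)
    · simp only [Sum.elim_inl]; rw [kmul, kmul, pEX, kneg_right]; simp
    · simp only [Sum.elim_inr]; rw [kmul, kmul, pZE, kneg_right]; simp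

/-- forgetting the grading -/
lemma CG.toSG7 {K S : Type} [DecidableEq K] [Fintype S] [DecidableEq S] {e : K → Matrix S S ℝ}
    {ω : Matrix S S ℝ} (h : CG (-1) e ω) : SG (K := K ⊕ Unit) (Sum.elim e (fun _ => ω)) where
  es := by
    rintro (i | i)
    · exact h.es i
    · simp only [Sum.elim_inr]; rw [h.wt]; simp
  ee := by
    rintro (i | i) (j | j)
    · simp only [Sum.elim_inl]; rw [h.ee]; simp
    · simp only [Sum.elim_inl, Sum.elim_inr]; rw [h.we]; simp
    · simp only [Sum.elim_inl, Sum.elim_inr]; rw [h.we]; simp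
    · simp only [Sum.elim_inr]; rw [h.ww]; norm_num

lemma CG.prod {K S K' S' : Type} [DecidableEq K] [Fintype S] [DecidableEq S] {e : K → Matrix S S ℝ}
    {ω : Matrix S S ℝ} {σ : ℝ} (h : CG σ e ω) [DecidableEq K'] [Fintype S'] [DecidableEq S'] {e' : K' → Matrix S' S' ℝ}
    {ω' : Matrix S' S' ℝ} (h' : CG 1 e' ω') :
    CG (K := K ⊕ K') σ (Sum.elim (fun i => e i ⊗ₖ ω') (fun i => (1 : Matrix S S ℝ) ⊗ₖ e' i)) (ω ⊗ₖ ω') where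
  es := by
    rintro (i | i)
    · simp only [Sum.elim_inl]; rw [kT, h.es, h'.wt, one_smul, kneg_left]
    · simp only [Sum.elim_inr]; rw [kT, h'.es, transpose_one, kneg_right]
  ee := by
    rintro (i | i) (j | j)
    · simp only [Sum.elim_inl]; rw [kmul, kmul, h'.ww, one_smul, ← add_kronecker, h.ee, SG.one_two]; simp
    · simp only [Sum.elim_inl, Sum.elim_inr]; rw [kmul, kmul, h'.we, kneg_right]; simp
    · simp only [Sum.elim_inl, Sum.elim_inr]; rw [kmul, kmul, h'.we, kneg_right]; simp
    · simp only [Sum.elim_inr]; rw [kmul, kmul, one_mul, ← kronecker_add, h'.ee]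
      simp only [Sum.inr.injEq]
      split_ifs
      · rw [kneg_right, k_two]
      · exact kronecker_zero _
  wt := by rw [kT, h.wt, h'.wt, one_smul, smul_kronecker]
  ww := by rw [kmul, h.ww, h'.ww, one_smul, smul_kronecker, kone]
  we := by
    rintro (i | i)
    · simp only [Sum.elim_inl]; rw [kmul, kmul, h.we, kneg_left]
    · simp only [Sum.elim_inr]; rw [kmul, kmul, h'.we, kneg_right]; simp

lemma CD.prod {σ : ℝ} {k s k' s' : ℕ} (h : CD σ k s) (h' : CD 1 k' s') : CD σ (k + k') (s * s') := by
  obtain ⟨K, S, _, _, _, _, e, ω, rfl, rfl, H⟩ := h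
  obtain ⟨K', S', _, _, _, _, e', ω', rfl, rfl, H'⟩ := h'
  exact ⟨K ⊕ K', S × S', inferInstance, inferInstance, inferInstance, inferInstance, _, _, by simp, by simp, H.prod H'⟩

lemma CD.triv : CD 1 0 1 := ⟨Fin 0, Fin 1, inferInstance, inferInstance, inferInstance, inferInstance,
  fun i => i.elim0, 1, by simp, by simp,
  { es := fun i => i.elim0, ee := fun i => i.elim0, we := fun i => i.elim0, wt := by simp, ww := by simp }⟩

lemma CD.zero (m : ℕ) : CD 1 0 m := ⟨Fin 0, Fin m, inferInstance, inferInstance, inferInstance, inferInstance,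
  fun i => i.elim0, 1, by simp, by simp,
  { es := fun i => i.elim0, ee := fun i => i.elim0, we := fun i => i.elim0, wt := by simp, ww := by simp }⟩

lemma CD.mul {σ : ℝ} {k s : ℕ} (h : CD σ k s) (m : ℕ) : CD σ k (s * m) := h.prod (CD.zero m)

lemma SG.toCD {K S : Type} [Fintype K] [DecidableEq K] [Fintype S] [DecidableEq S] {g : K → Matrix S S ℝ}
    (h : SG g) : CD 1 (Fintype.card K + 1) (Fintype.card S * 2) :=
  ⟨K ⊕ Unit, S × Fin 2, inferInstance, inferInstance, inferInstance, inferInstance, _, _, by simp, by simp, h.double⟩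

lemma CD12 : CD 1 1 2 := by
  have h : SG (K := Fin 0) (S := Fin 1) (fun i => i.elim0) := ⟨fun i => i.elim0, fun i => i.elim0⟩
  simpa using h.toCD
lemma CD24 : CD 1 2 4 := by
  have h : SG (K := Fin 1) (S := Fin 2) (fun i => pE) := ⟨fun i => pEt, fun i j => by
    rw [if_pos (Subsingleton.elim _ _), pEE]; norm_num⟩
  simpa using h.toCD
lemma CD48 : CD 1 4 8 := by simpa using ql_SG.toCD
lemma CD816 : CD 1 8 16 := by simpa using CG68.toSG7.toCD
lemma CD68 : CD (-1) 6 8 := ⟨Fin 3 ⊕ Fin 3, Fin 4 × Fin 2, inferInstance, inferInstance, inferInstance, inferInstance,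
  _, _, by simp, by simp, CG68⟩

lemma CD.per {σ : ℝ} {k s : ℕ} (h : CD σ k s) (a : ℕ) : CD σ (8 * a + k) (s * 16 ^ a) := by
  induction a with
  | zero => simpa using h
  | succ a ih =>
    have := ih.prod CD816
    convert this using 1
    · ring
    · ring

/-- concrete form -/
lemma CD.fin {σ : ℝ} {k s : ℕ} (h : CD σ k s) {k' : ℕ} (hk : k' ≤ k) :
    ∃ (e : Fin k' → Matrix (Fin s) (Fin s) ℝ) (ω : Matrix (Fin s) (Fin s) ℝ), CG σ e ω := by
  obtain ⟨K, S, _, _, _, _, e, ω, rfl, rfl, H⟩ := h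
  let φ : Fin k' → K := fun i => (Fintype.equivFin K).symm (Fin.castLE hk i)
  have hφ : Function.Injective φ := (Fintype.equivFin K).symm.injective.comp (Fin.castLE_injective hk)
  let τ := (Fintype.equivFin S).symm
  have hm : ∀ A B : Matrix S S ℝ, A.submatrix τ τ * B.submatrix τ τ = (A * B).submatrix τ τ :=
    fun A B => submatrix_mul_equiv A B τ τ τ
  have h1 : (1 : Matrix S S ℝ).submatrix τ τ = 1 := submatrix_one_equiv τ
  refine ⟨fun i => (e (φ i)).submatrix τ τ, ω.submatrix τ τ,
    { es := fun i => ?_, ee := fun i j => ?_, wt := ?_, ww := ?_, we := fun i => ?_ }⟩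
  · rw [transpose_submatrix, H.es]; rfl
  · rw [hm, hm]
    have : ∀ A B : Matrix S S ℝ, A.submatrix τ τ + B.submatrix τ τ = (A + B).submatrix τ τ := fun _ _ => rfl
    rw [this, H.ee]
    simp only [hφ.eq_iff]
    split_ifs
    · have e2 : (-2 : Matrix S S ℝ) = -(1 + 1) := by norm_num
      have e3 : (-2 : Matrix (Fin (Fintype.card S)) (Fin (Fintype.card S)) ℝ) = -(1 + 1) := by norm_num
      rw [e2, e3, ← h1]; rfl
    · rfl
  · rw [transpose_submatrix, H.wt]; rfl
  · rw [hm, H.ww, ← h1]; rfl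
  · rw [hm, hm, H.we]; rfl
end E
end HR

namespace HR
set_option linter.unusedSectionVars false
set_option linter.deprecated false
set_option linter.unusedVariables false
open Module
section F
open Matrix

lemma csum_sq {n : ℕ} {F : Type*} [Fintype F] [DecidableEq F] {c : Fin n → Matrix F F ℂ}
    (cc : ∀ i j, c i * c j + c j * c i = if i = j then 2 else 0)
    (χ : Fin n → ℝ) : (∑ i, χ i • c i) * (∑ i, χ i • c i) = (∑ i, χ i ^ 2) • (1 : Matrix F F ℂ) := by
  have h1 : (2 : ℝ) • ((∑ i, χ i • c i) * (∑ i, χ i • c i)) = (2 : ℝ) • ((∑ i, χ i ^ 2) • (1 : Matrix F F ℂ)) := by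
    have e1 : (∑ i, χ i • c i) * (∑ i, χ i • c i) = ∑ i, ∑ j, (χ i * χ j) • (c i * c j) := by
      rw [Finset.sum_mul_sum]
      simp only [smul_mul_smul_comm]
    have e2 : (∑ i, χ i • c i) * (∑ i, χ i • c i) = ∑ i, ∑ j, (χ i * χ j) • (c j * c i) := by
      rw [e1, Finset.sum_comm]
      simp only [mul_comm (χ _) (χ _)]
    rw [two_smul]
    nth_rewrite 1 [e1]
    rw [e2, ← Finset.sum_add_distrib]
    simp only [← Finset.sum_add_distrib, ← smul_add, cc]
    simp only [smul_ite, smul_zero, Finset.sum_ite_eq, Finset.mem_univ, if_true]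
    rw [Finset.sum_smul, Finset.smul_sum]
    refine Finset.sum_congr rfl fun i _ => ?_
    rw [smul_smul, ← one_add_one_eq_two, smul_add, ← add_smul]
    congr 1; ring
  exact smul_right_injective _ two_ne_zero h1

/-- the symplectic form -/
abbrev JJ (N : ℕ) : Matrix (Fin N ⊕ Fin N) (Fin N ⊕ Fin N) ℂ := Matrix.fromBlocks 0 (-1) 1 0

lemma build {N n : ℕ} (c : Fin n → Matrix (Fin N ⊕ Fin N) (Fin N ⊕ Fin N) ℂ)
    (ch : ∀ i, (c i)ᴴ = c i) (cj : ∀ i, (c i)ᵀ * JJ N + JJ N * c i = 0)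
    (cc : ∀ i j, c i * c j + c j * c i = if i = j then 2 else 0) :
    ∃ f : EuclideanSpace ℝ (Fin n) →ₗ[ℝ]
          Matrix (Fin N ⊕ Fin N) (Fin N ⊕ Fin N) ℂ,
        ∀ v, (f v)ᴴ = f v ∧ (f v)ᵀ * JJ N + JJ N * f v = 0 ∧
          (f v) ^ 2 = (‖v‖ ^ 2 : ℝ) • (1 : Matrix (Fin N ⊕ Fin N) (Fin N ⊕ Fin N) ℂ) := by
  refine ⟨{ toFun := fun v => ∑ i, v i • c i, map_add' := ?_, map_smul' := ?_ }, fun v => ⟨?_, ?_, ?_⟩⟩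
  · intro x y
    simp only [PiLp.add_apply, add_smul, Finset.sum_add_distrib]
  · intro r x
    simp only [PiLp.smul_apply, smul_eq_mul, mul_smul, Finset.smul_sum, RingHom.id_apply]
  · simp only [LinearMap.coe_mk, AddHom.coe_mk]
    rw [conjTranspose_sum]
    refine Finset.sum_congr rfl fun i _ => ?_
    rw [conjTranspose_smul, ch, star_trivial]
  · simp only [LinearMap.coe_mk, AddHom.coe_mk]
    rw [transpose_sum, Finset.sum_mul, Finset.mul_sum, ← Finset.sum_add_distrib]
    refine Finset.sum_eq_zero fun i _ => ?_
    rw [transpose_smul, smul_mul_assoc, mul_smul_comm, ← smul_add, cj, smul_zero]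
  · simp only [LinearMap.coe_mk, AddHom.coe_mk]
    rw [pow_two, csum_sq cc, EuclideanSpace.norm_sq_eq]
    simp

lemma one_of_CD {N k n : ℕ} (h : CD 1 k N) (hn : n ≤ k + 3) :
    ∃ f : EuclideanSpace ℝ (Fin n) →ₗ[ℝ]
          Matrix (Fin N ⊕ Fin N) (Fin N ⊕ Fin N) ℂ,
        ∀ v, (f v)ᴴ = f v ∧ (f v)ᵀ * JJ N + JJ N * f v = 0 ∧
          (f v) ^ 2 = (‖v‖ ^ 2 : ℝ) • (1 : Matrix (Fin N ⊕ Fin N) (Fin N ⊕ Fin N) ℂ) := by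
  obtain ⟨e, ω, H⟩ := h.fin le_rfl
  set φ := (Complex.ofRealHom).mapMatrix (m := Fin N) with hφ
  have φt : ∀ M : Matrix (Fin N) (Fin N) ℝ, (φ M)ᵀ = φ Mᵀ := fun M => rfl
  have φh : ∀ M : Matrix (Fin N) (Fin N) ℝ, (φ M)ᴴ = φ Mᵀ := fun M => by
    ext i j; simp [φ]
  set w := φ ω with hw
  let E := fun i => φ (e i)
  have wt : wᵀ = w := by rw [hw, φt, H.wt, one_smul]
  have wh : wᴴ = w := by rw [hw, φh, H.wt, one_smul]
  have Et : ∀ i, (E i)ᵀ = - E i := fun i => by simp only [E]; rw [φt, H.es, map_neg]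
  have Eh : ∀ i, (E i)ᴴ = - E i := fun i => by simp only [E]; rw [φh, H.es, map_neg]
  have ww : w * w = 1 := by rw [hw, ← map_mul, H.ww, one_smul, map_one]
  have wE : ∀ i, w * E i = -(E i * w) := fun i => by
    simp only [E, hw]; rw [← map_mul, H.we, map_neg, map_mul]
  have EE : ∀ i j, E i * E j + E j * E i = if i = j then -2 else 0 := fun i j => by
    simp only [E]; rw [← map_mul, ← map_mul, ← map_add, H.ee]
    split_ifs
    · rw [map_neg]; congr 1; exact map_ofNat _ 2
    · exact map_zero _
  let X : Fin 3 → Matrix (Fin N ⊕ Fin N) (Fin N ⊕ Fin N) ℂ :=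
    ![fromBlocks 0 w w 0, fromBlocks 0 (-(Complex.I • w)) (Complex.I • w) 0, fromBlocks w 0 0 (-w)]
  let Y : Fin k → Matrix (Fin N ⊕ Fin N) (Fin N ⊕ Fin N) ℂ :=
    fun j => fromBlocks (Complex.I • E j) 0 0 (Complex.I • E j)
  let G : Fin 3 ⊕ Fin k → Matrix (Fin N ⊕ Fin N) (Fin N ⊕ Fin N) ℂ := Sum.elim X Y
  have two : (2 : Matrix (Fin N ⊕ Fin N) (Fin N ⊕ Fin N) ℂ) = fromBlocks (1+1) 0 0 (1+1) := by
    rw [← one_add_one_eq_two, ← fromBlocks_one, fromBlocks_add]; simp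
  have Gh : ∀ i, (G i)ᴴ = G i := by
    rintro (i | i)
    · fin_cases i <;> simp [G, X, fromBlocks_conjTranspose, wh, conjTranspose_smul]
    · simp [G, Y, fromBlocks_conjTranspose, Eh, conjTranspose_smul]
  have Gj : ∀ i, (G i)ᵀ * JJ N + JJ N * G i = 0 := by
    rintro (i | i)
    · fin_cases i <;> simp [G, X, JJ, fromBlocks_transpose, fromBlocks_multiply, fromBlocks_add, wt]
    · simp [G, Y, JJ, fromBlocks_transpose, fromBlocks_multiply, fromBlocks_add, Et]
  have XY : ∀ i j, X i * Y j + Y j * X i = 0 := by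
    intro i j
    fin_cases i <;> simp [X, Y, fromBlocks_multiply, fromBlocks_add, wE]
  have Gc : ∀ i j, G i * G j + G j * G i = if i = j then 2 else 0 := by
    rintro (i | i) (j | j)
    · fin_cases i <;> fin_cases j <;>
        simp [G, X, fromBlocks_multiply, fromBlocks_add, ww, smul_smul] <;> rw [two, ← fromBlocks_one, fromBlocks_add, add_zero]
    · simpa [G] using XY i j
    · simpa [G, add_comm] using XY j i
    · have := EE i j
      simp only [G, Y, Sum.elim_inr, fromBlocks_multiply, fromBlocks_add, Sum.inr.injEq]
      simp only [zero_mul, mul_zero, add_zero, zero_add, smul_mul_smul_comm, Complex.I_mul_I, ← smul_add, this]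
      split_ifs
      · rw [two, one_add_one_eq_two]; simp
      · simp
  have : Fintype.card (Fin n) ≤ Fintype.card (Fin 3 ⊕ Fin k) := by simp; omega
  obtain ⟨ι⟩ := Function.Embedding.nonempty_of_card_le this
  refine build (fun i => G (ι i)) (fun i => Gh _) (fun i => Gj _) (fun i j => ?_)
  rw [Gc]; simp only [EmbeddingLike.apply_eq_iff_eq]
end F
end HR

namespace HR
set_option linter.unusedSectionVars false
set_option linter.deprecated false
set_option linter.unusedVariables false
open Module
section G
open Matrix Kronecker

/-- quaternionic data -/
structure QD {k : ℕ} {V : Type} [Fintype V] [DecidableEq V] (I J : Matrix V V ℝ) (A : Fin k → Matrix V V ℝ) : Prop where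
  It : Iᵀ = -I
  II : I * I = -1
  J2 : J * J = -1
  IJ : I * J = -(J * I)
  At : ∀ i, (A i)ᵀ = A i
  IA : ∀ i, I * A i = A i * I
  JA : ∀ i, J * A i = -(A i * J)
  un : ∀ χ : Fin k → ℝ, χ ≠ 0 → IsUnit (∑ i, χ i • A i)

lemma unit_inj {V : Type*} [Fintype V] [DecidableEq V] {M : Matrix V V ℝ} (h : IsUnit M) (v : V → ℝ)
    (hv : M *ᵥ v = 0) : v = 0 := by
  obtain ⟨u, rfl⟩ := h
  have : ((u⁻¹ : (Matrix V V ℝ)ˣ) : Matrix V V ℝ) *ᵥ ((u : Matrix V V ℝ) *ᵥ v) = v := by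
    rw [mulVec_mulVec, Units.inv_mul, one_mulVec]
  rw [← this, hv, mulVec_zero]

lemma unit_k {V S : Type} [Fintype V] [DecidableEq V] [Fintype S] [DecidableEq S] {M : Matrix S S ℝ} {M' : Matrix V V ℝ}
    (h : IsUnit M) (h' : IsUnit M') : IsUnit (M ⊗ₖ M') := by
  obtain ⟨u, rfl⟩ := h
  obtain ⟨u', rfl⟩ := h'
  refine IsUnit.of_mul_eq_one (((u⁻¹ : (Matrix S S ℝ)ˣ) : Matrix S S ℝ) ⊗ₖ ((u'⁻¹ : (Matrix V V ℝ)ˣ) : Matrix V V ℝ)) ?_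
  rw [kmul, Units.mul_inv, Units.mul_inv, kone]

lemma ksum {V S : Type} {k : ℕ} [Fintype V] [DecidableEq V] [Fintype S] [DecidableEq S] (M : Matrix S S ℝ)
    (A : Fin k → Matrix V V ℝ) (χ : Fin k → ℝ) : ∑ i, χ i • (M ⊗ₖ A i) = M ⊗ₖ (∑ i, χ i • A i) := by
  ext ⟨a, b⟩ ⟨c, d⟩
  simp only [Matrix.sum_apply, Matrix.smul_apply, kroneckerMap_apply, smul_eq_mul, Finset.mul_sum]
  exact Finset.sum_congr rfl fun i _ => by ring

variable {k s : ℕ} {V : Type} [Fintype V] [DecidableEq V] {I J : Matrix V V ℝ} {A : Fin k → Matrix V V ℝ}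

lemma QD.ee {S : Type} [Fintype S] [DecidableEq S] {e : Fin k → Matrix S S ℝ} {ω : Matrix S S ℝ} {σ : ℝ} (H : CG σ e ω) (i j : Fin k) :
    (e i ⊗ₖ (1 : Matrix V V ℝ)) * (e j ⊗ₖ 1) + (e j ⊗ₖ 1) * (e i ⊗ₖ 1) = if i = j then -2 else 0 := by
  rw [kmul, kmul, one_mul, ← add_kronecker, H.ee, SG.one_two]

lemma QD.plus {k' : ℕ} (Q : QD I J A) (hk : 1 ≤ k) (h : CD 1 k' s) (hk' : k ≤ k') :
    4 * 2 ^ k ∣ s * Fintype.card V := by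
  obtain ⟨e, ω, H⟩ := h.fin hk'
  have : Nonempty (Fin k) := ⟨⟨0, hk⟩⟩
  have ww : ω * ω = 1 := by rw [H.ww, one_smul]
  have M : MCl (fun i => ω ⊗ₖ A i) (fun i => e i ⊗ₖ (1 : Matrix V V ℝ)) :=
    { Bs := fun i => by rw [kT, H.wt, one_smul, Q.At]
      es := fun i => by rw [kT, H.es, transpose_one, kneg_left]
      ee := QD.ee H
      Be := fun i j => by rw [kmul, kmul, H.we, kneg_left, neg_neg, one_mul, mul_one]
      pos := fun χ hχ v hv => by
        rw [ksum] at hv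
        exact unit_inj (unit_k (IsUnit.of_mul_eq_one _ ww) (Q.un χ hχ)) v hv }
  have := M.dvd ((1 : Matrix (Fin s) (Fin s) ℝ) ⊗ₖ I) (ω ⊗ₖ J) (by rw [kmul, Q.II, one_mul, kneg_right, kone])
    (by rw [kmul, Q.J2, ww, kneg_right, kone]) (by rw [kmul, kmul, Q.IJ, kneg_right, one_mul, mul_one]) 1 (-1) one_ne_zero (by norm_num)
    (fun i => by rw [kmul, kmul, Q.IA, one_mul, mul_one, one_smul])
    (fun i => by rw [kmul, kmul, one_mul, mul_one, one_mul, mul_one, one_smul])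
    (fun i => by rw [kmul, kmul, Q.JA, kneg_right, neg_one_smul])
    (fun i => by rw [kmul, kmul, H.we, kneg_left, one_mul, mul_one, neg_one_smul])
  simpa using this

lemma QD.minus {k' : ℕ} (Q : QD I J A) (hk : 1 ≤ k) (h : CD (-1) k' s) (hk' : k ≤ k') :
    4 * 2 ^ k ∣ s * Fintype.card V := by
  obtain ⟨e, ω, H⟩ := h.fin hk'
  have : Nonempty (Fin k) := ⟨⟨0, hk⟩⟩
  have ww : ω * ω = -1 := by rw [H.ww, neg_one_smul]
  have M : MCl (fun i => ω ⊗ₖ (I * A i)) (fun i => e i ⊗ₖ (1 : Matrix V V ℝ)) :=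
    { Bs := fun i => by
        rw [kT, H.wt, neg_one_smul, transpose_mul, Q.At, Q.It, mul_neg, kneg_left, kneg_right, neg_neg, Q.IA]
      es := fun i => by rw [kT, H.es, transpose_one, kneg_left]
      ee := QD.ee H
      Be := fun i j => by rw [kmul, kmul, H.we, kneg_left, neg_neg, one_mul, mul_one]
      pos := fun χ hχ v hv => by
        rw [ksum] at hv
        have e1 : ∑ i, χ i • (I * A i) = I * ∑ i, χ i • A i := by
          rw [Finset.mul_sum]
          exact Finset.sum_congr rfl fun i _ => (mul_smul_comm _ _ _).symm
        rw [e1] at hv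
        exact unit_inj (unit_k (IsUnit.of_mul_eq_one (-ω) (by rw [mul_neg, ww, neg_neg]))
          ((IsUnit.of_mul_eq_one (-I) (by rw [mul_neg, Q.II, neg_neg])).mul (Q.un χ hχ))) v hv }
  have := M.dvd ((1 : Matrix (Fin s) (Fin s) ℝ) ⊗ₖ I) ((1 : Matrix (Fin s) (Fin s) ℝ) ⊗ₖ J) (by rw [kmul, Q.II, one_mul, kneg_right, kone])
    (by rw [kmul, Q.J2, one_mul, kneg_right, kone]) (by rw [kmul, kmul, Q.IJ, kneg_right, one_mul]) 1 1 one_ne_zero one_ne_zero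
    (fun i => by rw [kmul, kmul, one_mul, mul_one, one_smul, mul_assoc, Q.IA])
    (fun i => by rw [kmul, kmul, one_mul, mul_one, one_mul, mul_one, one_smul])
    (fun i => by
      rw [kmul, kmul, one_mul, mul_one, one_smul]
      congr 1
      rw [← mul_assoc, mul_assoc I, show J * I = -(I * J) by rw [Q.IJ, neg_neg], neg_mul, mul_assoc, Q.JA, mul_neg, neg_neg])
    (fun i => by rw [kmul, kmul, one_mul, mul_one, one_mul, mul_one, one_smul])
  simpa using this

variable {m : Type} [Fintype m] [DecidableEq m]
/-- realification -/
noncomputable def Rl (X : Matrix m m ℂ) : Matrix (m × Fin 2) (m × Fin 2) ℝ :=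
  X.map Complex.re ⊗ₖ 1 + X.map Complex.im ⊗ₖ pE

lemma Rl_one : Rl (1 : Matrix m m ℂ) = 1 := by
  have h1 : (1 : Matrix m m ℂ).map Complex.re = 1 := by
    ext i j; simp only [map_apply, one_apply]; split_ifs <;> simp
  have h2 : (1 : Matrix m m ℂ).map Complex.im = 0 := by
    ext i j; simp only [map_apply, one_apply]; split_ifs <;> simp
  rw [Rl, h1, h2, kone, zero_kronecker, add_zero]

lemma Rl_mul (X Y : Matrix m m ℂ) : Rl (X * Y) = Rl X * Rl Y := by
  have h1 : (X * Y).map Complex.re = X.map Complex.re * Y.map Complex.re - X.map Complex.im * Y.map Complex.im := by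
    ext i j; simp [Matrix.mul_apply, Finset.sum_sub_distrib]
  have h2 : (X * Y).map Complex.im = X.map Complex.re * Y.map Complex.im + X.map Complex.im * Y.map Complex.re := by
    ext i j; simp [Matrix.mul_apply, Finset.sum_add_distrib]
  rw [Rl, h1, h2, Rl, Rl, add_mul, mul_add, mul_add, kmul, kmul, kmul, kmul, pEE, one_mul, one_mul, mul_one, kneg_right,
    sub_eq_add_neg, add_kronecker, add_kronecker, kneg_left]
  abel

lemma Rl_sum {k : ℕ} (A : Fin k → Matrix m m ℂ) (χ : Fin k → ℝ) : Rl (∑ i, χ i • A i) = ∑ i, χ i • Rl (A i) := by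
  ext ⟨a, b⟩ ⟨c, d⟩
  simp only [Rl, Matrix.sum_apply, Matrix.smul_apply, Matrix.add_apply, kroneckerMap_apply, smul_eq_mul, map_apply, Complex.re_sum, Complex.im_sum, 
    Complex.smul_re, Complex.smul_im, Finset.sum_mul, ← Finset.sum_add_distrib]
  exact Finset.sum_congr rfl fun i _ => by ring

/-- real symplectic -/
def JR (N : ℕ) : Matrix (Fin N ⊕ Fin N) (Fin N ⊕ Fin N) ℝ := Matrix.fromBlocks 0 (-1) 1 0

lemma JR_map (N : ℕ) : (JR N).map Complex.ofRealHom = JJ N := by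
  rw [JR, JJ, fromBlocks_map]
  congr 1
  · ext i j; simp [one_apply, apply_ite]
  · ext i j; simp [one_apply, apply_ite]

lemma QD.ofC {N k : ℕ} (A : Fin k → Matrix (Fin N ⊕ Fin N) (Fin N ⊕ Fin N) ℂ) (Ah : ∀ i, (A i)ᴴ = A i)
    (Aj : ∀ i, (A i)ᵀ * JJ N + JJ N * A i = 0) (un : ∀ χ : Fin k → ℝ, χ ≠ 0 → IsUnit (∑ i, χ i • A i)) :
    QD ((1 : Matrix (Fin N ⊕ Fin N) (Fin N ⊕ Fin N) ℝ) ⊗ₖ pE) (JR N ⊗ₖ pZ) (fun i => Rl (A i)) := by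
  have hre : ∀ i, ((A i).map Complex.re)ᵀ = (A i).map Complex.re := fun i => by
    conv_rhs => rw [← Ah i]
    ext a b; simp
  have him : ∀ i, ((A i).map Complex.im)ᵀ = -(A i).map Complex.im := fun i => by
    conv_rhs => rw [← Ah i]
    ext a b; simp
  have jre : ∀ i, JR N * (A i).map Complex.re = -((A i).map Complex.re * JR N) := fun i => by
    have h : ((A i).map Complex.re)ᵀ * JR N + JR N * (A i).map Complex.re = 0 := by
      ext a b
      have := congrArg (fun M => (M a b).re) (Aj i)
      rw [← JR_map] at this
      simpa [Matrix.mul_apply, Matrix.add_apply] using this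
    rw [hre] at h
    rw [eq_neg_iff_add_eq_zero, add_comm, h]
  have jim : ∀ i, JR N * (A i).map Complex.im = ((A i).map Complex.im * JR N) := fun i => by
    have h : ((A i).map Complex.im)ᵀ * JR N + JR N * (A i).map Complex.im = 0 := by
      ext a b
      have := congrArg (fun M => (M a b).im) (Aj i)
      rw [← JR_map] at this
      simpa [Matrix.mul_apply, Matrix.add_apply] using this
    rw [him, neg_mul, neg_add_eq_zero] at h
    exact h.symm
  have jj : JR N * JR N = -1 := by
    rw [JR, fromBlocks_multiply, ← fromBlocks_one, fromBlocks_neg]; simp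
  exact
  { It := by rw [kT, transpose_one, pEt, kneg_right]
    II := by rw [kmul, pEE, one_mul, kneg_right, kone]
    J2 := by rw [kmul, pZZ, jj, kneg_left, kone]
    IJ := by rw [kmul, kmul, pZE, kneg_right, neg_neg, one_mul, mul_one]
    At := fun i => by rw [Rl, transpose_add, kT, kT, hre, him, pEt, transpose_one, kneg_left, kneg_right, neg_neg]
    IA := fun i => by rw [Rl, mul_add, add_mul, kmul, kmul, kmul, kmul, one_mul, one_mul, mul_one, mul_one, one_mul, mul_one]
    JA := fun i => by
      rw [Rl, mul_add, add_mul, kmul, kmul, kmul, kmul, jre, jim, pZE, kneg_left, kneg_right, one_mul, mul_one]; abel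
    un := fun χ hχ => by
      have h := un χ hχ
      rw [← Rl_sum]
      obtain ⟨u, hu⟩ := h
      rw [← hu]
      exact IsUnit.of_mul_eq_one (Rl (u⁻¹ : (Matrix (Fin N ⊕ Fin N) (Fin N ⊕ Fin N) ℂ)ˣ)) (by rw [← Rl_mul, Units.mul_inv, Rl_one]) }
end G
end HR

namespace HR
set_option linter.unusedSectionVars false
set_option linter.deprecated false
set_option linter.unusedVariables false
open Module
section H
open Matrix

/-- condition two -/
def C2p (N n : ℕ) : Prop := ∃ f : EuclideanSpace ℝ (Fin n) →ₗ[ℝ]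
          Matrix (Fin N ⊕ Fin N) (Fin N ⊕ Fin N) ℂ,
        (∀ v, (f v)ᴴ = f v ∧ (f v)ᵀ * JJ N + JJ N * f v = 0) ∧
          ∀ v, v ≠ 0 → IsUnit (f v)

lemma C2p.dvd {N n : ℕ} (h : C2p N n) {k k' s : ℕ} (hk : 1 ≤ k) (hkn : k ≤ n) (hk' : k ≤ k')
    (hc : CD 1 k' s ∨ CD (-1) k' s) : 2 ^ k ∣ s * N := by
  obtain ⟨f, h1, h2⟩ := h
  let E : Fin k → EuclideanSpace ℝ (Fin n) := fun i => EuclideanSpace.single (Fin.castLE hkn i) 1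
  have Q := QD.ofC (fun i => f (E i)) (fun i => (h1 _).1) (fun i => (h1 _).2) (fun χ hχ => by
    have : ∑ i, χ i • f (E i) = f (∑ i, χ i • E i) := by simp [map_sum]
    rw [this]
    refine h2 _ fun h0 => hχ ?_
    funext j
    have := congrArg (fun v : EuclideanSpace ℝ (Fin n) => v (Fin.castLE hkn j)) h0
    simpa [E, Fin.castLE_inj, Pi.single_apply, eq_comm] using this)
  have key : 4 * 2 ^ k ∣ s * Fintype.card ((Fin N ⊕ Fin N) × Fin 2) := by
    rcases hc with hc | hc
    · exact Q.plus hk hc hk'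
    · exact Q.minus hk hc hk'
  have e : s * Fintype.card ((Fin N ⊕ Fin N) × Fin 2) = 4 * (s * N) := by simp; ring
  rw [e] at key
  exact Nat.dvd_of_mul_dvd_mul_left (by norm_num) key

lemma C2p.dvd4 {N n a : ℕ} (h : C2p N n) (hn : 8 * a + 4 ≤ n) : 2 ^ (4 * a + 1) ∣ N := by
  have := h.dvd (by omega) hn le_rfl (Or.inl (CD48.per a))
  refine Nat.dvd_of_mul_dvd_mul_left (k := 8 * 16 ^ a) (by positivity) ?_
  convert this using 1
  rw [show (16 : ℕ) = 2 ^ 4 by norm_num, show (8 : ℕ) = 2 ^ 3 by norm_num, ← pow_mul, ← pow_add, ← pow_add]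
  congr 1; omega

lemma C2p.dvd5 {N n a : ℕ} (h : C2p N n) (hn : 8 * a + 5 ≤ n) : 2 ^ (4 * a + 2) ∣ N := by
  have := h.dvd (by omega) hn (by omega) (Or.inr (CD68.per a))
  refine Nat.dvd_of_mul_dvd_mul_left (k := 8 * 16 ^ a) (by positivity) ?_
  convert this using 1
  rw [show (16 : ℕ) = 2 ^ 4 by norm_num, show (8 : ℕ) = 2 ^ 3 by norm_num, ← pow_mul, ← pow_add, ← pow_add]
  congr 1; omega

lemma C2p.dvd6 {N n a : ℕ} (h : C2p N n) (hn : 8 * a + 6 ≤ n) : 2 ^ (4 * a + 3) ∣ N := by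
  have := h.dvd (by omega) hn (by omega) (Or.inr (CD68.per a))
  refine Nat.dvd_of_mul_dvd_mul_left (k := 8 * 16 ^ a) (by positivity) ?_
  convert this using 1
  rw [show (16 : ℕ) = 2 ^ 4 by norm_num, show (8 : ℕ) = 2 ^ 3 by norm_num, ← pow_mul, ← pow_add, ← pow_add]
  congr 1; omega

lemma C2p.dvd8 {N n a : ℕ} (h : C2p N n) (hn : 8 * a + 8 ≤ n) : 2 ^ (4 * a + 4) ∣ N := by
  have := h.dvd (by omega) hn (by omega) (Or.inl (CD816.per a))
  refine Nat.dvd_of_mul_dvd_mul_left (k := 16 * 16 ^ a) (by positivity) ?_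
  convert this using 1
  rw [show (16 : ℕ) = 2 ^ 4 by norm_num, show (8 : ℕ) = 2 ^ 3 by norm_num, ← pow_mul, ← pow_add, ← pow_add]
  congr 1; omega

lemma C2p.bound {N n a b : ℕ} (hN : 1 ≤ N) (hr : padicValNat 2 N = 4 * a + b) (h : C2p N n) :
    (b = 0 → n ≤ 8 * a + 3) ∧ (b = 1 → n ≤ 8 * a + 4) ∧ (b = 2 → n ≤ 8 * a + 5) ∧ (b = 3 → n ≤ 8 * a + 7) := by
  have key : ∀ c, 2 ^ c ∣ N → c ≤ 4 * a + b := fun c hc => by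
    rw [← hr]; exact (padicValNat_dvd_iff_le (by omega)).1 hc
  refine ⟨fun hb => ?_, fun hb => ?_, fun hb => ?_, fun hb => ?_⟩ <;> by_contra! hc
  · have := key _ (h.dvd4 (a := a) (by omega)); omega
  · have := key _ (h.dvd5 (a := a) (by omega)); omega
  · have := key _ (h.dvd6 (a := a) (by omega)); omega
  · have := key _ (h.dvd8 (a := a) (by omega)); omega

lemma CD_exists {N a b : ℕ} (hN : 1 ≤ N) (hr : padicValNat 2 N = 4 * a + b) :
    (b = 0 → CD 1 (8 * a) N) ∧ (b = 1 → CD 1 (8 * a + 1) N) ∧ (b = 2 → CD 1 (8 * a + 2) N) ∧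
      (b = 3 → CD 1 (8 * a + 4) N) := by
  have hd : 2 ^ (4 * a + b) ∣ N := by rw [← hr]; exact pow_padicValNat_dvd
  obtain ⟨m, hm⟩ := hd
  have e : N = 2 ^ b * 16 ^ a * m := by
    rw [hm, pow_add, pow_mul, show (2 : ℕ) ^ 4 = 16 by norm_num]; ring
  refine ⟨fun hb => ?_, fun hb => ?_, fun hb => ?_, fun hb => ?_⟩ <;> subst hb <;> rw [e]
  · exact (CD.triv.per a).mul m
  · exact (CD12.per a).mul m
  · exact (CD24.per a).mul m
  · exact (CD48.per a).mul m

lemma val_half {N : ℕ} (hN : 1 ≤ N) : padicValRat 2 ((N : ℚ) / 2) = (padicValNat 2 N : ℤ) - 1 := by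
  rw [padicValRat.div (by positivity) (by norm_num), padicValRat.of_nat]
  congr 1
  exact padicValRat.self (p := 2) (by norm_num)

lemma rho_half {N a b : ℕ} (hN : 1 ≤ N) (hr : padicValNat 2 N = 4 * a + b) (hb : b < 4) :
    8 * (padicValRat 2 ((N : ℚ) / 2) / 4) + 2 ^ (padicValRat 2 ((N : ℚ) / 2) % 4).toNat + 3 =
      if b = 0 then 8 * (a : ℤ) + 3 else if b = 1 then 8 * (a : ℤ) + 4 else if b = 2 then 8 * (a : ℤ) + 5
        else 8 * (a : ℤ) + 7 := by
  rw [val_half hN, hr]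
  push_cast
  interval_cases b
  · have h1 : (4 * (a : ℤ) + ((0 : ℕ) : ℤ) - 1) / 4 = a - 1 := by push_cast; omega
    have h2 : (4 * (a : ℤ) + ((0 : ℕ) : ℤ) - 1) % 4 = 3 := by push_cast; omega
    have h3 : (2 : ℤ) ^ (3 : ℤ).toNat = 8 := by decide
    rw [h1, h2, h3]; norm_num; try omega
  · have h1 : (4 * (a : ℤ) + ((1 : ℕ) : ℤ) - 1) / 4 = a := by push_cast; omega
    have h2 : (4 * (a : ℤ) + ((1 : ℕ) : ℤ) - 1) % 4 = 0 := by push_cast; omega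
    have h3 : (2 : ℤ) ^ (0 : ℤ).toNat = 1 := by decide
    rw [h1, h2, h3]; norm_num; try omega
  · have h1 : (4 * (a : ℤ) + ((2 : ℕ) : ℤ) - 1) / 4 = a := by push_cast; omega
    have h2 : (4 * (a : ℤ) + ((2 : ℕ) : ℤ) - 1) % 4 = 1 := by push_cast; omega
    have h3 : (2 : ℤ) ^ (1 : ℤ).toNat = 2 := by decide
    rw [h1, h2, h3]; norm_num; try omega
  · have h1 : (4 * (a : ℤ) + ((3 : ℕ) : ℤ) - 1) / 4 = a := by push_cast; omega
    have h2 : (4 * (a : ℤ) + ((3 : ℕ) : ℤ) - 1) % 4 = 2 := by push_cast; omega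
    have h3 : (2 : ℤ) ^ (2 : ℤ).toNat = 4 := by decide
    rw [h1, h2, h3]; norm_num; try omega

/-- condition one -/
def C1p (N n : ℕ) : Prop := ∃ f : EuclideanSpace ℝ (Fin n) →ₗ[ℝ]
          Matrix (Fin N ⊕ Fin N) (Fin N ⊕ Fin N) ℂ,
        ∀ v, (f v)ᴴ = f v ∧ (f v)ᵀ * JJ N + JJ N * f v = 0 ∧
          (f v) ^ 2 = (‖v‖ ^ 2 : ℝ) • (1 : Matrix (Fin N ⊕ Fin N) (Fin N ⊕ Fin N) ℂ)

lemma C1p.two {N n : ℕ} (h : C1p N n) : C2p N n := by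
  obtain ⟨f, h⟩ := h
  refine ⟨f, fun v => ⟨(h v).1, (h v).2.1⟩, fun v hv => ?_⟩
  have hn : ‖v‖ ^ 2 ≠ 0 := by simpa using hv
  refine IsUnit.of_mul_eq_one ((‖v‖ ^ 2)⁻¹ • f v) ?_
  rw [mul_smul_comm, ← pow_two, (h v).2.2, smul_smul, inv_mul_cancel₀ hn, one_smul]

lemma main {N n : ℕ} (hN : 1 ≤ N) : (C1p N n ↔ C2p N n) ∧ (C2p N n ↔ (n : ℤ) ≤
    8 * (padicValRat 2 ((N : ℚ) / 2) / 4) + 2 ^ (padicValRat 2 ((N : ℚ) / 2) % 4).toNat + 3) := by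
  obtain ⟨a, b, hb, hr⟩ : ∃ a b, b < 4 ∧ padicValNat 2 N = 4 * a + b :=
    ⟨padicValNat 2 N / 4, padicValNat 2 N % 4, Nat.mod_lt _ (by norm_num), by omega⟩
  rw [rho_half hN hr hb]
  have h23 : C2p N n → (n : ℤ) ≤ if b = 0 then 8 * (a : ℤ) + 3 else if b = 1 then 8 * (a : ℤ) + 4 else if b = 2 then 8 * (a : ℤ) + 5
        else 8 * (a : ℤ) + 7 := fun h => by
    obtain ⟨h0, h1, h2, h3⟩ := h.bound hN hr
    split_ifs <;> omega
  have h31 : (n : ℤ) ≤ (if b = 0 then 8 * (a : ℤ) + 3 else if b = 1 then 8 * (a : ℤ) + 4 else if b = 2 then 8 * (a : ℤ) + 5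
        else 8 * (a : ℤ) + 7) → C1p N n := fun h => by
    obtain ⟨c0, c1, c2, c3⟩ := CD_exists hN hr
    interval_cases b
    · exact one_of_CD (c0 rfl) (by simp at h; omega)
    · exact one_of_CD (c1 rfl) (by simp at h; omega)
    · exact one_of_CD (c2 rfl) (by simp at h; omega)
    · exact one_of_CD (c3 rfl) (by simp at h; omega)
  exact ⟨⟨C1p.two, fun h => h31 (h23 h)⟩, h23, fun h => (h31 h).two⟩
end H
end HR

/-- Entry `𝔤 = 𝔰𝔭(N,ℂ)` of the Hurwitz–Radon value theorem
(the `𝔭`-part being the Hermitian elements of `𝔰𝔭(N,ℂ)`):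
`ρ⁽¹⁾ = ρ⁽²⁾ = ρ(N/2) + 3`. -/
theorem hurwitzRadon_sp_N_C (N : ℕ) (hN : 1 ≤ N) (n : ℕ) :
    ((∃ f : EuclideanSpace ℝ (Fin n) →ₗ[ℝ]
          Matrix (Fin N ⊕ Fin N) (Fin N ⊕ Fin N) ℂ,
        ∀ v, (f v)ᴴ = f v ∧ (f v)ᵀ * Jcplx N + Jcplx N * f v = 0 ∧
          (f v) ^ 2 = (‖v‖ ^ 2 : ℝ) • (1 : Matrix (Fin N ⊕ Fin N) (Fin N ⊕ Fin N) ℂ)) ↔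
      (∃ f : EuclideanSpace ℝ (Fin n) →ₗ[ℝ]
          Matrix (Fin N ⊕ Fin N) (Fin N ⊕ Fin N) ℂ,
        (∀ v, (f v)ᴴ = f v ∧ (f v)ᵀ * Jcplx N + Jcplx N * f v = 0) ∧
          ∀ v, v ≠ 0 → IsUnit (f v))) ∧
    ((∃ f : EuclideanSpace ℝ (Fin n) →ₗ[ℝ]
          Matrix (Fin N ⊕ Fin N) (Fin N ⊕ Fin N) ℂ,
        (∀ v, (f v)ᴴ = f v ∧ (f v)ᵀ * Jcplx N + Jcplx N * f v = 0) ∧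
          ∀ v, v ≠ 0 → IsUnit (f v)) ↔
      (n : ℤ) ≤ hrRho ((N : ℚ) / 2) + 3) := by
  exact HR.main hN
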